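/- Suppose S ⊆ ℝ is discrete, Y ⊆ L²([0,a)) is a perfect set, and Z ⊆ ℝ∖{0} is σ-compact. If λY = {λφ : φ ∈ Y} is gap-rich with exceptional set S for every λ ∈ Z, then for generic y ∈ LP(ℤ,Y), the spectrum of L_{λy} = −d²/dx² + λ·y^♮ is a Cantor set of zero Hausdorff dimension for all λ ∈ Z. -/

import Mathlib

/-!
For a locally `L²` potential the operator `-d²/dx² + V` on test functions is symmetric, and `E` is
outside the spectrum exactly when the equation `(-d²/dx² + V - E) g = h` has an a priori bound
`‖g‖ ≤ c ‖h‖` (`notMem_spec_iff`); by elliptic regularity it suffices to test this on functions `u`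
with absolutely continuous derivative (`Sol`, `notMem_spec_iff_lowS`). Spectral energies therefore
are those with approximate solutions of arbitrarily small relative error. When `V` is uniformly
locally `L²`, the local bound `exists_local_bound` controls `u` and `u'` pointwise, so that
approximate solutions survive small perturbations of `V` and of `E` (`Sol.perturb`) and can be cut
off at an arbitrary place at the cost of the mass near the cut (`exists_grid_cutoff`).

**Hausdorff dimension zero.** Let `x` be a periodic sequence. Away from small neighbourhoods of the
finitely many exceptional energies in `[-n, n]`, gap-richness together with compactness in the
energy and in the coupling constant provides finitely many periodic sequences `y₀, …, y_{K-1}` close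
to `x` such that each relevant pair `(E, λ)` is in a uniform gap of one of them (`exists_gap_approx`,
`exists_stable_gap`). Let `w` be periodic and run through long blocks of `y₀, …, y_{K-1}` in turn
(`interlace`). An approximate solution for `w` decays exponentially inside the blocks where its
energy is in a gap (`exists_decay`), so it can be localized to one period with an error that is
exponentially small in the block length `k` (`exists_localized`). A box of length `O(k)` supports at
most `O(k³)` well separated approximate eigenvalues of this kind, since the normalized approximate
eigenfunctions are almost orthogonal and have bounded derivative (`exists_count`). Hence the energies
in question are covered by polynomially many intervals of exponentially small length, and this
persists in a neighbourhood of `w` (`exists_thin_approx`, `spec_subset_approxSpec`). Baire's theorem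
yields the dense `Gδ` set (`exists_residual_dimH_zero`).

**Cantor structure.** The spectrum is closed, and dimension zero excludes interior points. The
spectrum is nonempty because otherwise the resolvent at `0` would be a symmetric operator whose
spectrum is contained in `{0}`, hence zero (`contSpectrum_nonempty`). If `E` were an isolated point
of the spectrum, approximate solutions at `E` would be close to eigenfunctions (`exists_eigen_near`).
For a limit-periodic potential, an approximate solution of compact support can be translated by
almost periods to produce three of them with disjoint supports, whereas the eigenvalue equation has
at most two linearly independent solutions; this is absurd (`preperfect_contSpectrum`).
-/

open Set MeasureTheory BoundedContinuousFunction

noncomputable section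

/-- `L²(ℝ)`. -/
abbrev L2R := Lp ℝ 2 (volume : Measure ℝ)

/-- `L²([0,a))`. -/
abbrev L2I (a : ℝ) := Lp ℝ 2 (volume.restrict (Ico (0 : ℝ) a))

/-- `g` and `h` satisfy `(-d²/dx² + (V - E)) g = h` in the distributional sense. -/
def WeakSchrodingerEq (V : ℝ → ℝ) (E : ℝ) (g h : L2R) : Prop :=
  ∀ φ : ℝ → ℝ, ContDiff ℝ (⊤ : ℕ∞) φ → HasCompactSupport φ →
    ∫ x, g x * (-(deriv (deriv φ) x) + (V x - E) * φ x) = ∫ x, h x * φ x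

/-- The spectrum of the continuum Schrödinger operator `L_V = -d²/dx² + V` on
`L²(ℝ)`: `E` is in the spectrum iff there is no bounded operator `T` inverting
`L_V - E` (in the distributional sense). -/
def ContSpectrum (V : ℝ → ℝ) : Set ℝ :=
  {E : ℝ | ¬ ∃ T : L2R →L[ℝ] L2R,
      (∀ f : L2R, WeakSchrodingerEq V E (T f) f) ∧
      (∀ g h : L2R, WeakSchrodingerEq V E g h → T h = g)}

/-- A subset of ℝ is discrete if it has no accumulation points. -/
def IsDiscreteSet (S : Set ℝ) : Prop := ∀ x : ℝ, ¬ AccPt x (Filter.principal S)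

/-- Periodic extension `w^{♯ℤ}` of a finite word `w`. -/
def perExt {α : Type*} [Zero α] {m : ℕ} (w : Fin m → α) : ℤ → α :=
  fun n =>
    if h : 0 < m then
      w ⟨(n % (m : ℤ)).toNat, by
        have h1 : 0 ≤ n % (m : ℤ) := Int.emod_nonneg n (by exact_mod_cast h.ne')
        have h2 : n % (m : ℤ) < (m : ℤ) := Int.emod_lt_of_pos n (by exact_mod_cast h)
        omega⟩
    else 0

/-- Concatenation `y^♮ : ℝ → ℝ` of a bi-infinite sequence of pieces in
`L²([0,a))`: `y^♮(ja + t) = y_j(t)` for `t ∈ [0,a)`. -/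
def aggC (a : ℝ) (y : ℤ → L2I a) : ℝ → ℝ :=
  fun t => (y ⌊t / a⌋) (t - (⌊t / a⌋ : ℝ) * a)

/-- `Y ⊆ L²([0,a))` is gap-rich with exceptional set `S`. -/
def GapRichC (a : ℝ) (Y : Set (L2I a)) (S : Set ℝ) : Prop :=
  IsDiscreteSet S ∧
  ∀ E : ℝ, E ∉ S → ∀ m : ℕ, 0 < m → ∀ x : Fin m → L2I a, (∀ i, x i ∈ Y) →
    ∀ ε : ℝ, 0 < ε →
      ∃ l : ℕ, 0 < l ∧ ∃ y : Fin l → L2I a,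
        (∀ i, y i ∈ Y) ∧
        (∀ j : ℤ, dist (perExt x j) (perExt y j) < ε) ∧
        E ∉ ContSpectrum (aggC a (perExt y))

/-- The periodic elements of `Y^ℤ`. -/
def PerC (a : ℝ) (Y : Set (L2I a)) : Set (ℤ →ᵇ L2I a) :=
  {x | (∃ q : ℕ, 0 < q ∧ ∀ n : ℤ, x (n + q) = x n) ∧ ∀ n : ℤ, x n ∈ Y}

/-- The limit-periodic elements of `Y^ℤ`. -/
def LPC (a : ℝ) (Y : Set (L2I a)) : Set (ℤ →ᵇ L2I a) := closure (PerC a Y)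

/-- Cantor set of zero Hausdorff dimension (continuum case: closed, possibly
unbounded). -/
def IsZeroDimCantorC (s : Set ℝ) : Prop :=
  s.Nonempty ∧ IsClosed s ∧ Preperfect s ∧ interior s = ∅ ∧ dimH s = 0

/-! ### Primitives of locally integrable functions -/

/-- `F` is locally integrable and `v` is a primitive of it, i.e. `v` is locally absolutely
continuous with `v' = F`. -/
structure Prim (v F : ℝ → ℝ) : Prop where
  int : ∀ x y, IntervalIntegrable F volume x y
  eq : ∀ x y, v y - v x = ∫ t in x..y, F t

namespace Prim

theorem of_deriv {u v : ℝ → ℝ} (h : ∀ x, HasDerivAt u (v x) x) (hv : Continuous v) :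
    Prim u v where
  int x y := hv.intervalIntegrable x y
  eq x y := (intervalIntegral.integral_eq_sub_of_hasDerivAt (fun t _ => h t)
    (hv.intervalIntegrable x y)).symm

theorem continuous {v F : ℝ → ℝ} (h : Prim v F) : Continuous v := by
  have h1 : v = fun x => v 0 + ∫ t in (0:ℝ)..x, F t := by
    funext x; rw [← h.eq 0 x]; ring
  rw [h1]
  exact continuous_const.add (intervalIntegral.continuous_primitive h.int 0)

theorem ac {v F : ℝ → ℝ} (h : Prim v F) (x y : ℝ) : AbsolutelyContinuousOnInterval v x y := by
  have h1 : v = fun z => (∫ t in x..z, F t) - (-v x) := by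
    funext z; rw [← h.eq x z]; ring
  rw [h1]
  refine AbsolutelyContinuousOnInterval.fun_sub
    ((h.int x y).absolutelyContinuousOnInterval_intervalIntegral (by simp)) ?_
  exact (contDiff_const.contDiffOn).absolutelyContinuousOnInterval

theorem ae_deriv {v F : ℝ → ℝ} (h : Prim v F) (x y : ℝ) :
    ∀ᵐ t, t ∈ uIcc x y → deriv v t = F t := by
  filter_upwards [(h.int x y).ae_hasDerivAt_integral] with t ht hxy
  have h2 := ht hxy x (by simp)
  have h1 : v = fun z => v x + ∫ t in x..z, F t := by
    funext z; rw [← h.eq x z]; ring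
  rw [h1]
  exact (h2.const_add (v x)).deriv

theorem mul {v F w G : ℝ → ℝ} (hv : Prim v F) (hw : Prim w G) :
    Prim (fun x => v x * w x) (fun x => F x * w x + v x * G x) where
  int x y := ((hv.int x y).mul_continuousOn hw.continuous.continuousOn).add
    ((hw.int x y).continuousOn_mul hv.continuous.continuousOn)
  eq x y := by
    rw [← AbsolutelyContinuousOnInterval.integral_deriv_mul_eq_sub (hv.ac x y) (hw.ac x y)]
    apply intervalIntegral.integral_congr_ae
    filter_upwards [hv.ae_deriv x y, hw.ae_deriv x y] with t h1 h2 ht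
    rw [h1 (uIoc_subset_uIcc ht), h2 (uIoc_subset_uIcc ht)]

theorem add {v F w G : ℝ → ℝ} (hv : Prim v F) (hw : Prim w G) :
    Prim (fun x => v x + w x) (fun x => F x + G x) where
  int x y := (hv.int x y).add (hw.int x y)
  eq x y := by
    rw [intervalIntegral.integral_add (hv.int x y) (hw.int x y), ← hv.eq, ← hw.eq]; ring

theorem const_mul {v F : ℝ → ℝ} (c : ℝ) (hv : Prim v F) :
    Prim (fun x => c * v x) (fun x => c * F x) where
  int x y := (hv.int x y).const_mul c
  eq x y := by
    rw [intervalIntegral.integral_const_mul, ← hv.eq]; ring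

theorem congr_ae {v F G : ℝ → ℝ} (hv : Prim v F) (h : F =ᵐ[volume] G) : Prim v G where
  int x y := (hv.int x y).congr_ae (ae_restrict_of_ae h)
  eq x y := by
    rw [hv.eq]
    exact intervalIntegral.integral_congr_ae (h.mono fun t ht _ => ht)

theorem comp_add {v F : ℝ → ℝ} (hv : Prim v F) (c : ℝ) :
    Prim (fun x => v (x + c)) (fun x => F (x + c)) where
  int x y := by simpa using (hv.int (x + c) (y + c)).comp_add_right c
  eq x y := by rw [hv.eq, intervalIntegral.integral_comp_add_right]

/-- The integral of `F` vanishes if its primitive has compact support. -/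
theorem integral_eq_zero {v F : ℝ → ℝ} (hv : Prim v F) (R : ℝ)
    (h0 : ∀ x, R ≤ |x| → v x = 0) (hF : ∀ x, R < |x| → F x = 0) : ∫ x, F x = 0 := by
  have h1 := hv.eq (-|R|) |R|
  rw [h0 _ (by simpa using le_abs_self R), h0 _ (by simpa using le_abs_self R)] at h1
  rw [intervalIntegral.integral_of_le (by linarith [abs_nonneg R])] at h1
  rw [← setIntegral_eq_integral_of_forall_compl_eq_zero (s := Icc (-|R|) |R|),
    integral_Icc_eq_integral_Ioc, ← h1]
  · simp
  · intro x hx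
    apply hF
    by_contra hc
    push Not at hc
    exact hx (abs_le.1 (hc.trans (le_abs_self R)))

end Prim

/-! ### Distributions with vanishing derivatives -/

theorem exists_supp_radius {ψ : ℝ → ℝ} (hc : HasCompactSupport ψ) :
    ∃ R : ℝ, 0 < R ∧ ∀ x, R ≤ |x| → ψ x = 0 := by
  obtain ⟨R, hR⟩ := hc.isCompact.isBounded.subset_closedBall 0
  refine ⟨|R| + 1, by positivity, fun x hx => ?_⟩
  by_contra hne
  have := hR (subset_tsupport _ (Function.mem_support.2 hne))
  rw [Metric.mem_closedBall, Real.dist_0_eq_abs] at this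
  linarith [le_abs_self R]

/-- A smooth compactly supported function with zero mean is the derivative of another one. -/
theorem exists_test_primitive (ψ : ℝ → ℝ) (hψ : ContDiff ℝ (⊤ : ℕ∞) ψ) (hc : HasCompactSupport ψ)
    (h0 : ∫ x, ψ x = 0) :
    ∃ φ : ℝ → ℝ, ContDiff ℝ (⊤ : ℕ∞) φ ∧ HasCompactSupport φ ∧ deriv φ = ψ := by
  obtain ⟨R, hR, hout⟩ := exists_supp_radius hc
  have hd : ∀ x, HasDerivAt (fun x => ∫ t in (-R)..x, ψ t) (ψ x) x := fun x =>
    intervalIntegral.integral_hasDerivAt_right (hψ.continuous.intervalIntegrable _ _)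
      (hψ.continuous.stronglyMeasurableAtFilter _ _) hψ.continuous.continuousAt
  have hderiv : deriv (fun x => ∫ t in (-R)..x, ψ t) = ψ := funext fun x => (hd x).deriv
  refine ⟨fun x => ∫ t in (-R)..x, ψ t, ?_, ?_, hderiv⟩
  · have : ((⊤ : ℕ∞) : WithTop ℕ∞) = ((⊤ : ℕ∞) : WithTop ℕ∞) + 1 := by rfl
    rw [this, contDiff_succ_iff_deriv]
    refine ⟨fun x => (hd x).differentiableAt, by simp, by rw [hderiv]; exact hψ⟩
  · apply HasCompactSupport.of_support_subset_isCompact (isCompact_Icc (a := -R) (b := R))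
    intro x hx
    by_contra hxo
    apply hx
    simp only
    rcases lt_or_ge x (-R) with h | h
    · rw [intervalIntegral.integral_symm, intervalIntegral.integral_zero_ae, neg_zero]
      refine ae_of_all _ fun t ht => hout t ?_
      rw [uIoc_of_le h.le] at ht
      exact le_abs.2 (Or.inr (by linarith [ht.2]))
    · have hx2 : R < x := by
        by_contra hcc; exact hxo ⟨h, not_lt.1 hcc⟩
      rw [intervalIntegral.integral_of_le (by linarith), ← h0]
      apply setIntegral_eq_integral_of_forall_compl_eq_zero
      intro t ht
      apply hout
      by_contra hc2
      rw [not_le, abs_lt] at hc2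
      exact ht ⟨hc2.1, by linarith [hc2.2]⟩

theorem integrable_mul_test {f ψ : ℝ → ℝ} (hf : LocallyIntegrable f volume)
    (hψ : Continuous ψ) (hc : HasCompactSupport ψ) : Integrable (fun x => f x * ψ x) := by
  simpa [mul_comm] using hf.integrable_smul_left_of_hasCompactSupport hψ hc

theorem exists_unit_bump : ∃ ρ : ℝ → ℝ, ContDiff ℝ (⊤ : ℕ∞) ρ ∧ HasCompactSupport ρ ∧
    ∫ x, ρ x = 1 := by
  let f : ContDiffBump (0 : ℝ) := ⟨1, 2, by norm_num, by norm_num⟩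
  exact ⟨f.normed volume, f.contDiff_normed, f.hasCompactSupport_normed, f.integral_normed⟩

/-- A locally integrable function with vanishing distributional derivative is constant. -/
theorem ae_const_of_weak_deriv_zero {f : ℝ → ℝ} (hf : LocallyIntegrable f volume)
    (h : ∀ φ : ℝ → ℝ, ContDiff ℝ (⊤ : ℕ∞) φ → HasCompactSupport φ → ∫ x, f x * deriv φ x = 0) :
    ∃ c : ℝ, f =ᵐ[volume] fun _ => c := by
  obtain ⟨ρ, hρ, hρc, hρ1⟩ := exists_unit_bump
  refine ⟨∫ x, f x * ρ x, ?_⟩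
  apply ae_eq_of_integral_contDiff_smul_eq hf (continuous_const.locallyIntegrable)
  intro ψ hψ hψc
  have hψi := hψ.continuous.integrable_of_hasCompactSupport (μ := volume) hψc
  have hρi := hρ.continuous.integrable_of_hasCompactSupport (μ := volume) hρc
  have hsub : HasCompactSupport (fun x => ψ x - (∫ t, ψ t) * ρ x) := by
    have : HasCompactSupport (fun x => (∫ t, ψ t) * ρ x) := hρc.mul_left
    exact hψc.sub this
  obtain ⟨φ, hφ, hφc, hφd⟩ := exists_test_primitive (fun x => ψ x - (∫ t, ψ t) * ρ x)
    (hψ.sub (contDiff_const.mul hρ)) hsub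
    (by rw [integral_sub hψi (hρi.const_mul _), integral_const_mul, hρ1]; ring)
  have h1 := h φ hφ hφc
  rw [hφd] at h1
  have e : ∀ x, f x * (ψ x - (∫ t, ψ t) * ρ x) = f x * ψ x - (∫ t, ψ t) * (f x * ρ x) :=
    fun x => by ring
  simp_rw [e] at h1
  rw [integral_sub (integrable_mul_test hf hψ.continuous hψc)
    ((integrable_mul_test hf hρ.continuous hρc).const_mul _), integral_const_mul] at h1
  simp only [smul_eq_mul]
  rw [integral_mul_const]
  simp_rw [mul_comm (ψ _) (f _)]
  linarith

theorem integral_mul_deriv_test {f f' φ : ℝ → ℝ} (hf : Prim f f')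
    (hφ : ContDiff ℝ (⊤ : ℕ∞) φ) (hφc : HasCompactSupport φ) :
    ∫ x, f x * deriv φ x = - ∫ x, f' x * φ x := by
  obtain ⟨R, hR, hout⟩ := exists_supp_radius hφc
  obtain ⟨R', hR', hout'⟩ := exists_supp_radius hφc.deriv
  have hdφ : Continuous (deriv φ) := hφ.continuous_deriv (by simp)
  have hP : Prim φ (deriv φ) := Prim.of_deriv
    (fun x => (hφ.differentiable (by simp) x).hasDerivAt) hdφ
  have hl : LocallyIntegrable f' volume := by
    rw [locallyIntegrable_iff]
    intro K hK
    obtain ⟨r, hr⟩ := hK.isBounded.subset_closedBall 0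
    rw [Real.closedBall_eq_Icc] at hr
    refine IntegrableOn.mono_set ?_ hr
    rcases le_or_gt (0 - r) (0 + r) with h | h
    · exact (intervalIntegrable_iff_integrableOn_Icc_of_le h).1 (hf.int _ _)
    · rw [Icc_eq_empty (not_le.2 h)]; exact integrableOn_empty
  have h0 := (hf.mul hP).integral_eq_zero (max R R')
    (fun x hx => by simp [hout x ((le_max_left _ _).trans hx)])
    (fun x hx => by simp [hout x ((le_max_left _ _).trans hx.le),
      hout' x ((le_max_right _ _).trans hx.le)])
  rw [integral_add (integrable_mul_test hl hφ.continuous hφc)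
    (integrable_mul_test hf.continuous.locallyIntegrable hdφ hφc.deriv)] at h0
  linarith

/-- A locally integrable function with vanishing second distributional derivative is affine. -/
theorem ae_affine_of_weak_deriv_two_zero {f : ℝ → ℝ} (hf : LocallyIntegrable f volume)
    (h : ∀ φ : ℝ → ℝ, ContDiff ℝ (⊤ : ℕ∞) φ → HasCompactSupport φ →
      ∫ x, f x * deriv (deriv φ) x = 0) :
    ∃ α β : ℝ, f =ᵐ[volume] fun x => α + β * x := by
  obtain ⟨ρ, hρ, hρc, hρ1⟩ := exists_unit_bump
  have hρd : Continuous (deriv ρ) := hρ.continuous_deriv (by simp)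
  set β : ℝ := -∫ x, f x * deriv ρ x with hβ
  have hlin : LocallyIntegrable (fun x : ℝ => β * x) volume :=
    (continuous_const.mul continuous_id).locallyIntegrable
  have hPlin : Prim (fun x : ℝ => β * x) (fun _ => β) := Prim.of_deriv
    (fun x => by simpa using (hasDerivAt_id x).const_mul β) continuous_const
  obtain ⟨α, hα⟩ := ae_const_of_weak_deriv_zero (f := fun x => f x - β * x) (hf.sub hlin) (by
    intro ψ hψ hψc
    have hψi := hψ.continuous.integrable_of_hasCompactSupport (μ := volume) hψc
    have hρi := hρ.continuous.integrable_of_hasCompactSupport (μ := volume) hρc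
    have hψd : Continuous (deriv ψ) := hψ.continuous_deriv (by simp)
    have hsub : HasCompactSupport (fun x => ψ x - (∫ t, ψ t) * ρ x) := by
      have : HasCompactSupport (fun x => (∫ t, ψ t) * ρ x) := hρc.mul_left
      exact hψc.sub this
    obtain ⟨φ, hφ, hφc, hφd⟩ := exists_test_primitive (fun x => ψ x - (∫ t, ψ t) * ρ x)
      (hψ.sub (contDiff_const.mul hρ)) hsub
      (by rw [integral_sub hψi (hρi.const_mul _), integral_const_mul, hρ1]; ring)
    have h1 := h φ hφ hφc
    have hdd : deriv (deriv φ) = fun x => deriv ψ x - (∫ t, ψ t) * deriv ρ x := by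
      rw [hφd]; funext x
      exact ((hψ.differentiable (by simp) x).hasDerivAt.sub
        ((hρ.differentiable (by simp) x).hasDerivAt.const_mul _)).deriv
    rw [hdd] at h1
    have e : ∀ x, f x * (deriv ψ x - (∫ t, ψ t) * deriv ρ x)
      = f x * deriv ψ x - (∫ t, ψ t) * (f x * deriv ρ x) := fun x => by ring
    simp_rw [e] at h1
    rw [integral_sub (integrable_mul_test hf hψd hψc.deriv)
      ((integrable_mul_test hf hρd hρc.deriv).const_mul _), integral_const_mul] at h1
    have h2 := integral_mul_deriv_test hPlin hψ hψc
    rw [integral_const_mul] at h2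
    have e2 : ∀ x, (f x - β * x) * deriv ψ x = f x * deriv ψ x - β * x * deriv ψ x :=
      fun x => by ring
    simp_rw [e2]
    rw [integral_sub (integrable_mul_test hf hψd hψc.deriv)
      (integrable_mul_test hlin hψd hψc.deriv), h2]
    have : ∫ x, f x * deriv ρ x = -β := by rw [hβ]; ring
    rw [this] at h1
    linarith)
  refine ⟨α, β, hα.mono fun x hx => ?_⟩
  simp only at hx ⊢
  linarith

/-! ### The spectrum through a priori bounds -/

/-- Square integrability on bounded intervals. -/
def LocL2 (V : ℝ → ℝ) : Prop := ∀ R : ℝ, MemLp V 2 (volume.restrict (Icc (-R) R))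

theorem LocL2.mul_compact {V φ : ℝ → ℝ} (hV : LocL2 V) (hφ : Continuous φ)
    (hc : HasCompactSupport φ) : MemLp (fun x => V x * φ x) 2 volume := by
  obtain ⟨R, hR, hout⟩ := exists_supp_radius hc
  obtain ⟨C, hC⟩ := hφ.bounded_above_of_compact_support hc
  have h1 : MemLp ((Icc (-R) R).indicator V) 2 volume :=
    (memLp_indicator_iff_restrict measurableSet_Icc).2 (hV R)
  have h2 : MemLp φ ⊤ volume :=
    memLp_top_of_bound hφ.aestronglyMeasurable C (ae_of_all _ hC)
  have h3 := h1.mul (r := 2) h2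
  refine h3.ae_eq (ae_of_all _ fun x => ?_)
  simp only [Pi.mul_apply]
  by_cases hx : x ∈ Icc (-R) R
  · rw [indicator_of_mem hx]; ring
  · have : φ x = 0 := by
      apply hout
      by_contra hcc
      rw [not_le, abs_lt] at hcc
      exact hx ⟨hcc.1.le, hcc.2.le⟩
    simp [this]

theorem LocL2.locallyIntegrable {V : ℝ → ℝ} (hV : LocL2 V) : LocallyIntegrable V volume := by
  rw [locallyIntegrable_iff]
  intro K hK
  obtain ⟨r, hr⟩ := hK.isBounded.subset_closedBall 0
  rw [Real.closedBall_eq_Icc, zero_sub, zero_add] at hr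
  have : IsFiniteMeasure (volume.restrict (Icc (-r) r)) := ⟨by simp⟩
  exact IntegrableOn.mono_set ((hV r).integrable (by norm_num)) hr

theorem LocL2.mul_locallyIntegrable {V g : ℝ → ℝ} (hV : LocL2 V) (hg : MemLp g 2 volume) :
    LocallyIntegrable (fun x => V x * g x) volume := by
  rw [locallyIntegrable_iff]
  intro K hK
  obtain ⟨r, hr⟩ := hK.isBounded.subset_closedBall 0
  rw [Real.closedBall_eq_Icc, zero_sub, zero_add] at hr
  exact IntegrableOn.mono_set ((hV r).integrable_mul (hg.restrict _)) hr

/-- The function `(-d²/dx² + V - E) φ` for a smooth `φ`. -/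
def tst (V : ℝ → ℝ) (E : ℝ) (φ : ℝ → ℝ) : ℝ → ℝ :=
  fun x => -(deriv (deriv φ) x) + (V x - E) * φ x

/-- Smooth functions with compact support. -/
def IsTest (φ : ℝ → ℝ) : Prop := ContDiff ℝ (⊤ : ℕ∞) φ ∧ HasCompactSupport φ

theorem IsTest.deriv {φ : ℝ → ℝ} (h : IsTest φ) : IsTest (deriv φ) := by
  refine ⟨?_, h.2.deriv⟩
  have h1 := h.1
  have : ((⊤ : ℕ∞) : WithTop ℕ∞) = ((⊤ : ℕ∞) : WithTop ℕ∞) + 1 := by rfl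
  rw [this, contDiff_succ_iff_deriv] at h1
  exact h1.2.2

theorem IsTest.memLp {φ : ℝ → ℝ} (h : IsTest φ) : MemLp φ 2 volume :=
  h.1.continuous.memLp_of_hasCompactSupport h.2

theorem tst_memLp {V : ℝ → ℝ} (hV : LocL2 V) (E : ℝ) {φ : ℝ → ℝ} (h : IsTest φ) :
    MemLp (tst V E φ) 2 volume := by
  have h1 := h.deriv.deriv.memLp
  have h2 := hV.mul_compact h.1.continuous h.2
  have h3 := h.memLp.const_mul E
  refine (h1.neg.add (h2.sub h3)).ae_eq (ae_of_all _ fun x => ?_)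
  simp only [Pi.add_apply, Pi.neg_apply, Pi.sub_apply, tst]
  ring

theorem inner_toLp {f : ℝ → ℝ} (hf : MemLp f 2 volume) (g : L2R) :
    inner ℝ (hf.toLp f) g = ∫ x, g x * f x := by
  rw [L2.inner_def]
  apply integral_congr_ae
  filter_upwards [hf.coeFn_toLp] with x hx
  simp [hx]

theorem weak_iff {V : ℝ → ℝ} (hV : LocL2 V) (E : ℝ) (g h : L2R) :
    WeakSchrodingerEq V E g h ↔ ∀ φ (hφ : IsTest φ),
      inner ℝ ((tst_memLp hV E hφ).toLp _) g = inner ℝ (hφ.memLp.toLp _) h := by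
  simp only [inner_toLp]
  exact ⟨fun H φ hφ => H φ hφ.1 hφ.2, fun H φ h1 h2 => H φ ⟨h1, h2⟩⟩

theorem weak_test {V : ℝ → ℝ} (hV : LocL2 V) (E : ℝ) {φ : ℝ → ℝ} (hφ : IsTest φ) :
    WeakSchrodingerEq V E (hφ.memLp.toLp _) ((tst_memLp hV E hφ).toLp _) := by
  have key : ∀ {α β : ℝ → ℝ}, IsTest α → IsTest β →
      ∫ x, α x * deriv β x = - ∫ x, deriv α x * β x := fun {α β} hα hβ =>
    integral_mul_deriv_test (Prim.of_deriv
      (fun x => (hα.1.differentiable (by simp) x).hasDerivAt) hα.deriv.1.continuous) hβ.1 hβ.2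
  intro ψ h1 h2
  have hψ : IsTest ψ := ⟨h1, h2⟩
  have i1 : Integrable (fun x => φ x * deriv (deriv ψ) x) :=
    hφ.memLp.integrable_mul hψ.deriv.deriv.memLp
  have i2 : Integrable (fun x => deriv (deriv φ) x * ψ x) :=
    hφ.deriv.deriv.memLp.integrable_mul hψ.memLp
  have i3 : Integrable (fun x => φ x * ((V x - E) * ψ x)) := by
    refine ((hφ.memLp.integrable_mul (hV.mul_compact h1.continuous h2)).sub
      ((hφ.memLp.integrable_mul hψ.memLp).const_mul E)).congr (ae_of_all _ fun x => ?_)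
    simp only [Pi.sub_apply, Pi.mul_apply]; ring
  have e1 : ∫ x, (hφ.memLp.toLp φ : L2R) x * (-(deriv (deriv ψ) x) + (V x - E) * ψ x)
      = ∫ x, (- (φ x * deriv (deriv ψ) x) + φ x * ((V x - E) * ψ x)) := by
    apply integral_congr_ae
    filter_upwards [hφ.memLp.coeFn_toLp] with x hx
    rw [hx]; ring
  have e2 : ∫ x, ((tst_memLp hV E hφ).toLp (tst V E φ) : L2R) x * ψ x
      = ∫ x, (- (deriv (deriv φ) x * ψ x) + φ x * ((V x - E) * ψ x)) := by
    apply integral_congr_ae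
    filter_upwards [(tst_memLp hV E hφ).coeFn_toLp] with x hx
    rw [hx, tst]; ring
  rw [e1, e2, integral_add (by exact i1.neg) i3, integral_add (by exact i2.neg) i3, integral_neg, integral_neg,
    key hφ hψ.deriv, key hφ.deriv hψ]
  simp

/-- A priori bound for the equation `(-d²/dx² + V - E) g = h`. -/
def LowW (V : ℝ → ℝ) (E c : ℝ) : Prop :=
  ∀ g h : L2R, WeakSchrodingerEq V E g h → ‖g‖ ≤ c * ‖h‖

/-- The graph of the (maximal) operator `-d²/dx² + V - E`. -/
def weakGraph {V : ℝ → ℝ} (hV : LocL2 V) (E : ℝ) : Submodule ℝ (L2R × L2R) where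
  carrier := {p | WeakSchrodingerEq V E p.1 p.2}
  add_mem' := by
    intro p q hp hq
    simp only [mem_ofPred_eq, weak_iff hV] at *
    intro φ hφ
    simp [inner_add_right, hp φ hφ, hq φ hφ]
  zero_mem' := by
    simp only [mem_ofPred_eq, weak_iff hV]
    intro φ hφ; simp
  smul_mem' := by
    intro c p hp
    simp only [mem_ofPred_eq, weak_iff hV] at *
    intro φ hφ
    simp [inner_smul_right, hp φ hφ]

theorem mem_weakGraph {V : ℝ → ℝ} (hV : LocL2 V) {E : ℝ} {p : L2R × L2R} :
    p ∈ weakGraph hV E ↔ WeakSchrodingerEq V E p.1 p.2 := Iff.rfl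

theorem isClosed_weakGraph {V : ℝ → ℝ} (hV : LocL2 V) (E : ℝ) :
    IsClosed (weakGraph hV E : Set (L2R × L2R)) := by
  have : (weakGraph hV E : Set (L2R × L2R)) = ⋂ φ, ⋂ hφ : IsTest φ,
      {p | inner ℝ ((tst_memLp hV E hφ).toLp _) p.1 = inner ℝ (hφ.memLp.toLp _) p.2} := by
    ext p
    simp only [SetLike.mem_coe, mem_weakGraph, weak_iff hV, mem_iInter, mem_ofPred_eq]
  rw [this]
  refine isClosed_iInter fun φ => isClosed_iInter fun hφ => isClosed_eq ?_ ?_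
  · exact continuous_const.inner continuous_fst
  · exact continuous_const.inner continuous_snd

/-- Under an a priori bound, the images of the test functions span a dense subspace: a function
orthogonal to them is a weak solution of the homogeneous equation. -/
theorem tst_span_dense {V : ℝ → ℝ} (hV : LocL2 V) {E c : ℝ} (hL : LowW V E c) :
    (Submodule.span ℝ {f : L2R | ∃ φ, ∃ hφ : IsTest φ, f = (tst_memLp hV E hφ).toLp _}).topologicalClosure
      = ⊤ := by
  rw [Submodule.topologicalClosure_eq_top_iff, Submodule.eq_bot_iff]
  intro f hf
  rw [Submodule.mem_orthogonal] at hf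
  have hw : WeakSchrodingerEq V E f 0 := by
    rw [weak_iff hV]
    intro φ hφ
    rw [inner_zero_right]
    exact hf _ (Submodule.subset_span ⟨φ, hφ, rfl⟩)
  have := hL f 0 hw
  simpa using this

theorem exists_resolvent_of_lowW {V : ℝ → ℝ} (hV : LocL2 V) {E c : ℝ} (hL : LowW V E c) :
    ∃ T : L2R →L[ℝ] L2R, (∀ f : L2R, WeakSchrodingerEq V E (T f) f) ∧
      (∀ g h : L2R, WeakSchrodingerEq V E g h → T h = g) := by
  set G := weakGraph hV E
  have huniq : ∀ g g' h, WeakSchrodingerEq V E g h → WeakSchrodingerEq V E g' h → g = g' := by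
    intro g g' h h1 h2
    have h3 : (g, h) - (g', h) ∈ G := G.sub_mem h1 h2
    have h4 : WeakSchrodingerEq V E (g - g') (h - h) := h3
    have := hL _ _ h4
    rw [sub_self, norm_zero, mul_zero] at this
    exact sub_eq_zero.1 (norm_le_zero_iff.1 this)
  have hcomp : CompleteSpace G := (isClosed_weakGraph hV E).completeSpace_coe
  let S : G →L[ℝ] L2R := (ContinuousLinearMap.snd ℝ L2R L2R).comp G.subtypeL
  have hanti : AntilipschitzWith (Real.toNNReal (max c 1)) S := by
    apply ContinuousLinearMap.antilipschitz_of_bound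
    intro p
    have h1 : ‖p.1.1‖ ≤ c * ‖p.1.2‖ := hL _ _ p.2
    have h2 : ‖p‖ = max ‖p.1.1‖ ‖p.1.2‖ := rfl
    have h3 : S p = p.1.2 := rfl
    rw [h2, h3, Real.coe_toNNReal _ (by positivity)]
    apply max_le
    · exact h1.trans (mul_le_mul_of_nonneg_right (le_max_left _ _) (norm_nonneg _))
    · calc ‖p.1.2‖ = 1 * ‖p.1.2‖ := (one_mul _).symm
        _ ≤ _ := mul_le_mul_of_nonneg_right (le_max_right _ _) (norm_nonneg _)
  have hclosed : IsClosed (S.range : Set L2R) := by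
    have h : IsClosed (Set.range S) := hanti.isClosed_range S.uniformContinuous
    have h' : (S.range : Set L2R) = Set.range S := by ext; simp
    rw [h']; exact h
  have hsurj : ∀ f : L2R, ∃ g, WeakSchrodingerEq V E g f := by
    intro f
    have h1 : Submodule.span ℝ {f : L2R | ∃ φ, ∃ hφ : IsTest φ, f = (tst_memLp hV E hφ).toLp _}
        ≤ S.range := by
      rw [Submodule.span_le]
      rintro _ ⟨φ, hφ, rfl⟩
      exact ⟨⟨(_, _), weak_test hV E hφ⟩, rfl⟩
    have h2 := Submodule.topologicalClosure_minimal _ h1 hclosed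
    rw [tst_span_dense hV hL] at h2
    obtain ⟨p, hp⟩ := h2 (Submodule.mem_top (x := f))
    refine ⟨p.1.1, ?_⟩
    have : p.1.2 = f := hp
    rw [← this]
    exact p.2
  choose T0 hT0 using hsurj
  let T1 : L2R →ₗ[ℝ] L2R :=
    { toFun := T0
      map_add' := fun x y => by
        have h : (T0 x, x) + (T0 y, y) ∈ G := G.add_mem (hT0 x) (hT0 y)
        exact huniq _ _ _ (hT0 (x + y)) h
      map_smul' := fun r x => by
        have h : r • (T0 x, x) ∈ G := G.smul_mem r (hT0 x)
        exact huniq _ _ _ (hT0 (r • x)) h }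
  refine ⟨T1.mkContinuous c fun f => hL _ _ (hT0 f), fun f => hT0 f, fun g h hgh => ?_⟩
  exact huniq _ _ _ (hT0 h) hgh

/-- The spectrum is the set of energies without an a priori bound: under such a bound the
operator is injective with range both closed and dense, hence boundedly invertible. -/
theorem notMem_spec_iff {V : ℝ → ℝ} (hV : LocL2 V) (E : ℝ) :
    E ∉ ContSpectrum V ↔ ∃ c, LowW V E c := by
  simp only [ContSpectrum, mem_ofPred_eq, not_not]
  constructor
  · rintro ⟨T, -, h2⟩
    refine ⟨‖T‖, fun g h hw => ?_⟩
    rw [← h2 g h hw]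
    exact T.le_opNorm h
  · rintro ⟨c, hc⟩
    exact exists_resolvent_of_lowW hV hc

theorem resolvent_symm {V : ℝ → ℝ} (hV : LocL2 V) {E : ℝ} {T : L2R →L[ℝ] L2R}
    (h1 : ∀ f : L2R, WeakSchrodingerEq V E (T f) f)
    (h2 : ∀ g h : L2R, WeakSchrodingerEq V E g h → T h = g) (f f' : L2R) :
    inner ℝ (T f) f' = inner ℝ f (T f') := by
  obtain ⟨c, hc⟩ : ∃ c, LowW V E c := (notMem_spec_iff hV E).1 fun h => h ⟨T, h1, h2⟩
  let K : Submodule ℝ L2R :=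
    { carrier := {f | inner ℝ (T f) f' = inner ℝ f (T f')}
      add_mem' := by
        intro a b ha hb
        simp only [mem_ofPred_eq] at *
        rw [map_add, inner_add_left, inner_add_left, ha, hb]
      zero_mem' := by simp
      smul_mem' := by
        intro r a ha
        simp only [mem_ofPred_eq] at *
        rw [map_smul, inner_smul_left, inner_smul_left, ha] }
  have hK : IsClosed (K : Set L2R) :=
    isClosed_eq (T.continuous.inner continuous_const) (continuous_id.inner continuous_const)
  have hle : Submodule.span ℝ {f : L2R | ∃ φ, ∃ hφ : IsTest φ, f = (tst_memLp hV E hφ).toLp _}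
      ≤ K := by
    rw [Submodule.span_le]
    rintro _ ⟨φ, hφ, rfl⟩
    change inner ℝ (T _) f' = inner ℝ _ (T f')
    rw [h2 _ _ (weak_test hV E hφ)]
    exact ((weak_iff hV E _ _).1 (h1 f') φ hφ).symm
  have := Submodule.topologicalClosure_minimal _ hle hK
  rw [tst_span_dense hV hc] at this
  exact this Submodule.mem_top

theorem weak_shift {V : ℝ → ℝ} (hV : LocL2 V) {E E' : ℝ} {g h : L2R}
    (hw : WeakSchrodingerEq V E g h) : WeakSchrodingerEq V E' g (h + (E - E') • g) := by
  intro φ h1 h2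
  have hφ : IsTest φ := ⟨h1, h2⟩
  have hm := hw φ h1 h2
  have i1 : Integrable (fun x => g x * tst V E φ x) :=
    (Lp.memLp g).integrable_mul (tst_memLp hV E hφ)
  have i2 : Integrable (fun x => g x * φ x) := (Lp.memLp g).integrable_mul hφ.memLp
  have i3 : Integrable (fun x => h x * φ x) := (Lp.memLp h).integrable_mul hφ.memLp
  have e1 : ∀ x, g x * (-(deriv (deriv φ) x) + (V x - E') * φ x)
      = g x * tst V E φ x + (E - E') * (g x * φ x) := fun x => by rw [tst]; ring
  have e2 : ∫ x, (h + (E - E') • g : L2R) x * φ x = ∫ x, (h x * φ x + (E - E') * (g x * φ x)) := by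
    apply integral_congr_ae
    filter_upwards [Lp.coeFn_add h ((E - E') • g), Lp.coeFn_smul (E - E') g] with x hx hx'
    rw [hx, Pi.add_apply, hx', Pi.smul_apply, smul_eq_mul]; ring
  simp_rw [e1]
  rw [e2, integral_add i1 (i2.const_mul _), integral_add i3 (i2.const_mul _)]
  congr 1

theorem isClosed_contSpectrum {V : ℝ → ℝ} (hV : LocL2 V) : IsClosed (ContSpectrum V) := by
  rw [← isOpen_compl_iff, Metric.isOpen_iff]
  intro E hE
  obtain ⟨c, hc⟩ := (notMem_spec_iff hV E).1 hE
  refine ⟨1 / (2 * (|c| + 1)), by positivity, fun E' hE' => ?_⟩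
  refine (notMem_spec_iff hV E').2 ⟨2 * (|c| + 1), fun g h hw => ?_⟩
  have h1 := hc _ _ (weak_shift hV (E' := E) hw)
  rw [Metric.mem_ball, Real.dist_eq] at hE'
  have h2 : ‖h + (E' - E) • g‖ ≤ ‖h‖ + |E' - E| * ‖g‖ := by
    refine (norm_add_le _ _).trans ?_
    rw [norm_smul, Real.norm_eq_abs]
  have h3 : ‖g‖ ≤ (|c| + 1) * (‖h‖ + |E' - E| * ‖g‖) := by
    refine h1.trans ((mul_le_mul_of_nonneg_left h2 ?_).trans' ?_)
    · positivity
    · exact mul_le_mul_of_nonneg_right (by linarith [le_abs_self c]) (norm_nonneg _)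
  have h4 : (|c| + 1) * |E' - E| ≤ 1 / 2 := by
    have : 0 < |c| + 1 := by positivity
    calc (|c| + 1) * |E' - E| ≤ (|c| + 1) * (1 / (2 * (|c| + 1))) := by gcongr
      _ = 1 / 2 := by field_simp
  nlinarith [norm_nonneg g, norm_nonneg h]

/-! ### Strong solutions -/

/-- `u` is a continuously differentiable `L²` function with absolutely continuous derivative `v`,
`h` is in `L²`, and `-u'' + (V - E) u = h` almost everywhere. -/
structure Sol (V : ℝ → ℝ) (E : ℝ) (u v h : ℝ → ℝ) : Prop where
  der : ∀ x, HasDerivAt u (v x) x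
  prim : Prim v (fun t => (V t - E) * u t - h t)
  memu : MemLp u 2 volume
  memh : MemLp h 2 volume

theorem norm_sq_L2R (g : L2R) : ‖g‖ ^ 2 = ∫ x, g x ^ 2 := by
  rw [← real_inner_self_eq_norm_sq, L2.inner_def]
  apply integral_congr_ae
  filter_upwards with x
  simp [pow_two]

theorem norm_sq_toLp {u : ℝ → ℝ} (hu : MemLp u 2 volume) :
    ‖(hu.toLp u : L2R)‖ ^ 2 = ∫ x, u x ^ 2 := by
  rw [norm_sq_L2R]
  apply integral_congr_ae
  filter_upwards [hu.coeFn_toLp] with x hx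
  rw [hx]

theorem intervalIntegrable_of_locallyIntegrable {F : ℝ → ℝ} (hF : LocallyIntegrable F volume)
    (x y : ℝ) : IntervalIntegrable F volume x y :=
  intervalIntegrable_iff.2 ((hF.integrableOn_isCompact isCompact_uIcc).mono_set uIoc_subset_uIcc)

theorem Prim.of_locallyIntegrable {F : ℝ → ℝ} (hF : LocallyIntegrable F volume) :
    Prim (fun x => ∫ t in (0:ℝ)..x, F t) F where
  int x y := intervalIntegrable_of_locallyIntegrable hF x y
  eq x y := by
    rw [intervalIntegral.integral_interval_sub_left
      (intervalIntegrable_of_locallyIntegrable hF _ _)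
      (intervalIntegrable_of_locallyIntegrable hF _ _)]

/-- Elliptic regularity. -/
theorem Sol.of_weak {V : ℝ → ℝ} (hV : LocL2 V) {E : ℝ} {g h : L2R}
    (hw : WeakSchrodingerEq V E g h) :
    ∃ u v, Sol V E u v h ∧ g =ᵐ[volume] u := by
  have hg : LocallyIntegrable g volume := (Lp.memLp g).locallyIntegrable (by norm_num)
  have hh : LocallyIntegrable h volume := (Lp.memLp h).locallyIntegrable (by norm_num)
  have hVg := hV.mul_locallyIntegrable (Lp.memLp g)
  let F : ℝ → ℝ := fun x => V x * g x - E * g x - h x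
  have hF : LocallyIntegrable F volume := (hVg.sub (hg.smul E)).sub hh
  let v0 : ℝ → ℝ := fun x => ∫ t in (0:ℝ)..x, F t
  have hv0 : Prim v0 F := Prim.of_locallyIntegrable hF
  let u0 : ℝ → ℝ := fun x => ∫ t in (0:ℝ)..x, v0 t
  have hu0 : ∀ x, HasDerivAt u0 (v0 x) x := fun x =>
    intervalIntegral.integral_hasDerivAt_right (hv0.continuous.intervalIntegrable _ _)
      (hv0.continuous.stronglyMeasurableAtFilter _ _) hv0.continuous.continuousAt
  have hu0c : Continuous u0 := continuous_iff_continuousAt.2 fun x => (hu0 x).continuousAt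
  obtain ⟨α, β, hαβ⟩ := ae_affine_of_weak_deriv_two_zero (f := fun x => g x - u0 x)
    (hg.sub hu0c.locallyIntegrable) (by
      intro φ h1 h2
      have hφ : IsTest φ := ⟨h1, h2⟩
      have hd := hφ.deriv
      have hdd := hd.deriv
      have e1 := integral_mul_deriv_test (Prim.of_deriv hu0 hv0.continuous) hd.1 hd.2
      have e2 := integral_mul_deriv_test hv0 h1 h2
      have e3 := hw φ h1 h2
      have i1 := integrable_mul_test hg hdd.1.continuous hdd.2
      have i2 := integrable_mul_test hu0c.locallyIntegrable hdd.1.continuous hdd.2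
      have i3 := integrable_mul_test hF h1.continuous h2
      have i4 := integrable_mul_test hh h1.continuous h2
      have e4 : ∫ x, g x * (-(deriv (deriv φ) x) + (V x - E) * φ x)
          = -(∫ x, g x * deriv (deriv φ) x) + ((∫ x, F x * φ x) + ∫ x, h x * φ x) := by
        rw [← integral_neg, ← integral_add i3 i4, ← integral_add (by exact i1.neg) (by exact i3.add i4)]
        congr 1; funext x; simp only [F]; ring
      simp_rw [sub_mul]
      rw [integral_sub i1 i2]
      linarith)
  have hu : ∀ x, HasDerivAt (fun x => u0 x + (α + β * x)) (v0 x + β) x := fun x => by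
    have h1 : HasDerivAt (fun x => α + β * x) (β * 1) x :=
      ((hasDerivAt_id x).const_mul β).const_add α
    rw [mul_one] at h1
    exact (hu0 x).fun_add h1
  have hgu : g =ᵐ[volume] fun x => u0 x + (α + β * x) := by
    filter_upwards [hαβ] with x hx
    linarith
  refine ⟨fun x => u0 x + (α + β * x), fun x => v0 x + β, ⟨hu, ?_, ?_, Lp.memLp h⟩, hgu⟩
  · have hc : Prim (fun x => v0 x + β) (fun x => F x + 0) :=
      hv0.add (Prim.of_deriv (fun x => hasDerivAt_const x β) continuous_const)
    refine hc.congr_ae ?_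
    filter_upwards [hgu] with x hx
    rw [← hx]; simp only [F]; ring
  · exact (Lp.memLp g).ae_eq hgu

namespace Sol

variable {V : ℝ → ℝ} {E : ℝ} {u v h : ℝ → ℝ}

theorem contu (s : Sol V E u v h) : Continuous u :=
  continuous_iff_continuousAt.2 fun x => (s.der x).continuousAt

theorem contv (s : Sol V E u v h) : Continuous v := s.prim.continuous

theorem primu (s : Sol V E u v h) : Prim u v := Prim.of_deriv s.der s.contv

theorem weak (hV : LocL2 V) (s : Sol V E u v h) :
    WeakSchrodingerEq V E (s.memu.toLp u) (s.memh.toLp h) := by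
  intro φ h1 h2
  have hφ : IsTest φ := ⟨h1, h2⟩
  have hd := hφ.deriv
  have hdd := hd.deriv
  have e1 := integral_mul_deriv_test s.primu hd.1 hd.2
  have e2 := integral_mul_deriv_test s.prim h1 h2
  have e3 : ∫ x, (s.memu.toLp u : L2R) x * (-(deriv (deriv φ) x) + (V x - E) * φ x)
      = ∫ x, (-(u x * deriv (deriv φ) x) + u x * ((V x - E) * φ x)) := by
    apply integral_congr_ae
    filter_upwards [s.memu.coeFn_toLp] with x hx
    rw [hx]; ring
  have e4 : ∫ x, (s.memh.toLp h : L2R) x * φ x = ∫ x, h x * φ x := by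
    apply integral_congr_ae
    filter_upwards [s.memh.coeFn_toLp] with x hx
    rw [hx]
  have i1 : Integrable (fun x => u x * deriv (deriv φ) x) :=
    s.memu.integrable_mul hdd.memLp
  have i3 : Integrable (fun x => u x * ((V x - E) * φ x)) := by
    refine ((s.memu.integrable_mul (hV.mul_compact h1.continuous h2)).sub
      ((s.memu.integrable_mul hφ.memLp).const_mul E)).congr (ae_of_all _ fun x => ?_)
    simp only [Pi.sub_apply, Pi.mul_apply]; ring
  have i4 : Integrable (fun x => h x * φ x) := s.memh.integrable_mul hφ.memLp
  have e5 : ∫ x, ((V x - E) * u x - h x) * φ x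
      = (∫ x, u x * ((V x - E) * φ x)) - ∫ x, h x * φ x := by
    rw [← integral_sub i3 i4]
    congr 1; funext x; ring
  rw [e3, e4, integral_add (by exact i1.neg) i3, integral_neg]
  linarith

end Sol

/-- A priori bound for strong solutions, in terms of squared norms. -/
def LowS (V : ℝ → ℝ) (E c : ℝ) : Prop :=
  ∀ u v h, Sol V E u v h → ∫ x, u x ^ 2 ≤ c * ∫ x, h x ^ 2

theorem notMem_spec_iff_lowS {V : ℝ → ℝ} (hV : LocL2 V) (E : ℝ) :
    E ∉ ContSpectrum V ↔ ∃ c, 0 < c ∧ LowS V E c := by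
  rw [notMem_spec_iff hV]
  constructor
  · rintro ⟨c, hc⟩
    refine ⟨c ^ 2 + 1, by positivity, fun u v h s => ?_⟩
    have h1 := hc _ _ (s.weak hV)
    rw [← norm_sq_toLp s.memu, ← norm_sq_toLp s.memh]
    have h2 := pow_le_pow_left₀ (norm_nonneg _) h1 2
    rw [mul_pow] at h2
    nlinarith [sq_nonneg ‖s.memh.toLp h‖]
  · rintro ⟨c, hc0, hc⟩
    refine ⟨Real.sqrt c, fun g h hw => ?_⟩
    obtain ⟨u, v, s, hgu⟩ := Sol.of_weak hV hw
    have h1 := hc u v h s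
    have h2 : ∫ x, u x ^ 2 = ‖g‖ ^ 2 := by
      rw [norm_sq_L2R]
      apply integral_congr_ae
      filter_upwards [hgu] with x hx
      rw [hx]
    rw [h2, ← norm_sq_L2R] at h1
    apply le_of_sq_le_sq _ (by positivity)
    rw [mul_pow, Real.sq_sqrt hc0.le]
    exact h1

/-- Spectral energies have approximate solutions. -/
theorem exists_sol_of_mem_spec {V : ℝ → ℝ} (hV : LocL2 V) {E : ℝ} (hE : E ∈ ContSpectrum V)
    {κ : ℝ} (hκ : 0 < κ) : ∃ u v h, Sol V E u v h ∧ ∫ x, h x ^ 2 < κ * ∫ x, u x ^ 2 := by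
  by_contra hcon
  push Not at hcon
  refine (notMem_spec_iff_lowS hV E).2 ⟨1 / κ, by positivity, fun u v h s => ?_⟩ hE
  have := hcon u v h s
  rw [div_mul_eq_mul_div, one_mul, le_div_iff₀ hκ]
  linarith

/-! ### Local elliptic estimates on cells -/

theorem exists_sq_le_average {u : ℝ → ℝ} (hu : Continuous u) {p q ℓ I : ℝ} (hℓ : 0 < ℓ)
    (hpq : q = p + ℓ) (hI : ∫ t in p..q, u t ^ 2 ≤ I) :
    ∃ x ∈ Icc p q, u x ^ 2 ≤ I / ℓ := by
  by_contra hcon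
  push Not at hcon
  have hlt : ∫ _ in p..q, I / ℓ < ∫ t in p..q, u t ^ 2 := by
    apply intervalIntegral.integral_lt_integral_of_continuousOn_of_le_of_exists_lt (by linarith)
      continuousOn_const (hu.pow 2).continuousOn
    · intro x hx; exact (hcon x ⟨hx.1.le, hx.2⟩).le
    · exact ⟨p, ⟨le_rfl, by linarith⟩, hcon p ⟨le_rfl, by linarith⟩⟩
  have h2 : (q - p) * (I / ℓ) = I := by rw [hpq]; field_simp; ring
  rw [intervalIntegral.integral_const, smul_eq_mul, h2] at hlt
  linarith

theorem sq_integral_abs_le {h : ℝ → ℝ} {p q : ℝ} (hpq : p < q)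
    (h1 : IntervalIntegrable h volume p q)
    (h2 : IntervalIntegrable (fun t => h t ^ 2) volume p q) :
    (∫ t in p..q, |h t|) ^ 2 ≤ (q - p) * ∫ t in p..q, h t ^ 2 := by
  set H := ∫ t in p..q, |h t| with hH
  set m := H / (q - p)
  have h0 : 0 ≤ ∫ t in p..q, (h t ^ 2 - 2 * m * |h t| + m ^ 2) := by
    apply intervalIntegral.integral_nonneg hpq.le
    intro t _
    nlinarith [sq_nonneg (|h t| - m), sq_abs (h t)]
  rw [intervalIntegral.integral_add (h2.sub (h1.abs.const_mul _)) (by simp),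
    intervalIntegral.integral_sub h2 (h1.abs.const_mul _), intervalIntegral.integral_const_mul,
    intervalIntegral.integral_const, smul_eq_mul, ← hH] at h0
  have hpos : 0 < q - p := by linarith
  have hm : m * (q - p) = H := by simp only [m]; field_simp
  have := mul_nonneg hpos.le h0
  rw [← hm] at this ⊢
  nlinarith

theorem integral_le_integral_sub {f : ℝ → ℝ} (hf : ∀ x, 0 ≤ f x) {p q p' q' : ℝ}
    (hp : p ≤ p') (hp' : p' ≤ q') (hq : q' ≤ q) (hi : IntervalIntegrable f volume p q) :
    ∫ t in p'..q', f t ≤ ∫ t in p..q, f t := by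
  rw [intervalIntegral.integral_of_le hp', intervalIntegral.integral_of_le (by linarith)]
  apply setIntegral_mono_set
  · exact (intervalIntegrable_iff_integrableOn_Ioc_of_le (by linarith)).1 hi
  · exact ae_of_all _ hf
  · exact (Ioc_subset_Ioc hp hq).eventuallyLE

/-- Pointwise bounds for `u` and `v = u'` on an interval of length `ℓ` on which
`ℓ * ∫ |W| ≤ 1/2`, where `u'' = W u - h`. -/
theorem local_est {W u v h : ℝ → ℝ} (hu : ∀ x, HasDerivAt u (v x) x)
    (hv : Prim v (fun t => W t * u t - h t)) {p ℓ D : ℝ} (hℓ : 0 < ℓ)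
    (hWi : IntervalIntegrable W volume p (p + ℓ)) (hhi : IntervalIntegrable h volume p (p + ℓ))
    (hD : ∫ t in p..p + ℓ, |W t| ≤ D) (hℓD : ℓ * D ≤ 1 / 2) {x : ℝ} (hx : x ∈ Icc p (p + ℓ)) :
    |u x| ≤ 14 * √((∫ t in p..p + ℓ, u t ^ 2) / (ℓ / 3)) + 2 * ℓ * ∫ t in p..p + ℓ, |h t| ∧
    |v x| ≤ 6 * √((∫ t in p..p + ℓ, u t ^ 2) / (ℓ / 3)) / ℓ +
      D * (14 * √((∫ t in p..p + ℓ, u t ^ 2) / (ℓ / 3)) + 2 * ℓ * ∫ t in p..p + ℓ, |h t|) +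
      ∫ t in p..p + ℓ, |h t| := by
  have huc : Continuous u := continuous_iff_continuousAt.2 fun x => (hu x).continuousAt
  set A := √((∫ t in p..p + ℓ, u t ^ 2) / (ℓ / 3)) with hA
  set H := ∫ t in p..p + ℓ, |h t| with hH
  have hI0 : 0 ≤ ∫ t in p..p + ℓ, u t ^ 2 :=
    intervalIntegral.integral_nonneg (by linarith) fun t _ => sq_nonneg _
  have hH0 : 0 ≤ H := intervalIntegral.integral_nonneg (by linarith) fun t _ => abs_nonneg _
  have hD0 : 0 ≤ D := le_trans
    (intervalIntegral.integral_nonneg (by linarith) fun t _ => abs_nonneg _) hD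
  have hsq : IntervalIntegrable (fun t => u t ^ 2) volume p (p + ℓ) :=
    (huc.pow 2).intervalIntegrable _ _
  obtain ⟨x1, hx1, hux1⟩ := exists_sq_le_average huc (p := p) (q := p + ℓ / 3) (ℓ := ℓ / 3)
    (by positivity) rfl
    (integral_le_integral_sub (fun t => sq_nonneg (u t)) le_rfl (by linarith) (by linarith) hsq)
  obtain ⟨x2, hx2, hux2⟩ := exists_sq_le_average huc (p := p + 2 * ℓ / 3) (q := p + ℓ)
    (ℓ := ℓ / 3) (by positivity) (by ring)
    (integral_le_integral_sub (fun t => sq_nonneg (u t)) (by linarith) (by linarith) le_rfl hsq)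
  have ha1 : |u x1| ≤ A := Real.abs_le_sqrt hux1
  have ha2 : |u x2| ≤ A := Real.abs_le_sqrt hux2
  have hA0 : 0 ≤ A := Real.sqrt_nonneg _
  have hx12 : ℓ / 3 ≤ x2 - x1 := by linarith [hx1.2, hx2.1]
  have hx12' : x1 < x2 := by linarith
  obtain ⟨ξ, hξ, hvξ⟩ := exists_hasDerivAt_eq_slope u v hx12' huc.continuousOn fun t _ => hu t
  have hξJ : ξ ∈ Icc p (p + ℓ) :=
    ⟨by linarith [hx1.1, hξ.1], by linarith [hx2.2, hξ.2]⟩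
  have hvξ' : |v ξ| ≤ 6 * A / ℓ := by
    rw [hvξ, abs_div, abs_of_pos (by linarith : 0 < x2 - x1), div_le_div_iff₀ (by linarith) hℓ]
    have h1 : |u x2 - u x1| ≤ 2 * A := by
      have := abs_sub (u x2) (u x1); linarith
    nlinarith [abs_nonneg (u x2 - u x1)]
  obtain ⟨z, hz, hmax⟩ := (isCompact_Icc (a := p) (b := p + ℓ)).exists_isMaxOn
    ⟨p, le_rfl, by linarith⟩ (huc.abs.continuousOn)
  set M := |u z| with hM
  have hM0 : 0 ≤ M := abs_nonneg _
  have hmax' : ∀ t ∈ Icc p (p + ℓ), |u t| ≤ M := fun t ht => hmax ht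
  have hvb : ∀ t ∈ Icc p (p + ℓ), |v t| ≤ 6 * A / ℓ + M * D + H := by
    intro t ht
    have h1 : |v t - v ξ| ≤ M * D + H := by
      rw [hv.eq ξ t]
      have hsub : uIoc ξ t ⊆ Ioc p (p + ℓ) := by
        rw [uIoc]
        exact Ioc_subset_Ioc (le_min hξJ.1 ht.1) (max_le hξJ.2 ht.2)
      have hi2 : IntegrableOn (fun t => M * |W t| + |h t|) (Ioc p (p + ℓ)) := by
        have := (hWi.abs.const_mul M).add hhi.abs
        exact (intervalIntegrable_iff_integrableOn_Ioc_of_le (by linarith)).1 this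
      rw [← Real.norm_eq_abs]
      calc ‖∫ t in ξ..t, (W t * u t - h t)‖
          ≤ ∫ t in uIoc ξ t, ‖W t * u t - h t‖ :=
            intervalIntegral.norm_integral_le_integral_norm_uIoc
        _ ≤ ∫ t in uIoc ξ t, (M * |W t| + |h t|) := by
            apply setIntegral_mono_on
            · exact (intervalIntegrable_iff.1 (hv.int ξ t)).norm
            · exact hi2.mono_set hsub
            · exact measurableSet_uIoc
            · intro s hs
              have hs' := hmax' s (Ioc_subset_Icc_self (hsub hs))
              rw [Real.norm_eq_abs]
              calc |W s * u s - h s| ≤ |W s * u s| + |h s| := abs_sub _ _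
                _ = |W s| * |u s| + |h s| := by rw [abs_mul]
                _ ≤ M * |W s| + |h s| := by nlinarith [abs_nonneg (W s)]
        _ ≤ ∫ t in Ioc p (p + ℓ), (M * |W t| + |h t|) := by
            apply setIntegral_mono_set hi2
            · exact ae_of_all _ fun s => by
                simp only [Pi.zero_apply]; positivity
            · exact hsub.eventuallyLE
        _ = M * (∫ t in p..p + ℓ, |W t|) + H := by
            rw [← intervalIntegral.integral_of_le (by linarith),
              intervalIntegral.integral_add (hWi.abs.const_mul M) hhi.abs,
              intervalIntegral.integral_const_mul]
        _ ≤ M * D + H := by nlinarith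
    have h3 : |v t| ≤ |v ξ| + |v t - v ξ| := by
      have := abs_add_le (v ξ) (v t - v ξ); simpa using this
    linarith
  have hub : ∀ t ∈ Icc p (p + ℓ), |u t| ≤ A + ℓ * (6 * A / ℓ + M * D + H) := by
    intro t ht
    have hx1J : x1 ∈ Icc p (p + ℓ) := ⟨hx1.1, by linarith [hx1.2]⟩
    have h1 : ‖u t - u x1‖ ≤ (6 * A / ℓ + M * D + H) * ‖t - x1‖ :=
      (convex_Icc p (p + ℓ)).norm_image_sub_le_of_norm_hasDerivWithin_le
        (fun s hs => (hu s).hasDerivWithinAt) (fun s hs => hvb s hs) hx1J ht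
    have h2 : ‖t - x1‖ ≤ ℓ := by
      rw [Real.norm_eq_abs, abs_le]; constructor <;> linarith [ht.1, ht.2, hx1J.1, hx1J.2]
    have h3 : |u t| ≤ |u x1| + |u t - u x1| := by
      have := abs_add_le (u x1) (u t - u x1); simpa using this
    have h4 : 0 ≤ 6 * A / ℓ + M * D + H := by positivity
    rw [Real.norm_eq_abs] at h1
    nlinarith
  have hMb : M ≤ 14 * A + 2 * ℓ * H := by
    have h1 := hub z hz
    have h2 : ℓ * (6 * A / ℓ + M * D + H) = 6 * A + M * (ℓ * D) + ℓ * H := by field_simp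
    rw [h2] at h1
    nlinarith
  refine ⟨(hmax' x hx).trans hMb, (hvb x hx).trans ?_⟩
  nlinarith

/-- The `j`-th cell of the grid `aℤ`. -/
def cell (a : ℝ) (j : ℤ) : Set ℝ := Ioc (j * a) ((j + 1) * a)

/-- `V` is locally `L²` with squared norm at most `B` on each cell. -/
structure UnifL2 (a B : ℝ) (V : ℝ → ℝ) : Prop where
  meas : AEStronglyMeasurable V volume
  int : ∀ j, IntegrableOn (fun t => V t ^ 2) (cell a j) volume
  bd : ∀ j, ∫ t in cell a j, V t ^ 2 ≤ B

theorem mem_cell_iff {a : ℝ} (ha : 0 < a) {x : ℝ} {j : ℤ} :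
    x ∈ cell a j ↔ j = ⌈x / a⌉ - 1 := by
  rw [cell, mem_Ioc, eq_sub_iff_add_eq, eq_comm, Int.ceil_eq_iff, lt_div_iff₀ ha, div_le_iff₀ ha]
  push_cast; simp

theorem iUnion_cell {a : ℝ} (ha : 0 < a) : ⋃ j, cell a j = univ := by
  ext x
  simp [mem_iUnion, mem_cell_iff ha]

theorem disjoint_cell {a : ℝ} (ha : 0 < a) : Pairwise (Function.onFun Disjoint (cell a)) := by
  intro i j hij
  rw [Function.onFun, disjoint_left]
  intro x hi hj
  exact hij ((mem_cell_iff ha).1 hi |>.trans ((mem_cell_iff ha).1 hj).symm)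

theorem measurableSet_cell (a : ℝ) (j : ℤ) : MeasurableSet (cell a j) := measurableSet_Ioc

theorem cell_integral {a : ℝ} (ha : 0 < a) (j : ℤ) (f : ℝ → ℝ) :
    ∫ t in (j * a)..((j + 1) * a), f t = ∫ t in cell a j, f t := by
  rw [intervalIntegral.integral_of_le (by nlinarith)]; rfl

theorem integrableOn_cells {a : ℝ} (ha : 0 < a) {f : ℝ → ℝ} (hf : ∀ j, IntegrableOn f (cell a j))
    (R : ℝ) : IntegrableOn f (Icc (-R) R) := by
  have h1 : IntegrableOn f (⋃ j ∈ Finset.Icc (⌈(-R) / a⌉ - 1) (⌈R / a⌉ - 1), cell a j) :=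
    integrableOn_finset_iUnion.2 fun j _ => hf j
  refine h1.mono_set fun x hx => ?_
  simp only [mem_iUnion, Finset.mem_Icc]
  refine ⟨⌈x / a⌉ - 1, ⟨?_, ?_⟩, (mem_cell_iff ha).2 rfl⟩
  · have := Int.ceil_mono (div_le_div_of_nonneg_right hx.1 ha.le); lia
  · have := Int.ceil_mono (div_le_div_of_nonneg_right hx.2 ha.le); lia

theorem UnifL2.locL2 {a B : ℝ} (ha : 0 < a) {V : ℝ → ℝ} (h : UnifL2 a B V) : LocL2 V := fun R =>
  (memLp_two_iff_integrable_sq h.meas.restrict).2 (integrableOn_cells ha h.int R)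

/-- If `f ≥ 0` has integral at most that of `g` on every cell, and `g` is integrable, then so is
`f`, with integral at most that of `g`. -/
theorem integrable_of_cells {a : ℝ} (ha : 0 < a) {f g : ℝ → ℝ} (hf0 : ∀ x, 0 ≤ f x)
    (hf : ∀ j, IntegrableOn f (cell a j)) (hg : Integrable g)
    (hfg : ∀ j, ∫ t in cell a j, f t ≤ ∫ t in cell a j, g t) :
    Integrable f ∧ ∫ t, f t ≤ ∫ t, g t := by
  have hgs := hasSum_integral_iUnion (fun j => measurableSet_cell a j) (disjoint_cell ha)
    hg.integrableOn
  rw [iUnion_cell ha, setIntegral_univ] at hgs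
  have hnn : ∀ j, 0 ≤ ∫ t in cell a j, f t := fun j => integral_nonneg hf0
  have hsum : Summable fun j => ∫ t in cell a j, f t := hgs.summable.of_nonneg_of_le hnn hfg
  have hi : IntegrableOn f (⋃ j, cell a j) := by
    apply integrableOn_iUnion_of_summable_integral_norm hf
    simpa [abs_of_nonneg (hf0 _)] using hsum
  have hfs := hasSum_integral_iUnion (fun j => measurableSet_cell a j) (disjoint_cell ha) hi
  rw [iUnion_cell ha] at hi hfs
  rw [setIntegral_univ] at hfs
  exact ⟨integrableOn_univ.1 hi, hasSum_le hfg hfs hgs⟩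

theorem UnifL2.integral_abs_sub_le {a B : ℝ} (ha : 0 < a) {V : ℝ → ℝ} (hV : UnifL2 a B V)
    {E n : ℝ} (hE : |E| ≤ n) (j : ℤ) :
    ∫ t in cell a j, |V t - E| ≤ (a + B) / 2 + n * a := by
  have hvol : volume.real (cell a j) = a := by
    rw [cell, Real.volume_real_Ioc_of_le (by nlinarith)]; ring
  have hfin : volume (cell a j) ≠ ⊤ := by simp [cell]
  have hVl := (hV.locL2 ha).locallyIntegrable
  have hVi : IntegrableOn V (cell a j) :=
    (hVl.integrableOn_isCompact isCompact_Icc).mono_set Ioc_subset_Icc_self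
  have hci : ∀ c : ℝ, IntegrableOn (fun _ => c) (cell a j) := fun c =>
    integrableOn_const hfin
  have h1 : ∫ t in cell a j, |V t - E| ≤ ∫ t in cell a j, ((1 / 2 + n) + V t ^ 2 / 2) := by
    apply setIntegral_mono_on (hVi.sub (hci E)).abs ((hci _).add ((hV.int j).div_const 2))
      (measurableSet_cell a j)
    intro t _
    have := abs_sub (V t) E
    simp only [Pi.add_apply, Pi.sub_apply]
    nlinarith [sq_nonneg (|V t| - 1), sq_abs (V t)]
  rw [integral_add (hci _) ((hV.int j).div_const 2), setIntegral_const, hvol, integral_div,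
    smul_eq_mul] at h1
  nlinarith [hV.bd j]

set_option maxHeartbeats 1000000 in
/-- Pointwise control of a strong solution and its derivative by local `L²` norms. -/
theorem exists_local_bound {a : ℝ} (ha : 0 < a) (B n : ℝ) : ∃ K, 0 < K ∧
    ∀ V, UnifL2 a B V → ∀ E, |E| ≤ n → ∀ u v h, Sol V E u v h →
      ∀ j : ℤ, ∀ x ∈ Icc (j * a) ((j + 1) * a),
        u x ^ 2 ≤ K * (∫ t in cell a j, (u t ^ 2 + h t ^ 2)) ∧
        v x ^ 2 ≤ K * (∫ t in cell a j, (u t ^ 2 + h t ^ 2)) := by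
  set D0 := |(a + B) / 2 + n * a| with hD0def
  have hD0 : 0 ≤ D0 := abs_nonneg _
  set ℓ := min a (1 / (2 * (D0 + 1))) with hℓdef
  have hℓ : 0 < ℓ := lt_min ha (by positivity)
  have hℓa : ℓ ≤ a := min_le_left _ _
  have hℓD : ℓ * D0 ≤ 1 / 2 := by
    have h1 : ℓ ≤ 1 / (2 * (D0 + 1)) := min_le_right _ _
    calc ℓ * D0 ≤ 1 / (2 * (D0 + 1)) * D0 := by gcongr
      _ ≤ 1 / 2 := by
        rw [div_mul_eq_mul_div, div_le_div_iff₀ (by positivity) (by norm_num)]; linarith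
  -- `c1 * A + c2 * H` bounds both `|u|` and `|v|`
  set c1 := 14 + 6 / ℓ + 14 * D0 with hc1
  set c2 := 2 * ℓ + 2 * D0 * ℓ + 1 with hc2
  have hc1p : 0 ≤ c1 := by positivity
  have hc2p : 0 ≤ c2 := by positivity
  refine ⟨2 * (c1 ^ 2 * (3 / ℓ) + c2 ^ 2 * ℓ) + 1, by positivity, ?_⟩
  intro V hV E hE u v h s j x hx
  have hjle : (j : ℝ) * a ≤ (j + 1) * a := by nlinarith
  set p := min x ((j + 1) * a - ℓ) with hp
  have hp1 : j * a ≤ p := le_min hx.1 (by linarith)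
  have hp2 : p + ℓ ≤ (j + 1) * a := by have := min_le_right x ((j + 1) * a - ℓ); linarith
  have hxp : x ∈ Icc p (p + ℓ) := by
    refine ⟨min_le_left _ _, ?_⟩
    rcases min_choice x ((j + 1) * a - ℓ) with h1 | h1 <;> rw [hp, h1]
    · linarith
    · linarith [hx.2]
  have hVl := (hV.locL2 ha).locallyIntegrable
  have hWl : LocallyIntegrable (fun t => V t - E) volume :=
    hVl.sub continuous_const.locallyIntegrable
  have hhl : LocallyIntegrable h volume := s.memh.locallyIntegrable (by norm_num)
  have hh2 : Integrable (fun t => h t ^ 2) := s.memh.integrable_sq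
  have hu2 : Integrable (fun t => u t ^ 2) := s.memu.integrable_sq
  have hDle : ∫ t in p..p + ℓ, |V t - E| ≤ D0 := by
    refine (integral_le_integral_sub (fun t => abs_nonneg _) hp1 (by linarith) hp2
      (intervalIntegrable_of_locallyIntegrable hWl _ _).abs).trans ?_
    rw [cell_integral ha]
    exact (hV.integral_abs_sub_le ha hE j).trans (le_abs_self _)
  obtain ⟨e1, e2⟩ := local_est s.der s.prim hℓ (intervalIntegrable_of_locallyIntegrable hWl _ _)
    (intervalIntegrable_of_locallyIntegrable hhl _ _) hDle hℓD hxp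
  have hHsq := sq_integral_abs_le (by linarith : p < p + ℓ)
    (intervalIntegrable_of_locallyIntegrable hhl _ _) hh2.intervalIntegrable
  set A := √((∫ t in p..p + ℓ, u t ^ 2) / (ℓ / 3)) with hA
  set H := ∫ t in p..p + ℓ, |h t| with hH
  have hI0 : 0 ≤ ∫ t in p..p + ℓ, u t ^ 2 :=
    intervalIntegral.integral_nonneg (by linarith) fun t _ => sq_nonneg _
  have hH0 : 0 ≤ H := intervalIntegral.integral_nonneg (by linarith) fun t _ => abs_nonneg _
  have hA0 : 0 ≤ A := Real.sqrt_nonneg _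
  have hA2 : A ^ 2 = (3 / ℓ) * ∫ t in p..p + ℓ, u t ^ 2 := by
    rw [hA, Real.sq_sqrt (by positivity)]; field_simp
  have hule : ∫ t in p..p + ℓ, u t ^ 2 ≤ ∫ t in cell a j, u t ^ 2 := by
    rw [← cell_integral ha]
    exact integral_le_integral_sub (fun t => sq_nonneg _) hp1 (by linarith) hp2
      hu2.intervalIntegrable
  have hhle : ∫ t in p..p + ℓ, h t ^ 2 ≤ ∫ t in cell a j, h t ^ 2 := by
    rw [← cell_integral ha]
    exact integral_le_integral_sub (fun t => sq_nonneg _) hp1 (by linarith) hp2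
      hh2.intervalIntegrable
  have hun : 0 ≤ ∫ t in cell a j, u t ^ 2 := integral_nonneg fun t => sq_nonneg _
  have hhn : 0 ≤ ∫ t in cell a j, h t ^ 2 := integral_nonneg fun t => sq_nonneg _
  have hH2 : H ^ 2 ≤ ℓ * ∫ t in cell a j, h t ^ 2 := by
    refine hHsq.trans ?_
    rw [add_sub_cancel_left]
    gcongr
  have hA2' : A ^ 2 ≤ (3 / ℓ) * ∫ t in cell a j, u t ^ 2 := by
    rw [hA2]; gcongr
  have key : ∀ w : ℝ, |w| ≤ c1 * A + c2 * H →
      w ^ 2 ≤ (2 * (c1 ^ 2 * (3 / ℓ) + c2 ^ 2 * ℓ) + 1) * ∫ t in cell a j, (u t ^ 2 + h t ^ 2) := by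
    intro w hw
    rw [integral_add hu2.integrableOn hh2.integrableOn]
    have h1 : w ^ 2 ≤ (c1 * A + c2 * H) ^ 2 := by
      rw [← sq_abs]; gcongr
    have h2 : (c1 * A + c2 * H) ^ 2 ≤ 2 * (c1 ^ 2 * A ^ 2 + c2 ^ 2 * H ^ 2) := by
      nlinarith [sq_nonneg (c1 * A - c2 * H)]
    have h3 : c1 ^ 2 * A ^ 2 ≤ c1 ^ 2 * ((3 / ℓ) * ∫ t in cell a j, u t ^ 2) := by gcongr
    have h4 : c2 ^ 2 * H ^ 2 ≤ c2 ^ 2 * (ℓ * ∫ t in cell a j, h t ^ 2) := by gcongr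
    have h5 : 0 ≤ c1 ^ 2 * (3 / ℓ) := by positivity
    have h6 : 0 ≤ c2 ^ 2 * ℓ := by positivity
    nlinarith [mul_nonneg h5 hhn, mul_nonneg h6 hun]
  have hAℓ : 0 ≤ 6 / ℓ * A := by positivity
  have hDA : 0 ≤ D0 * A := by positivity
  have hDH : 0 ≤ D0 * (ℓ * H) := by positivity
  have hlH : 0 ≤ ℓ * H := by positivity
  constructor
  · apply key; rw [hc1, hc2]; linarith
  · apply key; rw [hc1, hc2]
    have : 6 * A / ℓ = 6 / ℓ * A := by ring
    linarith

/-! ### Perturbation of the potential and of the energy -/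

/-- `V - V'` has squared `L²` norm at most `δ` on each cell. -/
structure CloseL2 (a δ : ℝ) (V V' : ℝ → ℝ) : Prop where
  meas : AEStronglyMeasurable (fun t => V t - V' t) volume
  int : ∀ j, IntegrableOn (fun t => (V t - V' t) ^ 2) (cell a j) volume
  bd : ∀ j, ∫ t in cell a j, (V t - V' t) ^ 2 ≤ δ

theorem CloseL2.symm {a δ : ℝ} {V V' : ℝ → ℝ} (h : CloseL2 a δ V V') : CloseL2 a δ V' V where
  meas := h.meas.neg.congr (ae_of_all _ fun t => by simp)
  int j := (h.int j).congr (ae_of_all _ fun t => by ring)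
  bd j := by
    refine le_of_eq_of_le (integral_congr_ae (ae_of_all _ fun t => ?_)) (h.bd j)
    show (V' t - V t) ^ 2 = (V t - V' t) ^ 2
    ring

/-- An approximate solution for `(V', E')` is one for `(V, E)`; `K` is a constant for which the
local bound of `exists_local_bound` holds. -/
theorem Sol.perturb {a B n K δ : ℝ} (ha : 0 < a)
    (hK : ∀ V, UnifL2 a B V → ∀ E, |E| ≤ n → ∀ u v h, Sol V E u v h →
      ∀ j : ℤ, ∀ x ∈ Icc (j * a) ((j + 1) * a),
        u x ^ 2 ≤ K * (∫ t in cell a j, (u t ^ 2 + h t ^ 2)) ∧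
        v x ^ 2 ≤ K * (∫ t in cell a j, (u t ^ 2 + h t ^ 2)))
    (hK0 : 0 < K) {V V' : ℝ → ℝ} (hV' : UnifL2 a B V') (hc : CloseL2 a δ V V')
    {E E' : ℝ} (hE' : |E'| ≤ n) {u v h : ℝ → ℝ} (s : Sol V' E' u v h) :
    ∃ h', Sol V E u v h' ∧ ∫ t, h' t ^ 2 ≤ 3 * (∫ t, h t ^ 2) +
      3 * (K * δ) * ((∫ t, u t ^ 2) + ∫ t, h t ^ 2) + 3 * (E - E') ^ 2 * ∫ t, u t ^ 2 := by
  have hu2 : Integrable (fun t => u t ^ 2) := s.memu.integrable_sq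
  have hh2 : Integrable (fun t => h t ^ 2) := s.memh.integrable_sq
  have hmeas : AEStronglyMeasurable (fun t => (V t - V' t) * u t) volume :=
    hc.meas.mul s.contu.aestronglyMeasurable
  have hpt : ∀ j : ℤ, ∀ t ∈ cell a j, ((V t - V' t) * u t) ^ 2 ≤
      (K * ∫ t in cell a j, (u t ^ 2 + h t ^ 2)) * (V t - V' t) ^ 2 := by
    intro j t ht
    have := (hK V' hV' E' hE' u v h s j t (Ioc_subset_Icc_self ht)).1
    rw [mul_pow, mul_comm]
    gcongr
  have hnn : ∀ j, 0 ≤ ∫ t in cell a j, (u t ^ 2 + h t ^ 2) := fun j =>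
    integral_nonneg fun t => by positivity
  have hsqi : ∀ j, IntegrableOn (fun t => ((V t - V' t) * u t) ^ 2) (cell a j) := by
    intro j
    refine Integrable.mono' ((hc.int j).const_mul (K * ∫ t in cell a j, (u t ^ 2 + h t ^ 2)))
      (hmeas.pow 2).restrict ?_
    filter_upwards [ae_restrict_mem (measurableSet_cell a j)] with t ht
    rw [Real.norm_of_nonneg (sq_nonneg _)]
    exact hpt j t ht
  obtain ⟨hi, hle⟩ := integrable_of_cells ha (f := fun t => ((V t - V' t) * u t) ^ 2)
    (g := fun t => (K * δ) * (u t ^ 2 + h t ^ 2)) (fun t => sq_nonneg _) hsqi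
    ((hu2.add hh2).const_mul _) (by
      intro j
      rw [integral_const_mul]
      calc ∫ t in cell a j, ((V t - V' t) * u t) ^ 2
          ≤ ∫ t in cell a j, (K * ∫ t in cell a j, (u t ^ 2 + h t ^ 2)) * (V t - V' t) ^ 2 :=
            setIntegral_mono_on (hsqi j)
              (Integrable.const_mul (hc.int j) (K * ∫ t in cell a j, (u t ^ 2 + h t ^ 2)))
              (measurableSet_cell a j) (hpt j)
        _ = (K * ∫ t in cell a j, (u t ^ 2 + h t ^ 2)) * ∫ t in cell a j, (V t - V' t) ^ 2 := by
            rw [integral_const_mul]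
        _ ≤ (K * ∫ t in cell a j, (u t ^ 2 + h t ^ 2)) * δ := by
            have := hc.bd j
            have := hnn j
            gcongr
        _ = _ := by ring)
  have hm : MemLp (fun t => (V t - V' t) * u t) 2 volume :=
    (memLp_two_iff_integrable_sq hmeas).2 hi
  have hmem : MemLp (fun t => h t + (V t - V' t) * u t - (E - E') * u t) 2 volume :=
    (s.memh.add hm).sub (s.memu.const_mul _)
  refine ⟨fun t => h t + (V t - V' t) * u t - (E - E') * u t, ⟨s.der, ?_, s.memu, hmem⟩, ?_⟩
  · convert s.prim using 2 with t
    ring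
  · have e1 : ∫ t, (h t + (V t - V' t) * u t - (E - E') * u t) ^ 2 ≤
        ∫ t, (3 * h t ^ 2 + 3 * ((V t - V' t) * u t) ^ 2 + 3 * (E - E') ^ 2 * u t ^ 2) := by
      apply integral_mono hmem.integrable_sq
        (by exact ((hh2.const_mul 3).add (hi.const_mul 3)).add (hu2.const_mul _))
      intro t
      dsimp only
      nlinarith [sq_nonneg (h t - (V t - V' t) * u t), sq_nonneg (h t + (E - E') * u t),
        sq_nonneg ((V t - V' t) * u t + (E - E') * u t)]
    rw [integral_add (by exact (hh2.const_mul 3).add (hi.const_mul 3)) (hu2.const_mul _),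
      integral_add (hh2.const_mul 3) (hi.const_mul 3), integral_const_mul, integral_const_mul,
      integral_const_mul] at e1
    rw [integral_const_mul, integral_add hu2 hh2] at hle
    nlinarith

/-! ### Concatenated potentials -/

theorem contSpectrum_congr {V V' : ℝ → ℝ} (h : V =ᵐ[volume] V') :
    ContSpectrum V = ContSpectrum V' := by
  have : ∀ E g k, WeakSchrodingerEq V E g k ↔ WeakSchrodingerEq V' E g k := by
    intro E g k
    have e : ∀ φ : ℝ → ℝ, ∫ x, g x * (-(deriv (deriv φ) x) + (V x - E) * φ x)
        = ∫ x, g x * (-(deriv (deriv φ) x) + (V' x - E) * φ x) := fun φ => by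
      apply integral_congr_ae
      filter_upwards [h] with x hx
      rw [hx]
    simp only [WeakSchrodingerEq, e]
  simp only [ContSpectrum, this]

/-- The potential `lam · y^♮`. -/
def pot (a lam : ℝ) (y : ℤ → L2I a) : ℝ → ℝ := fun t => lam * aggC a y t

theorem aggC_eq {a : ℝ} (ha : 0 < a) (y : ℤ → L2I a) {j : ℤ} {t : ℝ}
    (ht : t ∈ Ico (j * a) ((j + 1) * a)) : aggC a y t = y j (t - j * a) := by
  have : ⌊t / a⌋ = j := by
    rw [Int.floor_eq_iff, le_div_iff₀ ha, div_lt_iff₀ ha]; exact ht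
  simp only [aggC, this]

theorem aggC_shift {a : ℝ} (ha : 0 < a) (y : ℤ → L2I a) (m : ℤ) (t : ℝ) :
    aggC a y (t + m * a) = aggC a (fun j => y (j + m)) t := by
  have h1 : (t + m * a) / a = t / a + m := by field_simp
  simp only [aggC, h1, Int.floor_add_intCast]
  congr 1
  push_cast; ring

theorem restrict_cell (a : ℝ) (j : ℤ) :
    volume.restrict (cell a j) = volume.restrict (Ico (j * a) ((j + 1) * a)) :=
  Measure.restrict_congr_set Ico_ae_eq_Ioc.symm

theorem measurePreserving_cell (a : ℝ) (j : ℤ) :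
    MeasurePreserving (fun t : ℝ => t - j * a) (volume.restrict (cell a j))
      (volume.restrict (Ico 0 a)) := by
  have h := (measurePreserving_sub_right volume ((j : ℝ) * a)).restrict_preimage
    (s := Ico 0 a) measurableSet_Ico
  have e : (fun t : ℝ => t - j * a) ⁻¹' Ico 0 a = Ico (j * a) ((j + 1) * a) := by
    ext t; simp only [mem_preimage, mem_Ico]
    constructor <;> rintro ⟨h1, h2⟩ <;> constructor <;> linarith
  rw [e] at h
  rw [restrict_cell]
  exact h

theorem norm_sq_L2I {a : ℝ} (f : L2I a) : ‖f‖ ^ 2 = ∫ x in Ico 0 a, f x ^ 2 := by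
  rw [← real_inner_self_eq_norm_sq, L2.inner_def]
  apply integral_congr_ae
  filter_upwards with x
  simp [pow_two]

theorem cell_integrable_shift {a : ℝ} (f : L2I a) (j : ℤ) :
    IntegrableOn (fun t => f (t - j * a) ^ 2) (cell a j) ∧
      ∫ t in cell a j, f (t - j * a) ^ 2 = ‖f‖ ^ 2 := by
  have hmp := measurePreserving_cell a j
  have hemb : MeasurableEmbedding (fun t : ℝ => t - j * a) :=
    (MeasurableEquiv.subRight ((j : ℝ) * a)).measurableEmbedding
  constructor
  · exact (hmp.integrable_comp_emb hemb (g := fun t => f t ^ 2)).2 (Lp.memLp f).integrable_sq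
  · rw [norm_sq_L2I]
    exact hmp.integral_comp hemb (fun t => f t ^ 2)

theorem aggC_ae {a : ℝ} (ha : 0 < a) (y : ℤ → L2I a) (j : ℤ) :
    ∀ᵐ t ∂(volume.restrict (cell a j)), aggC a y t = y j (t - j * a) := by
  rw [restrict_cell]
  filter_upwards [ae_restrict_mem measurableSet_Ico] with t ht
  exact aggC_eq ha y ht

theorem pot_sub_ae {a : ℝ} (ha : 0 < a) (lam lam' : ℝ) (y y' : ℤ → L2I a) (j : ℤ) :
    ∀ᵐ t ∂(volume.restrict (cell a j)),
      pot a lam y t - pot a lam' y' t = (lam • y j - lam' • y' j : L2I a) (t - j * a) := by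
  have hmp := (measurePreserving_cell a j).quasiMeasurePreserving
  have h1 := hmp.ae (Lp.coeFn_sub (lam • y j) (lam' • y' j))
  have h2 := hmp.ae (Lp.coeFn_smul lam (y j))
  have h3 := hmp.ae (Lp.coeFn_smul lam' (y' j))
  filter_upwards [h1, h2, h3, aggC_ae ha y j, aggC_ae ha y' j] with t h1 h2 h3 h4 h5
  rw [pot, pot, h4, h5, h1, Pi.sub_apply, h2, h3]
  simp

theorem aestronglyMeasurable_of_cells {a : ℝ} (ha : 0 < a) {f : ℝ → ℝ}
    (hf : ∀ j, AEStronglyMeasurable f (volume.restrict (cell a j))) :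
    AEStronglyMeasurable f volume := by
  rw [← Measure.restrict_univ (μ := volume), ← iUnion_cell ha]
  exact aestronglyMeasurable_iUnion_iff.2 hf

theorem ae_of_cells {a : ℝ} (ha : 0 < a) {p : ℝ → Prop}
    (h : ∀ j, ∀ᵐ t ∂(volume.restrict (cell a j)), p t) : ∀ᵐ t, p t := by
  rw [← Measure.restrict_univ (μ := volume), ← iUnion_cell ha]
  exact (ae_restrict_iUnion_iff _ _).2 h

theorem closeL2_pot {a : ℝ} (ha : 0 < a) {lam lam' δ : ℝ} {y y' : ℤ → L2I a}
    (h : ∀ j, ‖lam • y j - lam' • y' j‖ ^ 2 ≤ δ) :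
    CloseL2 a δ (pot a lam y) (pot a lam' y') where
  meas := aestronglyMeasurable_of_cells ha fun j => by
    refine AEStronglyMeasurable.congr ?_
      ((pot_sub_ae ha lam lam' y y' j).mono fun t ht => ht.symm)
    exact (Lp.aestronglyMeasurable _).comp_measurePreserving (measurePreserving_cell a j)
  int j := by
    refine (cell_integrable_shift (lam • y j - lam' • y' j) j).1.congr ?_
    filter_upwards [pot_sub_ae ha lam lam' y y' j] with t ht
    rw [ht]
  bd j := by
    refine le_of_eq_of_le ?_ (h j)
    rw [← (cell_integrable_shift (lam • y j - lam' • y' j) j).2]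
    apply integral_congr_ae
    filter_upwards [pot_sub_ae ha lam lam' y y' j] with t ht
    rw [ht]

theorem unifL2_pot {a : ℝ} (ha : 0 < a) {lam B : ℝ} {y : ℤ → L2I a}
    (h : ∀ j, ‖lam • y j‖ ^ 2 ≤ B) : UnifL2 a B (pot a lam y) := by
  have hc : CloseL2 a B (pot a lam y) (pot a 0 y) := closeL2_pot ha fun j => by simpa using h j
  have e : pot a 0 y = fun _ => 0 := by funext t; simp [pot]
  rw [e] at hc
  exact ⟨by simpa using hc.meas, by simpa using hc.int, by simpa using hc.bd⟩

theorem pot_ae_congr {a : ℝ} (ha : 0 < a) {lam lam' : ℝ} {y y' : ℤ → L2I a}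
    (h : ∀ j, lam • y j = lam' • y' j) : pot a lam y =ᵐ[volume] pot a lam' y' := by
  refine ae_of_cells ha fun j => ?_
  have h0 := (measurePreserving_cell a j).quasiMeasurePreserving.ae
    (Lp.coeFn_zero ℝ 2 (volume.restrict (Ico 0 a)))
  filter_upwards [pot_sub_ae ha lam lam' y y' j, h0] with t ht h0
  rw [h j, sub_self, h0] at ht
  exact sub_eq_zero.1 ht

/-! ### Integrals over grid intervals -/

/-- The integral of `f` over `[ia, ja]`. -/
def gi (a : ℝ) (f : ℝ → ℝ) (i j : ℤ) : ℝ := ∫ t in ((i : ℝ) * a)..((j : ℝ) * a), f t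

theorem gi_add {a : ℝ} {f : ℝ → ℝ} (hf : Integrable f) (i j k : ℤ) :
    gi a f i j + gi a f j k = gi a f i k :=
  intervalIntegral.integral_add_adjacent_intervals hf.intervalIntegrable hf.intervalIntegrable

theorem gi_nonneg {a : ℝ} (ha : 0 < a) {f : ℝ → ℝ} (hf : ∀ x, 0 ≤ f x) {i j : ℤ} (hij : i ≤ j) :
    0 ≤ gi a f i j := by
  have : (i : ℝ) ≤ j := by exact_mod_cast hij
  exact intervalIntegral.integral_nonneg (by nlinarith) fun t _ => hf t

theorem gi_mono {a : ℝ} (ha : 0 < a) {f : ℝ → ℝ} (hf : ∀ x, 0 ≤ f x) (hi : Integrable f)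
    {i j i' j' : ℤ} (h1 : i ≤ i') (h3 : j' ≤ j) :
    gi a f i' j' ≤ gi a f i j := by
  rw [← gi_add hi i i' j, ← gi_add hi i' j' j]
  have := gi_nonneg ha hf h1
  have := gi_nonneg ha hf h3
  linarith

theorem gi_cell {a : ℝ} (ha : 0 < a) (f : ℝ → ℝ) (j : ℤ) :
    gi a f j (j + 1) = ∫ t in cell a j, f t := by
  rw [← cell_integral ha, gi]; push_cast; rfl

theorem gi_add_fun {a : ℝ} {f g : ℝ → ℝ} (hf : Integrable f) (hg : Integrable g) (i j : ℤ) :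
    gi a (fun t => f t + g t) i j = gi a f i j + gi a g i j :=
  intervalIntegral.integral_add hf.intervalIntegrable hg.intervalIntegrable

theorem gi_hasSum {a : ℝ} (ha : 0 < a) {f : ℝ → ℝ} (hf : Integrable f) (q : ℤ) {P : ℤ}
    (hP : 0 < P) : HasSum (fun m : ℤ => gi a f (q + m * P) (q + (m + 1) * P)) (∫ t, f t) := by
  have hPa : 0 < (P : ℝ) * a := mul_pos (by exact_mod_cast hP) ha
  have h := hasSum_integral_iUnion (f := f) (μ := volume)
    (s := fun m : ℤ => Ioc (q * a + m • (P * a)) (q * a + (m + 1) • (P * a)))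
    (fun m => measurableSet_Ioc) (pairwise_disjoint_Ioc_add_zsmul _ _)
    hf.integrableOn
  rw [iUnion_Ioc_add_zsmul hPa, setIntegral_univ] at h
  refine h.congr_fun fun m => ?_
  rw [gi, intervalIntegral.integral_of_le]
  · simp only [zsmul_eq_mul]
    push_cast
    congr 3 <;> ring
  · push_cast; nlinarith

theorem gi_le_integral {a : ℝ} (ha : 0 < a) {f : ℝ → ℝ} (hf : ∀ x, 0 ≤ f x) (hi : Integrable f)
    {i j : ℤ} (hij : i ≤ j) : gi a f i j ≤ ∫ t, f t := by
  have : (i : ℝ) ≤ j := by exact_mod_cast hij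
  rw [gi, intervalIntegral.integral_of_le (by nlinarith)]
  exact setIntegral_le_integral hi (ae_of_all _ hf)

/-! ### Cutoffs -/

theorem deriv_zero_of_const_left {f f' : ℝ → ℝ} (hd : ∀ x, HasDerivAt f (f' x) x)
    (hc : Continuous f') {p c : ℝ} (h : ∀ x ≤ p, f x = c) : ∀ x ≤ p, f' x = 0 := by
  have h1 : Iio p ⊆ {x | f' x = 0} := fun x hx => by
    have h2 : f =ᶠ[nhds x] fun _ => c := by
      filter_upwards [Iio_mem_nhds hx] with z hz using h z (le_of_lt hz)
    exact (hd x).unique ((hasDerivAt_const x c).congr_of_eventuallyEq h2)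
  have h3 := closure_minimal h1 (isClosed_eq hc continuous_const)
  rw [closure_Iio] at h3
  exact fun x hx => h3 hx

theorem deriv_zero_of_const_right {f f' : ℝ → ℝ} (hd : ∀ x, HasDerivAt f (f' x) x)
    (hc : Continuous f') {p c : ℝ} (h : ∀ x, p ≤ x → f x = c) : ∀ x, p ≤ x → f' x = 0 := by
  have h1 : Ioi p ⊆ {x | f' x = 0} := fun x hx => by
    have h2 : f =ᶠ[nhds x] fun _ => c := by
      filter_upwards [Ioi_mem_nhds hx] with z hz using h z (le_of_lt hz)
    exact (hd x).unique ((hasDerivAt_const x c).congr_of_eventuallyEq h2)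
  have h3 := closure_minimal h1 (isClosed_eq hc continuous_const)
  rw [closure_Ioi] at h3
  exact fun x hx => h3 hx

/-- A `C²` function with values in `[0,1]`, equal to `1` on `[p+a, r-a]` and to `0` off `(p,r)`,
with first two derivatives `χ₁, χ₂` bounded by `C`. -/
structure Cutoff (a C p r : ℝ) (χ χ₁ χ₂ : ℝ → ℝ) : Prop where
  d1 : ∀ x, HasDerivAt χ (χ₁ x) x
  d2 : ∀ x, HasDerivAt χ₁ (χ₂ x) x
  c2 : Continuous χ₂
  nonneg : ∀ x, 0 ≤ χ x
  le_one : ∀ x, χ x ≤ 1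
  one : ∀ x ∈ Icc (p + a) (r - a), χ x = 1
  one1 : ∀ x ∈ Icc (p + a) (r - a), χ₁ x = 0
  one2 : ∀ x ∈ Icc (p + a) (r - a), χ₂ x = 0
  zero : ∀ x ∉ Ioo p r, χ x = 0
  zero1 : ∀ x ∉ Ioo p r, χ₁ x = 0
  zero2 : ∀ x ∉ Ioo p r, χ₂ x = 0
  b1 : ∀ x, |χ₁ x| ≤ C
  b2 : ∀ x, |χ₂ x| ≤ C

theorem exists_cutoff {a : ℝ} (ha : 0 < a) : ∃ C, 0 < C ∧ ∀ p r, p + 2 * a ≤ r →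
    ∃ χ χ₁ χ₂, Cutoff a C p r χ χ₁ χ₂ := by
  let η : ℝ → ℝ := fun x => Real.smoothTransition (x / a)
  have hη : ContDiff ℝ 2 η := Real.smoothTransition.contDiff.comp (contDiff_id.div_const a)
  have hη' : ContDiff ℝ 1 (deriv η) := by
    have : (2 : WithTop ℕ∞) = 1 + 1 := by norm_num
    rw [this, contDiff_succ_iff_deriv] at hη
    exact hη.2.2
  have e1 : ∀ x, HasDerivAt η (deriv η x) x := fun x =>
    (hη.differentiable (by norm_num) x).hasDerivAt
  have e2 : ∀ x, HasDerivAt (deriv η) (deriv (deriv η) x) x := fun x =>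
    (hη'.differentiable (by norm_num) x).hasDerivAt
  set η1 := deriv η with hη1
  set η2 := deriv η1 with hη2
  have cη : Continuous η := hη.continuous
  have c1 : Continuous η1 := hη'.continuous
  have c2 : Continuous η2 := hη'.continuous_deriv (by norm_num)
  have l0 : ∀ x ≤ 0, η x = 0 := fun x hx =>
    Real.smoothTransition.zero_of_nonpos (div_nonpos_of_nonpos_of_nonneg hx ha.le)
  have r0 : ∀ x, a ≤ x → η x = 1 := fun x hx =>
    Real.smoothTransition.one_of_one_le ((one_le_div ha).2 hx)
  have l1 := deriv_zero_of_const_left e1 c1 l0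
  have r1 := deriv_zero_of_const_right e1 c1 r0
  have l2 := deriv_zero_of_const_left e2 c2 l1
  have r2 := deriv_zero_of_const_right e2 c2 r1
  have n0 : ∀ x, 0 ≤ η x := fun x => Real.smoothTransition.nonneg _
  have n1 : ∀ x, η x ≤ 1 := fun x => Real.smoothTransition.le_one _
  have hbd : ∀ f : ℝ → ℝ, Continuous f → (∀ x ≤ 0, f x = 0) → (∀ x, a ≤ x → f x = 0) →
      ∃ C, 0 ≤ C ∧ ∀ x, |f x| ≤ C := by
    intro f hf hl hr
    obtain ⟨C, hC⟩ := (isCompact_Icc (a := 0) (b := a)).exists_bound_of_continuousOn hf.continuousOn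
    refine ⟨|C|, abs_nonneg _, fun x => ?_⟩
    by_cases hx : x ∈ Icc 0 a
    · exact (hC x hx).trans (le_abs_self _)
    · have : f x = 0 := by
        by_cases h : x ≤ 0
        · exact hl x h
        · exact hr x (by by_contra h'; exact hx ⟨by linarith, by linarith⟩)
      simp [this]
  obtain ⟨C1, hC1, hb1⟩ := hbd η1 c1 l1 r1
  obtain ⟨C2, hC2, hb2⟩ := hbd η2 c2 l2 r2
  refine ⟨2 * C1 + 2 * C2 + 2 * C1 * C1 + 1, by positivity, fun p r hpr => ?_⟩
  have d0 : ∀ x, HasDerivAt (fun x => η (x - p)) (η1 (x - p)) x := fun x =>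
    (e1 (x - p)).comp_sub_const x p
  have d0' : ∀ x, HasDerivAt (fun x => η (r - x)) (-η1 (r - x)) x := fun x =>
    (e1 (r - x)).comp_const_sub r x
  have d1 : ∀ x, HasDerivAt (fun x => η1 (x - p)) (η2 (x - p)) x := fun x =>
    (e2 (x - p)).comp_sub_const x p
  have d1' : ∀ x, HasDerivAt (fun x => η1 (r - x)) (-η2 (r - x)) x := fun x =>
    (e2 (r - x)).comp_const_sub r x
  have out : ∀ x ∉ Ioo p r, x - p ≤ 0 ∨ r - x ≤ 0 := fun x hx => by
    by_contra hcon
    push Not at hcon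
    exact hx ⟨by linarith, by linarith⟩
  refine ⟨fun x => η (x - p) * η (r - x),
    fun x => η1 (x - p) * η (r - x) + η (x - p) * (-η1 (r - x)),
    fun x => (η2 (x - p) * η (r - x) + η1 (x - p) * (-η1 (r - x))) +
      (η1 (x - p) * (-η1 (r - x)) + η (x - p) * (- -η2 (r - x))), ?_⟩
  refine ⟨fun x => (d0 x).fun_mul (d0' x), fun x => ((d1 x).fun_mul (d0' x)).fun_add
    ((d0 x).fun_mul (d1' x).fun_neg), by fun_prop, fun x => mul_nonneg (n0 _) (n0 _),
    fun x => mul_le_one₀ (n1 _) (n0 _) (n1 _), ?_, ?_, ?_, ?_, ?_, ?_, ?_, ?_⟩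
  · intro x hx
    simp [r0 (x - p) (by linarith [hx.1]), r0 (r - x) (by linarith [hx.2])]
  · intro x hx
    simp [r1 (x - p) (by linarith [hx.1]), r1 (r - x) (by linarith [hx.2])]
  · intro x hx
    simp [r1 (x - p) (by linarith [hx.1]), r2 (x - p) (by linarith [hx.1]),
      r2 (r - x) (by linarith [hx.2])]
  · intro x hx
    rcases out x hx with h | h <;> simp [l0 _ h]
  · intro x hx
    rcases out x hx with h | h <;> simp [l0 _ h, l1 _ h]
  · intro x hx
    rcases out x hx with h | h <;> simp [l0 _ h, l1 _ h, l2 _ h]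
  · intro x
    have h1 : |η1 (x - p) * η (r - x)| ≤ C1 := by
      rw [abs_mul, abs_of_nonneg (n0 _)]
      exact (mul_le_of_le_one_right (abs_nonneg _) (n1 _)).trans (hb1 _)
    have h2 : |η (x - p) * (-η1 (r - x))| ≤ C1 := by
      rw [abs_mul, abs_of_nonneg (n0 _), mul_comm, abs_neg]
      exact (mul_le_of_le_one_right (abs_nonneg _) (n1 _)).trans (hb1 _)
    have := abs_add_le (η1 (x - p) * η (r - x)) (η (x - p) * (-η1 (r - x)))
    nlinarith [mul_nonneg hC1 hC1]
  · intro x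
    have h1 : |η2 (x - p) * η (r - x)| ≤ C2 := by
      rw [abs_mul, abs_of_nonneg (n0 _)]
      exact (mul_le_of_le_one_right (abs_nonneg _) (n1 _)).trans (hb2 _)
    have h2 : |η (x - p) * (- -η2 (r - x))| ≤ C2 := by
      rw [abs_mul, abs_of_nonneg (n0 _), mul_comm, neg_neg]
      exact (mul_le_of_le_one_right (abs_nonneg _) (n1 _)).trans (hb2 _)
    have h3 : |η1 (x - p) * (-η1 (r - x))| ≤ C1 * C1 := by
      rw [abs_mul, abs_neg]
      exact mul_le_mul (hb1 _) (hb1 _) (abs_nonneg _) hC1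
    have := abs_add_le (η2 (x - p) * η (r - x) + η1 (x - p) * (-η1 (r - x)))
      (η1 (x - p) * (-η1 (r - x)) + η (x - p) * (- -η2 (r - x)))
    have := abs_add_le (η2 (x - p) * η (r - x)) (η1 (x - p) * (-η1 (r - x)))
    have := abs_add_le (η1 (x - p) * (-η1 (r - x))) (η (x - p) * (- -η2 (r - x)))
    linarith

theorem memLp_of_continuous_zero_off {f : ℝ → ℝ} (hf : Continuous f) {p r : ℝ}
    (h : ∀ x ∉ Ioo p r, f x = 0) : MemLp f 2 volume := by
  apply hf.memLp_of_hasCompactSupport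
  exact HasCompactSupport.intro isCompact_Icc fun x hx => h x fun h' => hx (Ioo_subset_Icc_self h')

theorem Sol.cutoff {a C p r : ℝ} {χ χ₁ χ₂ : ℝ → ℝ} (c : Cutoff a C p r χ χ₁ χ₂)
    {V : ℝ → ℝ} {E : ℝ} {u v h : ℝ → ℝ} (s : Sol V E u v h) :
    Sol V E (fun x => χ x * u x) (fun x => χ₁ x * u x + χ x * v x)
      (fun x => χ x * h x - 2 * χ₁ x * v x - χ₂ x * u x) := by
  have cχ1 : Continuous χ₁ := continuous_iff_continuousAt.2 fun x => (c.d2 x).continuousAt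
  have cχ : Continuous χ := continuous_iff_continuousAt.2 fun x => (c.d1 x).continuousAt
  have cu := s.contu
  have cv := s.contv
  refine ⟨fun x => (c.d1 x).fun_mul (s.der x), ?_, ?_, ?_⟩
  · have h1 := ((Prim.of_deriv c.d2 c.c2).mul s.primu).add ((Prim.of_deriv c.d1 cχ1).mul s.prim)
    convert h1 using 2 with t
    ring
  · exact memLp_of_continuous_zero_off (p := p) (r := r) (cχ.mul cu) fun x hx => by
      simp [c.zero x hx]
  · refine MemLp.sub (MemLp.sub ?_ ?_) ?_
    · refine s.memh.of_le (cχ.aestronglyMeasurable.mul s.memh.1) (ae_of_all _ fun x => ?_)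
      rw [norm_mul, Real.norm_of_nonneg (c.nonneg x)]
      exact mul_le_of_le_one_left (norm_nonneg _) (c.le_one x)
    · exact memLp_of_continuous_zero_off (p := p) (r := r) (by fun_prop) fun x hx => by
        simp [c.zero1 x hx]
    · have := c.c2
      exact memLp_of_continuous_zero_off (p := p) (r := r) (by fun_prop) fun x hx => by
        simp [c.zero2 x hx]

/-- A strong solution supported in `(p,r)` only sees the potential there. -/
theorem Sol.congr_pot {V V₀ : ℝ → ℝ} {E p r : ℝ} {u v h : ℝ → ℝ} (s : Sol V E u v h)
    (hu : ∀ x ∉ Ioo p r, u x = 0) (hV : ∀ᵐ x, x ∈ Ioo p r → V x = V₀ x) : Sol V₀ E u v h := by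
  refine ⟨s.der, s.prim.congr_ae ?_, s.memu, s.memh⟩
  filter_upwards [hV] with x hx
  by_cases h : x ∈ Ioo p r
  · rw [hx h]
  · simp [hu x h]

theorem gi_mono_fun {a : ℝ} (ha : 0 < a) {f g : ℝ → ℝ} (hf : Integrable f)
    (hg : ∀ x y, IntervalIntegrable g volume x y)
    {i j : ℤ} (hij : i ≤ j) (h : ∀ x ∈ Icc (i * a) (j * a), f x ≤ g x) :
    gi a f i j ≤ gi a g i j := by
  have : (i : ℝ) ≤ j := by exact_mod_cast hij
  exact intervalIntegral.integral_mono_on (by nlinarith) hf.intervalIntegrable (hg _ _) h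

theorem integral_eq_gi {a : ℝ} (ha : 0 < a) {f : ℝ → ℝ} {i j : ℤ} (hij : i ≤ j)
    (h : ∀ x ∉ Ioo (i * a) (j * a), f x = 0) : ∫ t, f t = gi a f i j := by
  have : (i : ℝ) ≤ j := by exact_mod_cast hij
  rw [gi, intervalIntegral.integral_of_le (by nlinarith)]
  refine (setIntegral_eq_integral_of_forall_compl_eq_zero fun x hx => h x fun hmem => ?_).symm
  exact hx (Ioo_subset_Ioc_self hmem)

/-- Cutting off an approximate solution to a grid interval creates errors in the two extreme cells
only. -/
theorem exists_grid_cutoff {a : ℝ} (ha : 0 < a) (B n : ℝ) : ∃ C, 0 < C ∧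
    ∀ V, UnifL2 a B V → ∀ E, |E| ≤ n → ∀ u v h, Sol V E u v h → ∀ i j : ℤ, i + 2 ≤ j →
      ∃ χ v₂ h₂ : ℝ → ℝ, (∀ x, 0 ≤ χ x) ∧ (∀ x, χ x ≤ 1) ∧
        (∀ x ∈ Icc ((i + 1 : ℤ) * a) ((j - 1 : ℤ) * a), χ x = 1) ∧
        (∀ x ∉ Ioo (i * a) (j * a), χ x = 0 ∧ v₂ x = 0 ∧ h₂ x = 0) ∧
        Sol V E (fun x => χ x * u x) v₂ h₂ ∧
        ∫ t, h₂ t ^ 2 ≤ 3 * gi a (fun t => h t ^ 2) i j +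
          C * (gi a (fun t => u t ^ 2 + h t ^ 2) i (i + 1) +
            gi a (fun t => u t ^ 2 + h t ^ 2) (j - 1) j) := by
  obtain ⟨C, hC, hcut⟩ := exists_cutoff ha
  obtain ⟨K, hK, hloc⟩ := exists_local_bound ha B n
  refine ⟨30 * C ^ 2 * K * a, by positivity, ?_⟩
  intro V hV E hE u v h s i j hij
  have hijR : (i : ℝ) + 2 ≤ j := by exact_mod_cast hij
  obtain ⟨χ, χ₁, χ₂, c⟩ := hcut (i * a) (j * a) (by nlinarith)
  have s2 := s.cutoff c
  set h₂ : ℝ → ℝ := fun x => χ x * h x - 2 * χ₁ x * v x - χ₂ x * u x with hh₂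
  have i2 : Integrable fun t => h₂ t ^ 2 := s2.memh.integrable_sq
  have iu : Integrable fun t => u t ^ 2 := s.memu.integrable_sq
  have ih : Integrable fun t => h t ^ 2 := s.memh.integrable_sq
  have hz : ∀ x ∉ Ioo (i * a) (j * a), h₂ x = 0 := fun x hx => by
    simp [hh₂, c.zero x hx, c.zero1 x hx, c.zero2 x hx]
  refine ⟨χ, _, h₂, c.nonneg, c.le_one, ?_, ?_, s2, ?_⟩
  · intro x hx
    apply c.one
    constructor
    · have := hx.1; push_cast at this; linarith
    · have := hx.2; push_cast at this; linarith
  · intro x hx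
    exact ⟨c.zero x hx, by simp [c.zero x hx, c.zero1 x hx], hz x hx⟩
  have hχ2 : ∀ x, (χ x * h x) ^ 2 ≤ h x ^ 2 := fun x => by
    rw [mul_pow]
    exact mul_le_of_le_one_left (sq_nonneg _) (pow_le_one₀ (c.nonneg x) (c.le_one x))
  have hedge : ∀ k : ℤ, gi a (fun t => h₂ t ^ 2) k (k + 1) ≤
      3 * gi a (fun t => h t ^ 2) k (k + 1) +
      (30 * C ^ 2 * K * a) * gi a (fun t => u t ^ 2 + h t ^ 2) k (k + 1) := by
    intro k
    set S := gi a (fun t => u t ^ 2 + h t ^ 2) k (k + 1) with hS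
    have h1 : gi a (fun t => h₂ t ^ 2) k (k + 1) ≤
        gi a (fun t => 3 * h t ^ 2 + 30 * C ^ 2 * K * S) k (k + 1) := by
      apply gi_mono_fun ha i2 (fun x y => ((ih.const_mul 3).intervalIntegrable).add (by simp))
        (by lia)
      intro x hx
      push_cast at hx
      obtain ⟨l1, l2⟩ := hloc V hV E hE u v h s k x hx
      rw [← gi_cell ha, ← hS] at l1 l2
      have b1 : χ₁ x ^ 2 ≤ C ^ 2 := by rw [← sq_abs]; gcongr; exact c.b1 x
      have b2 : χ₂ x ^ 2 ≤ C ^ 2 := by rw [← sq_abs]; gcongr; exact c.b2 x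
      have e1 : (χ₁ x * v x) ^ 2 ≤ C ^ 2 * (K * S) := by rw [mul_pow]; gcongr
      have e2 : (χ₂ x * u x) ^ 2 ≤ C ^ 2 * (K * S) := by rw [mul_pow]; gcongr
      have e3 := hχ2 x
      have e4 : h₂ x ^ 2 ≤ 3 * (χ x * h x) ^ 2 + 12 * (χ₁ x * v x) ^ 2 + 3 * (χ₂ x * u x) ^ 2 := by
        simp only [hh₂]
        nlinarith [sq_nonneg (χ x * h x + 2 * (χ₁ x * v x)), sq_nonneg (χ x * h x + χ₂ x * u x),
          sq_nonneg (2 * (χ₁ x * v x) - χ₂ x * u x)]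
      have e5 : 0 ≤ C ^ 2 * (K * S) := (sq_nonneg _).trans e1
      nlinarith
    have h2 : gi a (fun t => 3 * h t ^ 2 + 30 * C ^ 2 * K * S) k (k + 1) =
        3 * gi a (fun t => h t ^ 2) k (k + 1) + (30 * C ^ 2 * K * a) * S := by
      rw [gi, intervalIntegral.integral_add (ih.const_mul 3).intervalIntegrable (by simp),
        intervalIntegral.integral_const_mul, intervalIntegral.integral_const, gi]
      push_cast
      simp only [smul_eq_mul]
      ring
    linarith
  have hmid : gi a (fun t => h₂ t ^ 2) (i + 1) (j - 1) ≤
      3 * gi a (fun t => h t ^ 2) (i + 1) (j - 1) := by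
    have h1 : gi a (fun t => h₂ t ^ 2) (i + 1) (j - 1) ≤
        gi a (fun t => 3 * h t ^ 2) (i + 1) (j - 1) := by
      apply gi_mono_fun ha i2 (fun x y => (ih.const_mul 3).intervalIntegrable) (by lia)
      intro x hx
      push_cast at hx
      have hx' : x ∈ Icc (i * a + a) (j * a - a) :=
        ⟨by have := hx.1; linarith, by have := hx.2; linarith⟩
      have e1 := hχ2 x
      simp only [hh₂, c.one1 x hx', c.one2 x hx']
      nlinarith [sq_nonneg (h x)]
    refine h1.trans_eq ?_
    rw [gi, intervalIntegral.integral_const_mul, gi]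
  rw [integral_eq_gi ha (by lia : i ≤ j) fun x hx => by simp [hz x hx], ← gi_add i2 i (i + 1) j,
    ← gi_add i2 (i + 1) (j - 1) j, ← gi_add ih i (i + 1) j, ← gi_add ih (i + 1) (j - 1) j]
  have e1 := hedge i
  have e2 := hedge (j - 1)
  rw [sub_add_cancel] at e2
  linarith

/-! ### Decay inside a grid interval where the potential has a gap -/

/-- If `V` agrees with `V₀` on `[ia, ja]` and `E` is quantitatively outside the spectrum of `V₀`,
approximate solutions for `V` decay exponentially towards the middle of that interval. -/
theorem exists_decay {a : ℝ} (ha : 0 < a) (B n c₀ : ℝ) (hc₀ : 0 < c₀) : ∃ C, 0 < C ∧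
    ∀ V V₀, UnifL2 a B V → ∀ E, |E| ≤ n → LowS V₀ E c₀ → ∀ u v h, Sol V E u v h →
      ∀ (k : ℕ) (i j : ℤ), i + 2 * k ≤ j →
        (∀ᵐ x, x ∈ Ioo (i * a) (j * a) → V x = V₀ x) →
        gi a (fun t => u t ^ 2) (i + k) (j - k) ≤
          (C / (1 + C)) ^ k * gi a (fun t => u t ^ 2) i j + C * gi a (fun t => h t ^ 2) i j := by
  obtain ⟨C, hC, hcut⟩ := exists_grid_cutoff ha B n
  refine ⟨c₀ * (3 + C), by positivity, ?_⟩
  intro V V₀ hV E hE hlow u v h s k i j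
  set C1 := c₀ * (3 + C) with hC1
  have hC1p : 0 < C1 := by positivity
  have iu : Integrable fun t => u t ^ 2 := s.memu.integrable_sq
  have ih : Integrable fun t => h t ^ 2 := s.memh.integrable_sq
  induction k with
  | zero =>
    intro hij hVV
    have := gi_nonneg ha (fun t => sq_nonneg (h t)) (i := i) (j := j) (by simpa using hij)
    simp only [Nat.cast_zero, add_zero, sub_zero, pow_zero, one_mul]
    nlinarith
  | succ k IH =>
    intro hij hVV
    push_cast at hij
    have IH := IH (by lia) hVV
    obtain ⟨χ, v₂, h₂, hχ0, hχ1, hone, hzero, s2, hbd⟩ :=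
      hcut V hV E hE u v h s (i + k) (j - k) (by lia)
    have hikR : (i : ℝ) * a ≤ (i + k : ℤ) * a := by push_cast; nlinarith [Nat.cast_nonneg (α := ℝ) k]
    have hjkR : (j - k : ℤ) * a ≤ (j : ℝ) * a := by push_cast; nlinarith [Nat.cast_nonneg (α := ℝ) k]
    have s3 : Sol V₀ E (fun x => χ x * u x) v₂ h₂ :=
      s2.congr_pot (p := (i + k : ℤ) * a) (r := (j - k : ℤ) * a)
        (fun x hx => by simp [(hzero x hx).1])
        (hVV.mono fun x hx hx' => hx ⟨by linarith [hx'.1], by linarith [hx'.2]⟩)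
    have hl := hlow _ _ _ s3
    have hlower : gi a (fun t => u t ^ 2) (i + k + 1) (j - k - 1) ≤ ∫ t, (χ t * u t) ^ 2 := by
      refine le_trans ?_ (gi_le_integral ha (fun t => sq_nonneg _) s2.memu.integrable_sq
        (i := i + k + 1) (j := j - k - 1) (by lia))
      apply gi_mono_fun ha iu (fun x y => s2.memu.integrable_sq.intervalIntegrable) (by lia)
      intro x hx
      rw [hone x hx, one_mul]
    -- the cells lost when passing to the smaller interval
    have split : ∀ f : ℝ → ℝ, Integrable f → gi a f (i + k) (i + k + 1) +
        gi a f (j - k - 1) (j - k) = gi a f (i + k) (j - k) - gi a f (i + k + 1) (j - k - 1) := by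
      intro f hf
      rw [← gi_add hf (i + k) (i + k + 1) (j - k), ← gi_add hf (i + k + 1) (j - k - 1) (j - k)]
      ring
    rw [split (fun t => u t ^ 2 + h t ^ 2) (iu.add ih), gi_add_fun iu ih, gi_add_fun iu ih] at hbd
    have hh1 := gi_mono ha (fun t => sq_nonneg (h t)) ih (i := i) (i' := i + k) (j := j)
      (j' := j - k) (by lia) (by lia)
    have hh2 := gi_nonneg ha (fun t => sq_nonneg (h t)) (i := i + k + 1) (j := j - k - 1) (by lia)
    have hh0 := gi_nonneg ha (fun t => sq_nonneg (h t)) (i := i) (j := j) (by lia)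
    have hu0 := gi_nonneg ha (fun t => sq_nonneg (u t)) (i := i) (j := j) (by lia)
    have hmon := gi_mono ha (fun t => sq_nonneg (u t)) iu (i := i + k) (i' := i + k + 1)
      (j := j - k) (j' := j - k - 1) (by lia) (by lia)
    have e1 : (i + ((k + 1 : ℕ) : ℤ)) = i + k + 1 := by push_cast; ring
    have e2 : (j - ((k + 1 : ℕ) : ℤ)) = j - k - 1 := by push_cast; ring
    rw [e1, e2]
    set A := gi a (fun t => u t ^ 2) (i + k + 1) (j - k - 1)
    set A0 := gi a (fun t => u t ^ 2) (i + k) (j - k)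
    set b := gi a (fun t => h t ^ 2) i j
    set bk := gi a (fun t => h t ^ 2) (i + k) (j - k)
    set bk1 := gi a (fun t => h t ^ 2) (i + k + 1) (j - k - 1)
    set U := gi a (fun t => u t ^ 2) i j
    have key : A ≤ C1 * (A0 - A) + C1 * b := by
      have h1 : ∫ t, h₂ t ^ 2 ≤ (3 + C) * (A0 - A) + (3 + C) * b := by nlinarith
      calc A ≤ c₀ * ∫ t, h₂ t ^ 2 := hlower.trans hl
        _ ≤ c₀ * ((3 + C) * (A0 - A) + (3 + C) * b) := by gcongr
        _ = _ := by rw [hC1]; ring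
    have hθ : A ≤ C1 / (1 + C1) * (A0 + b) := by
      rw [div_mul_eq_mul_div, le_div_iff₀ (by positivity)]; linarith
    calc A ≤ C1 / (1 + C1) * (A0 + b) := hθ
      _ ≤ C1 / (1 + C1) * (((C1 / (1 + C1)) ^ k * U + C1 * b) + b) := by gcongr
      _ = _ := by
        rw [pow_succ]; field_simp; ring

/-! ### Localization of approximate solutions -/

set_option maxHeartbeats 1000000 in
/-- If, in every period `P`, there is a grid block of length `2k+2` on which `V` coincides with a
potential `V₀` having a gap at `E`, then an approximate solution can be cut in the middle of these
blocks into pieces, and one of the pieces is again a good approximate solution. -/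
theorem exists_localized {a : ℝ} (ha : 0 < a) (B n c₀ : ℝ) (hc₀ : 0 < c₀) : ∃ C θ, 0 < C ∧
    0 < θ ∧ θ < 1 ∧
    ∀ V V₀, UnifL2 a B V → ∀ E, |E| ≤ n → LowS V₀ E c₀ → ∀ u v h, Sol V E u v h →
      ∀ (k : ℕ) (b P : ℤ), 2 * k + 2 ≤ P →
        (∀ m : ℤ, ∀ᵐ x, x ∈ Ioo ((b + m * P : ℤ) * a) ((b + m * P + (2 * k + 2) : ℤ) * a) →
          V x = V₀ x) →
        ∫ t, h t ^ 2 < θ ^ k * ∫ t, u t ^ 2 →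
        ∃ m : ℤ, ∃ u₂ v₂ h₂, Sol V E u₂ v₂ h₂ ∧
          (∀ x ∉ Ioo ((b + k + m * P : ℤ) * a) ((b + k + (m + 1) * P + 2 : ℤ) * a),
            u₂ x = 0 ∧ v₂ x = 0 ∧ h₂ x = 0) ∧
          ∫ t, h₂ t ^ 2 < C * θ ^ k * ∫ t, u₂ t ^ 2 := by
  obtain ⟨C0, hC0, hcut⟩ := exists_grid_cutoff ha B n
  obtain ⟨C1, hC1, hdec⟩ := exists_decay ha B n c₀ hc₀
  have hθ1 : C1 / (1 + C1) < 1 := by rw [div_lt_one (by positivity)]; linarith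
  refine ⟨9 + 2 * C0 * (C1 + 2), C1 / (1 + C1), by positivity, by positivity, hθ1, ?_⟩
  set θ := C1 / (1 + C1) with hθdef
  have hθ : 0 < θ := by positivity
  intro V V₀ hV E hE hlow u v h s k b P hP hagree hlt
  by_contra hcon
  have iu : Integrable fun t => u t ^ 2 := s.memu.integrable_sq
  have ih : Integrable fun t => h t ^ 2 := s.memh.integrable_sq
  have nu : ∀ t, 0 ≤ u t ^ 2 := fun t => sq_nonneg _
  have nh : ∀ t, 0 ≤ h t ^ 2 := fun t => sq_nonneg _
  have hPpos : 0 < P := by lia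
  set U : ℤ → ℝ := fun m => gi a (fun t => u t ^ 2) (b + m * P) (b + (m + 1) * P) with hU
  set H : ℤ → ℝ := fun m => gi a (fun t => h t ^ 2) (b + m * P) (b + (m + 1) * P) with hH
  set U' : ℤ → ℝ := fun m =>
    gi a (fun t => u t ^ 2) ((b + k + 1) + m * P) ((b + k + 1) + (m + 1) * P) with hU'
  set H' : ℤ → ℝ := fun m =>
    gi a (fun t => h t ^ 2) ((b + k + 1) + m * P) ((b + k + 1) + (m + 1) * P) with hH'
  have sU : HasSum U (∫ t, u t ^ 2) := gi_hasSum ha iu b hPpos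
  have sH : HasSum H (∫ t, h t ^ 2) := gi_hasSum ha ih b hPpos
  have sU' : HasSum U' (∫ t, u t ^ 2) := gi_hasSum ha iu (b + k + 1) hPpos
  have sH' : HasSum H' (∫ t, h t ^ 2) := gi_hasSum ha ih (b + k + 1) hPpos
  have sU1 : HasSum (fun m => U (m + 1)) (∫ t, u t ^ 2) :=
    (Equiv.addRight (1 : ℤ)).hasSum_iff.2 sU
  have sH1 : HasSum (fun m => H (m + 1)) (∫ t, h t ^ 2) :=
    (Equiv.addRight (1 : ℤ)).hasSum_iff.2 sH
  -- the two middle cells of each block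
  set X : ℤ → ℝ := fun m => gi a (fun t => u t ^ 2) (b + k + m * P) (b + k + m * P + 2) with hX
  set Z : ℤ → ℝ := fun m => gi a (fun t => h t ^ 2) (b + k + m * P) (b + k + m * P + 2) with hZ
  have hZH : ∀ m, Z m ≤ H m := fun m => gi_mono ha nh ih (by lia) (by lia)
  have hXU : ∀ m, X m ≤ θ ^ k * U m + C1 * H m := by
    intro m
    have h1 := hdec V V₀ hV E hE hlow u v h s k (b + m * P) (b + m * P + (2 * k + 2)) (by lia)
      (hagree m)
    have e1 : b + m * P + k = b + k + m * P := by ring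
    have e2 : b + m * P + (2 * (k : ℤ) + 2) - k = b + k + m * P + 2 := by ring
    rw [e1, e2] at h1
    have h2 : gi a (fun t => u t ^ 2) (b + m * P) (b + m * P + (2 * k + 2)) ≤ U m :=
      gi_mono ha nu iu le_rfl (by lia)
    have h3 : gi a (fun t => h t ^ 2) (b + m * P) (b + m * P + (2 * k + 2)) ≤ H m :=
      gi_mono ha nh ih le_rfl (by lia)
    calc X m ≤ _ := h1
      _ ≤ _ := by gcongr
  have step : ∀ m, (9 + 2 * C0 * (C1 + 2)) * θ ^ k * U' m ≤
      3 * (H m + H' m + H (m + 1)) + C0 * ((θ ^ k * U m + (C1 + 1) * H m) +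
        (θ ^ k * U (m + 1) + (C1 + 1) * H (m + 1))) := by
    intro m
    obtain ⟨χ, v₂, h₂, hχ0, hχ1, hone, hzero, s2, hbd⟩ :=
      hcut V hV E hE u v h s (b + k + m * P) (b + k + (m + 1) * P + 2) (by lia)
    have hneg : (9 + 2 * C0 * (C1 + 2)) * θ ^ k * ∫ t, (χ t * u t) ^ 2 ≤ ∫ t, h₂ t ^ 2 := by
      by_contra hlt2
      push Not at hlt2
      exact hcon ⟨m, _, v₂, h₂, s2, fun x hx => by
        obtain ⟨z1, z2, z3⟩ := hzero x hx
        exact ⟨by simp [z1], z2, z3⟩, hlt2⟩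
    have e1 : b + k + m * P + 1 = (b + k + 1) + m * P := by ring
    have e2 : b + k + (m + 1) * P + 2 - 1 = (b + k + 1) + (m + 1) * P := by ring
    have hlower : U' m ≤ ∫ t, (χ t * u t) ^ 2 := by
      refine le_trans ?_ (gi_le_integral ha (fun t => sq_nonneg _) s2.memu.integrable_sq
        (i := (b + k + 1) + m * P) (j := (b + k + 1) + (m + 1) * P) (by lia))
      apply gi_mono_fun ha iu (fun x y => s2.memu.integrable_sq.intervalIntegrable) (by lia)
      intro x hx
      rw [hone x (by rw [e1, e2]; exact hx), one_mul]
    rw [e1, e2, gi_add_fun iu ih, gi_add_fun iu ih,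
      ← gi_add ih (b + k + m * P) ((b + k + 1) + m * P) (b + k + (m + 1) * P + 2),
      ← gi_add ih ((b + k + 1) + m * P) ((b + k + 1) + (m + 1) * P) (b + k + (m + 1) * P + 2)]
      at hbd
    have l1 : gi a (fun t => u t ^ 2) (b + k + m * P) ((b + k + 1) + m * P) ≤ X m :=
      gi_mono ha nu iu le_rfl (by lia)
    have l2 : gi a (fun t => h t ^ 2) (b + k + m * P) ((b + k + 1) + m * P) ≤ Z m :=
      gi_mono ha nh ih le_rfl (by lia)
    have l3 : gi a (fun t => u t ^ 2) ((b + k + 1) + (m + 1) * P) (b + k + (m + 1) * P + 2)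
        ≤ X (m + 1) := gi_mono ha nu iu (by lia) (by lia)
    have l4 : gi a (fun t => h t ^ 2) ((b + k + 1) + (m + 1) * P) (b + k + (m + 1) * P + 2)
        ≤ Z (m + 1) := gi_mono ha nh ih (by lia) (by lia)
    have m1 := hXU m
    have m2 := hXU (m + 1)
    have m3 := hZH m
    have m4 := hZH (m + 1)
    have hpos : 0 ≤ (9 + 2 * C0 * (C1 + 2)) * θ ^ k := by positivity
    calc (9 + 2 * C0 * (C1 + 2)) * θ ^ k * U' m
        ≤ (9 + 2 * C0 * (C1 + 2)) * θ ^ k * ∫ t, (χ t * u t) ^ 2 := by gcongr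
      _ ≤ ∫ t, h₂ t ^ 2 := hneg
      _ ≤ _ := hbd
      _ ≤ 3 * (Z m + (H' m + Z (m + 1))) + C0 * ((X m + Z m) + (X (m + 1) + Z (m + 1))) := by
          gcongr
      _ ≤ 3 * (H m + (H' m + H (m + 1))) + C0 * (((θ ^ k * U m + C1 * H m) + H m) +
          ((θ ^ k * U (m + 1) + C1 * H (m + 1)) + H (m + 1))) := by gcongr
      _ = _ := by ring
  have tot := hasSum_le step (sU'.mul_left _)
    ((((sH.add sH').add sH1).mul_left 3).add ((((sU.mul_left (θ ^ k)).add
      (sH.mul_left (C1 + 1))).add ((sU1.mul_left (θ ^ k)).add (sH1.mul_left (C1 + 1)))).mul_left C0))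
  have hcoef : 0 < 9 + 2 * C0 * (C1 + 1) := by positivity
  have hfin := mul_lt_mul_of_pos_left hlt hcoef
  clear_value θ
  clear * - tot hfin
  generalize (∫ t, u t ^ 2) = I at tot hfin
  generalize (∫ t, h t ^ 2) = J at tot hfin
  generalize θ ^ k = T at tot hfin
  linarith

/-! ### Translation, scaling and almost orthogonality of approximate solutions -/

theorem Sol.translate {V : ℝ → ℝ} {E : ℝ} {u v h : ℝ → ℝ} (s : Sol V E u v h) (τ : ℝ) :
    Sol (fun x => V (x + τ)) E (fun x => u (x + τ)) (fun x => v (x + τ)) (fun x => h (x + τ)) := by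
  refine ⟨fun x => ?_, ?_, ?_, ?_⟩
  · simpa using (s.der (x + τ)).comp_add_const x τ
  · exact s.prim.comp_add τ
  · exact s.memu.comp_measurePreserving (measurePreserving_add_right volume τ)
  · exact s.memh.comp_measurePreserving (measurePreserving_add_right volume τ)

theorem Sol.smul {V : ℝ → ℝ} {E : ℝ} {u v h : ℝ → ℝ} (s : Sol V E u v h) (c : ℝ) :
    Sol V E (fun x => c * u x) (fun x => c * v x) (fun x => c * h x) := by
  refine ⟨fun x => (s.der x).const_mul c, ?_, s.memu.const_mul c, s.memh.const_mul c⟩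
  convert s.prim.const_mul c using 2 with t
  ring

theorem inner_toLp_toLp {f g : ℝ → ℝ} (hf : MemLp f 2 volume) (hg : MemLp g 2 volume) :
    inner ℝ (hf.toLp f : L2R) (hg.toLp g) = ∫ t, f t * g t := by
  rw [L2.inner_def]
  apply integral_congr_ae
  filter_upwards [hf.coeFn_toLp, hg.coeFn_toLp] with x hx hx'
  simp [hx, hx', mul_comm]

theorem sq_integral_mul_le {f g : ℝ → ℝ} (hf : MemLp f 2 volume) (hg : MemLp g 2 volume) :
    (∫ t, f t * g t) ^ 2 ≤ (∫ t, f t ^ 2) * ∫ t, g t ^ 2 := by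
  rw [← norm_sq_toLp hf, ← norm_sq_toLp hg, ← inner_toLp_toLp hf hg, ← mul_pow, ← sq_abs]
  exact pow_le_pow_left₀ (abs_nonneg _) (abs_real_inner_le_norm _ _) 2

/-- Green's formula for two compactly supported approximate solutions. -/
theorem Sol.green {V : ℝ → ℝ} {E₁ E₂ : ℝ} {u₁ v₁ h₁ u₂ v₂ h₂ : ℝ → ℝ}
    (s₁ : Sol V E₁ u₁ v₁ h₁) (s₂ : Sol V E₂ u₂ v₂ h₂) {p r : ℝ}
    (z₁ : ∀ x ∉ Ioo p r, u₁ x = 0 ∧ v₁ x = 0 ∧ h₁ x = 0) :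
    (E₁ - E₂) * ∫ t, u₁ t * u₂ t = (∫ t, u₁ t * h₂ t) - ∫ t, h₁ t * u₂ t := by
  have hp := (s₁.primu.mul s₂.prim).add ((s₁.prim.mul s₂.primu).const_mul (-1))
  have i0 : Integrable fun t => u₁ t * u₂ t := s₁.memu.integrable_mul s₂.memu
  have i1 : Integrable fun t => u₁ t * h₂ t := s₁.memu.integrable_mul s₂.memh
  have i2 : Integrable fun t => h₁ t * u₂ t := s₁.memh.integrable_mul s₂.memu
  have habs : ∀ {x : ℝ}, x ∈ Ioo p r → |x| < max |p| |r| := fun {x} hx =>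
    abs_lt.2 ⟨by linarith [hx.1, neg_abs_le p, le_max_left |p| |r|],
      by linarith [hx.2, le_abs_self r, le_max_right |p| |r|]⟩
  have h0 := hp.integral_eq_zero (max |p| |r|) ?_ ?_
  · have e : ∀ t, v₁ t * v₂ t + u₁ t * ((V t - E₂) * u₂ t - h₂ t) +
        -1 * (((V t - E₁) * u₁ t - h₁ t) * u₂ t + v₁ t * v₂ t) =
        ((E₁ - E₂) * (u₁ t * u₂ t) - u₁ t * h₂ t) + h₁ t * u₂ t := fun t => by ring
    simp only [e] at h0
    rw [integral_add (by exact (i0.const_mul _).sub i1) i2, integral_sub (i0.const_mul _) i1,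
      integral_const_mul] at h0
    linarith
  · intro x hx
    have := z₁ x fun h' => (habs h').not_ge hx
    simp [this.1, this.2.1]
  · intro x hx
    have := z₁ x fun h' => (habs h').not_ge hx.le
    simp [this.1, this.2.1, this.2.2]

/-- `E` is an approximate eigenvalue, with error `γ`, of `-d²/dx² + V`, with a normalized
approximate eigenfunction supported in `(p,r)`. -/
def HasMode (V : ℝ → ℝ) (p r γ E : ℝ) : Prop :=
  ∃ u v h, Sol V E u v h ∧ (∀ x ∉ Ioo p r, u x = 0 ∧ v x = 0 ∧ h x = 0) ∧
    ∫ t, u t ^ 2 = 1 ∧ ∫ t, h t ^ 2 ≤ γ ^ 2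

theorem hasMode_of_lt {V : ℝ → ℝ} {p r γ E : ℝ} {u v h : ℝ → ℝ} (s : Sol V E u v h)
    (hz : ∀ x ∉ Ioo p r, u x = 0 ∧ v x = 0 ∧ h x = 0)
    (hlt : ∫ t, h t ^ 2 < γ ^ 2 * ∫ t, u t ^ 2) : HasMode V p r γ E := by
  have hh : 0 ≤ ∫ t, h t ^ 2 := integral_nonneg fun t => sq_nonneg _
  have hu0 : 0 ≤ ∫ t, u t ^ 2 := integral_nonneg fun t => sq_nonneg _
  have hu : 0 < ∫ t, u t ^ 2 := by
    rcases hu0.eq_or_lt with h0 | h0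
    · rw [← h0] at hlt; simp at hlt; linarith
    · exact h0
  set I := ∫ t, u t ^ 2 with hI
  have hc : (Real.sqrt I)⁻¹ ^ 2 = I⁻¹ := by rw [inv_pow, Real.sq_sqrt hu0]
  refine ⟨_, _, _, s.smul (Real.sqrt I)⁻¹, fun x hx => ?_, ?_, ?_⟩
  · obtain ⟨h1, h2, h3⟩ := hz x hx
    simp [h1, h2, h3]
  · simp only [mul_pow, hc]
    rw [integral_const_mul, ← hI, inv_mul_cancel₀ hu.ne']
  · simp only [mul_pow, hc]
    rw [integral_const_mul, inv_mul_le_iff₀ hu]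
    linarith

/-- Approximate eigenfunctions of well separated approximate eigenvalues are almost orthogonal. -/
theorem Sol.almost_orthogonal {V : ℝ → ℝ} {E₁ E₂ p r γ d : ℝ} {u₁ v₁ h₁ u₂ v₂ h₂ : ℝ → ℝ}
    (s₁ : Sol V E₁ u₁ v₁ h₁) (s₂ : Sol V E₂ u₂ v₂ h₂)
    (z₁ : ∀ x ∉ Ioo p r, u₁ x = 0 ∧ v₁ x = 0 ∧ h₁ x = 0)
    (n₁ : ∫ t, u₁ t ^ 2 = 1) (n₂ : ∫ t, u₂ t ^ 2 = 1)
    (b₁ : ∫ t, h₁ t ^ 2 ≤ γ ^ 2) (b₂ : ∫ t, h₂ t ^ 2 ≤ γ ^ 2) (hγ : 0 ≤ γ) (hd : 0 < d)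
    (hE : d ≤ |E₁ - E₂|) : |∫ t, u₁ t * u₂ t| ≤ 2 * γ / d := by
  have h0 := s₁.green s₂ z₁
  have h1 := sq_integral_mul_le s₁.memu s₂.memh
  have h2 := sq_integral_mul_le s₁.memh s₂.memu
  rw [n₁, one_mul] at h1
  rw [n₂, mul_one] at h2
  have h3 := abs_le.1 (abs_le_of_sq_le_sq (h1.trans b₂) hγ)
  have h4 := abs_le.1 (abs_le_of_sq_le_sq (h2.trans b₁) hγ)
  have h5 : |E₁ - E₂| * |∫ t, u₁ t * u₂ t| ≤ 2 * γ := by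
    rw [← abs_mul, h0, abs_le]
    constructor <;> linarith [h3.1, h3.2, h4.1, h4.2]
  rw [le_div_iff₀ hd]
  nlinarith [abs_nonneg (∫ t, u₁ t * u₂ t)]

/-! ### Counting approximate eigenvalues -/

/-- A lipschitz function supported in a box and vanishing at the points of a fine grid is small. -/
theorem integral_sq_le_of_grid {a : ℝ} (ha : 0 < a) {f g : ℝ → ℝ} {p G : ℝ} (N M : ℕ) (hM : 0 < M)
    (hd : ∀ x, HasDerivAt f (g x) x) (hg : ∀ x, |g x| ≤ G)
    (hz : ∀ x ∉ Ioo p (p + N * a), f x = 0)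
    (hgrid : ∀ i < N * M, f (p + i * (a / M)) = 0) :
    ∫ t, f t ^ 2 ≤ N * a * (G * (a / M)) ^ 2 := by
  have hM' : (0 : ℝ) < M := by exact_mod_cast hM
  have haM : 0 < a / M := by positivity
  have hG : 0 ≤ G := (abs_nonneg _).trans (hg 0)
  have hb : ∀ x, f x ^ 2 ≤ (G * (a / M)) ^ 2 := by
    intro x
    by_cases hx : x ∈ Ioo p (p + N * a)
    · have h0 : 0 ≤ (x - p) / (a / M) := div_nonneg (by linarith [hx.1]) haM.le
      set i := ⌊(x - p) / (a / M)⌋₊ with hi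
      have h1 : (i : ℝ) ≤ (x - p) / (a / M) := Nat.floor_le h0
      have h2 : (x - p) / (a / M) < i + 1 := Nat.lt_floor_add_one _
      rw [le_div_iff₀ haM] at h1
      rw [div_lt_iff₀ haM] at h2
      have h3 : i < N * M := by
        have : (i : ℝ) * (a / M) < (N * M : ℕ) * (a / M) := by
          have : ((N * M : ℕ) : ℝ) * (a / M) = N * a := by push_cast; field_simp
          rw [this]; linarith [hx.2]
        exact_mod_cast lt_of_mul_lt_mul_right this haM.le
      have h4 := Convex.norm_image_sub_le_of_norm_hasDerivWithin_le (f := f) (f' := g) (C := G)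
        (s := univ) (fun x _ => (hd x).hasDerivWithinAt) (fun x _ => hg x) convex_univ
        (mem_univ (p + i * (a / M))) (mem_univ x)
      rw [hgrid i h3, sub_zero, Real.norm_eq_abs, Real.norm_eq_abs] at h4
      have h5 : |x - (p + i * (a / M))| ≤ a / M := abs_le.2 ⟨by linarith, by linarith⟩
      rw [← sq_abs (f x)]
      exact pow_le_pow_left₀ (abs_nonneg _) (h4.trans (by gcongr)) 2
    · rw [hz x hx, zero_pow two_ne_zero]; positivity
  have hNa : p ≤ p + N * a := by have : 0 ≤ N * a := by positivity
                                 linarith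
  rw [← setIntegral_eq_integral_of_forall_compl_eq_zero (s := Ioo p (p + N * a))
    (fun x hx => by rw [hz x hx]; simp)]
  calc ∫ t in Ioo p (p + N * a), f t ^ 2 ≤ ∫ t in Ioo p (p + N * a), (G * (a / M)) ^ 2 := by
        have hc : IntegrableOn (fun _ : ℝ => (G * (a / M)) ^ 2) (Ioo p (p + N * a)) :=
          integrableOn_const measure_Ioo_lt_top.ne
        exact integral_mono_of_nonneg (ae_of_all _ fun t => sq_nonneg _) hc (ae_of_all _ hb)
    _ = _ := by
        rw [setIntegral_const, Real.volume_real_Ioo_of_le hNa, smul_eq_mul]; ring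

theorem abs_sum_sq_le {ι : Type*} (s : Finset ι) (c : ι → ℝ) :
    (∑ i ∈ s, |c i|) ^ 2 ≤ s.card * ∑ i ∈ s, c i ^ 2 := by
  have := sq_sum_le_card_mul_sum_sq (s := s) (f := fun i => |c i|)
  simpa [sq_abs] using this

/-- There are few pairwise well separated approximate eigenvalues in a box of `N` cells. -/
theorem exists_count {a : ℝ} (ha : 0 < a) (B n : ℝ) : ∃ M₀ : ℕ, 0 < M₀ ∧
    ∀ V, UnifL2 a B V → ∀ (N : ℕ), 0 < N → ∀ (p : ℤ) (γ d : ℝ), 0 ≤ γ → γ ≤ 1 → 0 < d →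
      (2 * γ / d) * (M₀ * N ^ 3 + 1 : ℕ) ≤ 1 / 4 →
      ∀ e : Fin (M₀ * N ^ 3 + 1) → ℝ, (∀ i, |e i| ≤ n) →
        (∀ i, HasMode V (p * a) (p * a + N * a) γ (e i)) →
        (∀ i j, i ≠ j → d ≤ |e i - e j|) → False := by
  obtain ⟨K, hK, hloc⟩ := exists_local_bound ha B n
  obtain ⟨M₀, hM₀⟩ := exists_nat_gt (8 * K * a ^ 3)
  have hM₀p : (0 : ℝ) < M₀ := lt_trans (by positivity) hM₀
  have hM₀n : 0 < M₀ := by exact_mod_cast hM₀p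
  refine ⟨M₀, hM₀n, ?_⟩
  intro V hV N hN p γ d hγ hγ1 hd
  obtain ⟨D, hD⟩ : ∃ D, D = M₀ * N ^ 3 := ⟨_, rfl⟩
  rw [← hD]
  intro hsmall e he hmode hsep
  choose u v h s hz hn hb using hmode
  set M := M₀ * N ^ 2 with hM
  have hNM : N * M = D := by rw [hM, hD]; ring
  have hMpos : 0 < M := by positivity
  have hN' : (0 : ℝ) < N := by exact_mod_cast hN
  -- uniform derivative bound
  have hv : ∀ i x, |v i x| ≤ Real.sqrt (2 * K) := by
    intro i x
    apply Real.abs_le_sqrt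
    have hx : x ∈ Icc ((⌊x / a⌋ : ℝ) * a) ((⌊x / a⌋ + 1) * a) := by
      have h1 := Int.floor_le (x / a)
      have h2 := Int.lt_floor_add_one (x / a)
      rw [le_div_iff₀ ha] at h1
      rw [div_lt_iff₀ ha] at h2
      exact ⟨h1, h2.le⟩
    have h1 := (hloc V hV (e i) (he i) _ _ _ (s i) ⌊x / a⌋ x hx).2
    have iu := (s i).memu.integrable_sq
    have ih := (s i).memh.integrable_sq
    have h2 : ∫ t in cell a ⌊x / a⌋, (u i t ^ 2 + h i t ^ 2) ≤ ∫ t, (u i t ^ 2 + h i t ^ 2) :=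
      setIntegral_le_integral (iu.add ih) (ae_of_all _ fun t => by positivity)
    rw [integral_add iu ih, hn i] at h2
    have h3 : γ ^ 2 ≤ 1 := pow_le_one₀ hγ hγ1
    have h4 := hb i
    nlinarith
  -- a nontrivial combination vanishing on the grid
  obtain ⟨c, hcne, hc⟩ : ∃ c : Fin (D + 1) → ℝ, c ≠ 0 ∧
      ∀ k < D, ∑ i, c i * u i (p * a + k * (a / M)) = 0 := by
    let A : Matrix (Fin D) (Fin (D + 1)) ℝ :=
      Matrix.of fun k i => u i (p * a + (k : ℕ) * (a / M))
    have h1 : LinearMap.ker A.mulVecLin ≠ ⊥ :=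
      LinearMap.ker_ne_bot_of_finrank_lt (by simp)
    obtain ⟨c, hc, hc0⟩ := (Submodule.ne_bot_iff _).1 h1
    refine ⟨c, hc0, fun k hk => ?_⟩
    have := congrFun (LinearMap.mem_ker.1 hc) ⟨k, hk⟩
    simp only [Matrix.mulVecLin_apply, Matrix.mulVec, dotProduct, A, Matrix.of_apply,
      Pi.zero_apply] at this
    rw [← this]
    exact Finset.sum_congr rfl fun i _ => mul_comm _ _
  set Q := ∑ i, c i ^ 2 with hQ
  have hQpos : 0 < Q := by
    obtain ⟨i, hi⟩ := Function.ne_iff.1 hcne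
    exact Finset.sum_pos' (fun i _ => sq_nonneg _) ⟨i, Finset.mem_univ _, by
      have : c i ≠ 0 := hi
      positivity⟩
  set A := ∑ i, |c i| with hA
  have hA0 : 0 ≤ A := Finset.sum_nonneg fun i _ => abs_nonneg _
  have hAQ : A ^ 2 ≤ (D + 1 : ℕ) * Q := by
    have := abs_sum_sq_le Finset.univ c
    simpa using this
  -- upper bound for the norm of the combination
  have hupper := integral_sq_le_of_grid ha (f := fun x => ∑ i, c i * u i x)
    (g := fun x => ∑ i, c i * v i x) (p := p * a) (G := A * Real.sqrt (2 * K)) N M hMpos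
    (fun x => by
      have := HasDerivAt.fun_sum (u := Finset.univ) (fun i _ => ((s i).der x).const_mul (c i))
      exact this)
    (fun x => by
      refine (Finset.abs_sum_le_sum_abs _ _).trans ?_
      rw [hA, Finset.sum_mul]
      refine Finset.sum_le_sum fun i _ => ?_
      rw [abs_mul]
      exact mul_le_mul_of_nonneg_left (hv i x) (abs_nonneg _))
    (fun x hx => Finset.sum_eq_zero fun i _ => by rw [(hz i x hx).1, mul_zero])
    (fun k hk => hc k (hNM ▸ hk))
  -- lower bound, from almost orthonormality
  have hexp : ∫ t, (∑ i, c i * u i t) ^ 2 = ∑ i, ∑ j, c i * c j * ∫ t, u i t * u j t := by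
    have e1 : ∀ t, (∑ i, c i * u i t) ^ 2 = ∑ i, ∑ j, c i * c j * (u i t * u j t) := by
      intro t
      rw [pow_two, Finset.sum_mul_sum]
      exact Finset.sum_congr rfl fun i _ => Finset.sum_congr rfl fun j _ => by ring
    simp only [e1]
    have ii : ∀ i j, Integrable fun t => c i * c j * (u i t * u j t) := fun i j =>
      ((s i).memu.integrable_mul (s j).memu).const_mul _
    rw [integral_finsetSum _ fun i _ => integrable_finsetSum _ fun j _ => ii i j]
    refine Finset.sum_congr rfl fun i _ => ?_
    rw [integral_finsetSum _ fun j _ => ii i j]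
    exact Finset.sum_congr rfl fun j _ => integral_const_mul _ _
  set ε := 2 * γ / d with hε
  have hε0 : 0 ≤ ε := by positivity
  have hlower : Q - ε * A ^ 2 ≤ ∫ t, (∑ i, c i * u i t) ^ 2 := by
    rw [hexp]
    have e2 : Q - ε * A ^ 2 = ∑ i, ∑ j, ((if i = j then c i ^ 2 else 0) - ε * (|c i| * |c j|)) := by
      simp only [Finset.sum_sub_distrib, Finset.sum_ite_eq, Finset.mem_univ, if_true]
      rw [hA, pow_two, Finset.sum_mul_sum, Finset.mul_sum]
      simp only [Finset.mul_sum]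
      rfl
    rw [e2]
    refine Finset.sum_le_sum fun i _ => Finset.sum_le_sum fun j _ => ?_
    by_cases hij : i = j
    · subst hij
      have : ∫ t, u i t * u i t = 1 := by rw [← hn i]; simp only [pow_two]
      rw [if_pos rfl, this]
      have : 0 ≤ ε * (|c i| * |c i|) := by positivity
      nlinarith
    · rw [if_neg hij]
      have h1 := (s i).almost_orthogonal (s j) (hz i) (hn i) (hn j) (hb i) (hb j) hγ hd
        (hsep i j hij)
      have h2 : |c i * c j * ∫ t, u i t * u j t| ≤ ε * (|c i| * |c j|) := by
        rw [abs_mul, abs_mul, mul_comm ε]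
        exact mul_le_mul_of_nonneg_left h1 (by positivity)
      linarith [neg_abs_le (c i * c j * ∫ t, u i t * u j t)]
  have hD1 : ((D + 1 : ℕ) : ℝ) ≤ 2 * (M₀ * N ^ 3) := by
    have : 1 ≤ D := Nat.one_le_iff_ne_zero.2 (by rw [hD]; positivity)
    have : D + 1 ≤ 2 * (M₀ * N ^ 3) := by lia
    exact_mod_cast this
  have hMr : (M : ℝ) = M₀ * N ^ 2 := by rw [hM]; push_cast; rfl
  have hkey : N * a * (A * Real.sqrt (2 * K) * (a / M)) ^ 2 ≤ Q / 2 := by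
    have e3 : N * a * (A * Real.sqrt (2 * K) * (a / M)) ^ 2 =
        A ^ 2 * (2 * K * a ^ 3 / (M₀ ^ 2 * N ^ 3)) := by
      rw [mul_pow, mul_pow, Real.sq_sqrt (by positivity), hMr]
      field_simp
    have h1 : A ^ 2 ≤ 2 * (M₀ * N ^ 3) * Q := hAQ.trans (by gcongr)
    calc N * a * (A * Real.sqrt (2 * K) * (a / M)) ^ 2
        ≤ 2 * (M₀ * N ^ 3) * Q * (2 * K * a ^ 3 / (M₀ ^ 2 * N ^ 3)) := by
          rw [e3]; gcongr
      _ = 4 * K * a ^ 3 / M₀ * Q := by field_simp; ring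
      _ ≤ 1 / 2 * Q := by
          refine mul_le_mul_of_nonneg_right ?_ hQpos.le
          rw [div_le_iff₀ hM₀p]; linarith
      _ = Q / 2 := by ring
  have hfin : ε * A ^ 2 ≤ Q / 4 := by
    calc ε * A ^ 2 ≤ ε * ((D + 1 : ℕ) * Q) := by gcongr
      _ = ε * (D + 1 : ℕ) * Q := by ring
      _ ≤ 1 / 4 * Q := by gcongr
      _ = Q / 4 := by ring
  linarith

/-- A set without `D+1` pairwise `d`-separated points is covered by `D` balls of radius `d`. -/
theorem exists_cover_of_sep {A : Set ℝ} {d : ℝ} (D : ℕ)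
    (h : ∀ e : Fin (D + 1) → ℝ, (∀ i, e i ∈ A) → (∀ i j, i ≠ j → d ≤ |e i - e j|) → False) :
    ∃ t : Finset ℝ, t.card ≤ D ∧ ∀ x ∈ A, ∃ y ∈ t, |x - y| ≤ d := by
  let P : ℕ → Prop := fun k => ∃ t : Finset ℝ, t.card = k ∧ (t : Set ℝ) ⊆ A ∧
    ∀ x ∈ t, ∀ y ∈ t, x ≠ y → d ≤ |x - y|
  classical
  have hP0 : P 0 := ⟨∅, by simp, by simp, by simp⟩
  have hPD : ¬ P (D + 1) := by
    rintro ⟨t, hc, hA, hsep⟩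
    let eq := (t.equivFinOfCardEq hc).symm
    exact h (fun i => eq i) (fun i => hA (eq i).2) fun i j hij => hsep _ (eq i).2 _ (eq j).2
      fun h' => hij (eq.injective (Subtype.ext h'))
  obtain ⟨k, hk, hk1⟩ : ∃ k ≤ D, P k ∧ ¬ P (k + 1) := by
    by_contra hcon
    push Not at hcon
    have : ∀ k, k ≤ D + 1 → P k := fun k => by
      induction k with
      | zero => exact fun _ => hP0
      | succ k ih => exact fun hk => hcon k (by lia) (ih (by lia))
    exact hPD (this _ le_rfl)
  obtain ⟨⟨t, hc, hA, hsep⟩, hn⟩ := hk1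
  refine ⟨t, hc ▸ hk, fun x hx => ?_⟩
  by_contra hcon
  push Not at hcon
  by_cases hd : 0 ≤ d
  · have hxt : x ∉ t := fun hxt => by
      have := hcon x hxt
      simp at this; linarith
    refine hn ⟨insert x t, by rw [Finset.card_insert_of_notMem hxt, hc], ?_, ?_⟩
    · intro y hy
      rcases Finset.mem_insert.1 (by exact_mod_cast hy) with rfl | hy
      · exact hx
      · exact hA hy
    · intro y hy z hz hyz
      rcases Finset.mem_insert.1 hy with rfl | hy'
      · rcases Finset.mem_insert.1 hz with rfl | hz'
        · exact absurd rfl hyz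
        · exact (hcon z hz').le
      · rcases Finset.mem_insert.1 hz with rfl | hz'
        · rw [abs_sub_comm]; exact (hcon y hy').le
        · exact hsep y hy' z hz' hyz
  · exact h (fun _ => x) (fun _ => hx) fun i j _ => by
      push Not at hd
      exact hd.le.trans (abs_nonneg _)

section

open Filter Topology

/-! ### Thin sets of energies -/

/-- `A` has a finite cover by balls of radii `rᵢ ≤ η` with `∑ (2 rᵢ)^s ≤ η`. The finite set `t`
consists of the pairs (centre, radius). -/
def Thin (s η : ℝ) (A : Set ℝ) : Prop :=
  ∃ t : Finset (ℝ × ℝ), (∀ p ∈ t, 0 ≤ p.2 ∧ p.2 ≤ η) ∧ (∀ x ∈ A, ∃ p ∈ t, |x - p.1| ≤ p.2) ∧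
    ∑ p ∈ t, (2 * p.2) ^ s ≤ η

theorem Thin.nonneg {s η : ℝ} {A : Set ℝ} (h : Thin s η A) : 0 ≤ η := by
  obtain ⟨t, h1, -, h3⟩ := h
  exact (Finset.sum_nonneg fun p hp => Real.rpow_nonneg (by linarith [(h1 p hp).1]) s).trans h3

theorem Thin.mono {s η η' : ℝ} {A A' : Set ℝ} (h : Thin s η A) (hη : η ≤ η') (hA : A' ⊆ A) :
    Thin s η' A' := by
  obtain ⟨t, h1, h2, h3⟩ := h
  exact ⟨t, fun p hp => ⟨(h1 p hp).1, (h1 p hp).2.trans hη⟩, fun x hx => h2 x (hA hx), h3.trans hη⟩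

theorem Thin.union {s η η' : ℝ} {A A' : Set ℝ} (h : Thin s η A) (h' : Thin s η' A') :
    Thin s (η + η') (A ∪ A') := by
  classical
  have e0 := h.nonneg
  have e0' := h'.nonneg
  obtain ⟨t, h1, h2, h3⟩ := h
  obtain ⟨t', h1', h2', h3'⟩ := h'
  have hpos : ∀ p ∈ t ∩ t', 0 ≤ (2 * p.2) ^ s := fun p hp =>
    Real.rpow_nonneg (by linarith [(h1 p (Finset.mem_inter.1 hp).1).1]) s
  refine ⟨t ∪ t', fun p hp => ?_, fun x hx => ?_, ?_⟩
  · rcases Finset.mem_union.1 hp with hp | hp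
    · exact ⟨(h1 p hp).1, by linarith [(h1 p hp).2]⟩
    · exact ⟨(h1' p hp).1, by linarith [(h1' p hp).2]⟩
  · rcases hx with hx | hx
    · obtain ⟨p, hp, h⟩ := h2 x hx
      exact ⟨p, Finset.mem_union_left _ hp, h⟩
    · obtain ⟨p, hp, h⟩ := h2' x hx
      exact ⟨p, Finset.mem_union_right _ hp, h⟩
  · have e := Finset.sum_union_inter (s₁ := t) (s₂ := t') (f := fun p : ℝ × ℝ => (2 * p.2) ^ s)
    have := Finset.sum_nonneg hpos
    linarith

theorem Thin.iUnion {s η : ℝ} {K : ℕ} {A : ℕ → Set ℝ} (h : ∀ i < K, Thin s η (A i)) :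
    Thin s (K * η) (⋃ i < K, A i) := by
  induction K with
  | zero => exact ⟨∅, by simp, by simp, by simp⟩
  | succ K ih =>
    refine ((ih fun i hi => h i (by lia)).union (h K (by lia))).mono (by push_cast; linarith) ?_
    intro x hx
    simp only [mem_iUnion] at hx
    obtain ⟨i, hi, hx⟩ := hx
    rcases Nat.lt_succ_iff_lt_or_eq.1 hi with hi | rfl
    · exact Or.inl (mem_iUnion₂.2 ⟨i, hi, hx⟩)
    · exact Or.inr hx

theorem thin_of_cover {s d : ℝ} (hd : 0 ≤ d) {A : Set ℝ} {D : ℕ} {t : Finset ℝ} (ht : t.card ≤ D)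
    (h : ∀ x ∈ A, ∃ y ∈ t, |x - y| ≤ d) : Thin s (D * (2 * d) ^ s + d) A := by
  classical
  have hp : 0 ≤ (2 * d) ^ s := Real.rpow_nonneg (by linarith) s
  have hD : (t.card : ℝ) * (2 * d) ^ s ≤ D * (2 * d) ^ s := by gcongr
  refine ⟨t.image fun y => (y, d), fun p hp' => ?_, fun x hx => ?_, ?_⟩
  · obtain ⟨y, -, rfl⟩ := Finset.mem_image.1 hp'
    have : 0 ≤ (D : ℝ) * (2 * d) ^ s := by positivity
    exact ⟨hd, by simpa using this⟩
  · obtain ⟨y, hy, h⟩ := h x hx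
    exact ⟨(y, d), Finset.mem_image_of_mem _ hy, h⟩
  · rw [Finset.sum_image (fun y _ z _ h => (Prod.ext_iff.1 h).1)]
    simp only [Finset.sum_const, nsmul_eq_mul]
    linarith

/-- The numerical conditions which hold when the block length is large: exponential decay beats
the polynomial growth of the number of approximate eigenvalues. -/
theorem exists_large_block (G c K : ℝ) {ρ s η : ℝ} (hρ : 0 < ρ) (hρ1 : ρ < 1) (hs : 0 < s)
    (hη : 0 < η) (hc : 0 < c) : ∃ k : ℕ, 1 ≤ k ∧ (c * ρ ^ k) ^ 2 ≤ 1 ∧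
      2 * (c * ρ ^ k) * (G * k ^ 3) ≤ 1 / 4 ∧
      K * (G * k ^ 3 * (2 * (c * ρ ^ k)) ^ s + c * ρ ^ k) ≤ η := by
  have t0 : Tendsto (fun k : ℕ => c * ρ ^ k) atTop (𝓝 0) := by
    simpa using (tendsto_pow_atTop_nhds_zero_of_lt_one hρ.le hρ1).const_mul c
  have t1 : Tendsto (fun k : ℕ => (c * ρ ^ k) ^ 2) atTop (𝓝 0) := by simpa using t0.pow 2
  have t2 : Tendsto (fun k : ℕ => 2 * (c * ρ ^ k) * (G * k ^ 3)) atTop (𝓝 0) := by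
    have := (tendsto_pow_const_mul_const_pow_of_abs_lt_one 3
      (show |ρ| < 1 by rwa [abs_of_pos hρ])).const_mul (2 * c * G)
    rw [mul_zero] at this
    refine this.congr fun k => by ring
  have hρs : |ρ ^ s| < 1 := by
    rw [abs_of_pos (Real.rpow_pos_of_pos hρ s)]
    exact Real.rpow_lt_one hρ.le hρ1 hs
  have t3 : Tendsto (fun k : ℕ => G * k ^ 3 * (2 * (c * ρ ^ k)) ^ s) atTop (𝓝 0) := by
    have := (tendsto_pow_const_mul_const_pow_of_abs_lt_one 3 hρs).const_mul (G * (2 * c) ^ s)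
    rw [mul_zero] at this
    refine this.congr fun k => ?_
    have : (2 * (c * ρ ^ k)) ^ s = (2 * c) ^ s * (ρ ^ s) ^ k := by
      rw [← mul_assoc, Real.mul_rpow (by positivity) (by positivity), ← Real.rpow_natCast_mul hρ.le,
        ← Real.rpow_mul_natCast hρ.le, mul_comm s]
    rw [this]; ring
  have t4 : Tendsto (fun k : ℕ => K * (G * k ^ 3 * (2 * (c * ρ ^ k)) ^ s + c * ρ ^ k)) atTop
      (𝓝 0) := by simpa using (t3.add t0).const_mul K
  obtain ⟨k, h1, h2, h3, h4⟩ := ((eventually_ge_atTop 1).and ((t1.eventually_le_const one_pos).and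
    ((t2.eventually_le_const (by norm_num : (0 : ℝ) < 1 / 4)).and
      (t4.eventually_le_const hη)))).exists
  exact ⟨k, h1, h2, h3, h4⟩

/-- The approximate spectrum of a periodic potential whose period contains, for each `i < K`, a long
block on which it agrees with a potential `V₀ i`, is thin when restricted to the energies lying in a
gap of at least one of the `V₀ i`. -/
theorem exists_thin_period {a : ℝ} (ha : 0 < a) (B n c₀ : ℝ) (hc₀ : 0 < c₀) (K q : ℕ) (hK : 0 < K)
    (hq : 0 < q) {s η : ℝ} (hs : 0 < s) (hη : 0 < η) : ∃ (k : ℕ) (κ : ℝ), 0 < κ ∧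
    ∀ (V : ℝ → ℝ) (V₀ : ℕ → ℝ → ℝ), UnifL2 a B V →
      (∀ (m : ℤ) x, V (x + m * (K * (q * (2 * k + 2)) : ℕ) * a) = V x) →
      (∀ i < K, ∀ x ∈ Ioo ((i * (q * (2 * k + 2)) : ℕ) * a)
        ((i * (q * (2 * k + 2)) + (2 * k + 2) : ℕ) * a),
        ∀ m : ℤ, V (x + m * (K * (q * (2 * k + 2)) : ℕ) * a) =
          V₀ i (x + m * (K * (q * (2 * k + 2)) : ℕ) * a)) →
      Thin s η {E | |E| ≤ n ∧ (∃ i < K, LowS (V₀ i) E c₀) ∧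
        ∃ u v h, Sol V E u v h ∧ ∫ t, h t ^ 2 < κ * ∫ t, u t ^ 2} := by
  obtain ⟨C, θ, hC, hθ, hθ1, hloc⟩ := exists_localized ha B n c₀ hc₀
  obtain ⟨M₀, hM₀, hcount⟩ := exists_count ha B n
  set c := Real.sqrt (Real.sqrt C) with hc
  set ρ := Real.sqrt (Real.sqrt θ) with hρ
  have hcpos : 0 < c := Real.sqrt_pos.2 (Real.sqrt_pos.2 hC)
  have hρpos : 0 < ρ := Real.sqrt_pos.2 (Real.sqrt_pos.2 hθ)
  have hc4 : c ^ 4 = C := by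
    rw [show 4 = 2 * 2 from rfl, pow_mul, hc, Real.sq_sqrt (by positivity), Real.sq_sqrt hC.le]
  have hρ4 : ρ ^ 4 = θ := by
    rw [show 4 = 2 * 2 from rfl, pow_mul, hρ, Real.sq_sqrt (by positivity), Real.sq_sqrt hθ.le]
  have hρ1 : ρ < 1 := by
    by_contra hcon
    push Not at hcon
    have := one_le_pow₀ hcon (n := 4)
    linarith
  obtain ⟨k, hk1, hb1, hb2, hb3⟩ := exists_large_block ((M₀ * (4 * K * q + 2) ^ 3 + 1 : ℕ) : ℝ) c K
    hρpos hρ1 hs hη hcpos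
  refine ⟨k, θ ^ k, by positivity, fun V V₀ hV hper hagree => ?_⟩
  set d := c * ρ ^ k with hd
  have hdpos : 0 < d := by positivity
  have hd4 : (d ^ 2) ^ 2 = C * θ ^ k := by
    rw [← hc4, ← hρ4, hd]; ring
  set L := q * (2 * k + 2) with hL
  set N := K * L + 2 with hN
  have hND : M₀ * N ^ 3 + 1 ≤ (M₀ * (4 * K * q + 2) ^ 3 + 1) * k ^ 3 := by
    have h1 : N ≤ (4 * K * q + 2) * k := by
      rw [hN, hL]
      have : K * q ≤ K * q * k := Nat.le_mul_of_pos_right _ hk1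
      nlinarith
    have h2 : N ^ 3 ≤ (4 * K * q + 2) ^ 3 * k ^ 3 := by
      rw [← mul_pow]; exact Nat.pow_le_pow_left h1 3
    have h3 : 1 ≤ k ^ 3 := Nat.one_le_pow _ _ hk1
    nlinarith
  have hND' : ((M₀ * N ^ 3 + 1 : ℕ) : ℝ) ≤ ((M₀ * (4 * K * q + 2) ^ 3 + 1 : ℕ) : ℝ) * k ^ 3 := by
    exact_mod_cast hND
  have hmodes : ∀ i < K, ∀ E, |E| ≤ n → LowS (V₀ i) E c₀ → ∀ u v h, Sol V E u v h →
      ∫ t, h t ^ 2 < θ ^ k * ∫ t, u t ^ 2 →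
      HasMode V ((i * L + k : ℕ) * a) ((i * L + k : ℕ) * a + N * a) (d ^ 2) E := by
    intro i hi E hE hlow u v h s hlt
    have hKL : 2 * k + 2 ≤ K * L := by
      rw [hL, ← mul_assoc]; exact Nat.le_mul_of_pos_left _ (by positivity)
    obtain ⟨m, u₂, v₂, h₂, s₂, hz, hlt₂⟩ := hloc V (V₀ i) hV E hE hlow u v h s k
      ((i * L : ℕ) : ℤ) ((K * L : ℕ) : ℤ) (by exact_mod_cast hKL)
      (fun m => ae_of_all _ fun x hx => by
        have := hagree i hi (x - m * (K * L : ℕ) * a) ⟨?_, ?_⟩ m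
        · simpa using this
        · have := hx.1; push_cast at this ⊢; linarith
        · have := hx.2; push_cast at this ⊢; linarith) hlt
    have s₃ := s₂.translate (m * (K * L : ℕ) * a)
    have hVt : (fun x => V (x + m * (K * L : ℕ) * a)) = V := funext fun x => hper m x
    rw [hVt] at s₃
    refine hasMode_of_lt s₃ (fun x hx => hz _ fun h' => hx ⟨?_, ?_⟩) ?_
    · have := h'.1; push_cast at this ⊢; linarith
    · have := h'.2; rw [hN]; push_cast at this ⊢; linarith
    · rw [integral_add_right_eq_self (fun t => h₂ t ^ 2) (m * (K * L : ℕ) * a),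
        integral_add_right_eq_self (fun t => u₂ t ^ 2) (m * (K * L : ℕ) * a), hd4]
      exact hlt₂
  have hthin : ∀ i < K, Thin s (((M₀ * (4 * K * q + 2) ^ 3 + 1 : ℕ) : ℝ) * k ^ 3 * (2 * d) ^ s + d)
      {E | |E| ≤ n ∧ HasMode V ((i * L + k : ℕ) * a) ((i * L + k : ℕ) * a + N * a) (d ^ 2) E} := by
    intro i hi
    have hsmall : (2 * d ^ 2 / d) * (M₀ * N ^ 3 + 1 : ℕ) ≤ 1 / 4 := by
      have : 2 * d ^ 2 / d = 2 * d := by field_simp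
      rw [this]
      refine le_trans ?_ hb2
      gcongr
    obtain ⟨t, ht, hcov⟩ := exists_cover_of_sep
      (A := {E | |E| ≤ n ∧ HasMode V ((i * L + k : ℕ) * a) ((i * L + k : ℕ) * a + N * a) (d ^ 2) E})
      (d := d) (M₀ * N ^ 3) (fun e he hsep =>
        hcount V hV N (by positivity) ((i * L + k : ℕ) : ℤ) (d ^ 2) d (by positivity) hb1 hdpos
          hsmall e (fun j => (he j).1) (fun j => by simpa using (he j).2) hsep)
    refine (thin_of_cover hdpos.le ht hcov).mono ?_ subset_rfl
    have : ((M₀ * N ^ 3 : ℕ) : ℝ) ≤ ((M₀ * (4 * K * q + 2) ^ 3 + 1 : ℕ) : ℝ) * k ^ 3 := by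
      refine le_trans ?_ hND'
      push_cast; linarith
    have h2 : 0 ≤ (2 * d) ^ s := Real.rpow_nonneg (by positivity) s
    gcongr
  refine (Thin.iUnion hthin).mono hb3 ?_
  rintro E ⟨hE, ⟨i, hi, hlow⟩, u, v, h, hsol, hlt⟩
  exact mem_iUnion₂.2 ⟨i, hi, hE, hmodes i hi E hE hlow u v h hsol hlt⟩

/-! ### Stability of gaps under changes of the energy and of the coupling constant -/

theorem LowS.mono {V : ℝ → ℝ} {E c c' : ℝ} (h : LowS V E c) (hc : c ≤ c') : LowS V E c' :=
  fun u v k s => (h u v k s).trans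
    (mul_le_mul_of_nonneg_right hc (integral_nonneg fun _ => sq_nonneg _))

theorem unifL2_pot_of_le {a : ℝ} (ha : 0 < a) {lam R b : ℝ} {y : ℤ → L2I a} (hlam : |lam| ≤ R)
    (hy : ∀ j, ‖y j‖ ≤ b) : UnifL2 a ((R * b) ^ 2) (pot a lam y) := by
  refine unifL2_pot ha fun j => pow_le_pow_left₀ (norm_nonneg _) ?_ 2
  rw [norm_smul, Real.norm_eq_abs]
  exact mul_le_mul hlam (hy j) (norm_nonneg _) ((abs_nonneg _).trans hlam)

/-- A gap persists, with a uniform a priori bound, for nearby energies and couplings. -/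
theorem exists_stable_gap {a : ℝ} (ha : 0 < a) {y : ℤ → L2I a} {b : ℝ} (hy : ∀ j, ‖y j‖ ≤ b)
    {lam₀ E₀ : ℝ} (hE : E₀ ∉ ContSpectrum (pot a lam₀ y)) : ∃ c δ, 0 < c ∧ 0 < δ ∧
    ∀ lam E, |lam - lam₀| < δ → |E - E₀| < δ → LowS (pot a lam y) E c := by
  have hb : 0 ≤ b := (norm_nonneg _).trans (hy 0)
  have hV₀ := unifL2_pot_of_le ha (le_refl |lam₀|) hy
  obtain ⟨c₀, hc₀, hlow⟩ := (notMem_spec_iff_lowS (hV₀.locL2 ha) E₀).1 hE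
  obtain ⟨K, hK, hloc⟩ := exists_local_bound ha (((|lam₀| + 1) * b) ^ 2) (|E₀| + 1)
  -- `δ ≤ 1` with `c₀ (3 K b² δ² + 3 δ²) ≤ 1/2`
  set M := c₀ * (3 * K * b ^ 2 + 3) with hM
  have hMpos : 0 < M := by positivity
  set δ := min 1 (1 / (2 * M)) with hδ
  have hδ0 : 0 < δ := lt_min one_pos (by positivity)
  have hδ1 : δ ≤ 1 := min_le_left _ _
  have hδM : M * δ ≤ 1 / 2 := by
    calc M * δ ≤ M * (1 / (2 * M)) := by gcongr; exact min_le_right _ _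
      _ = 1 / 2 := by field_simp
  refine ⟨2 * c₀ * (3 + 3 * K * b ^ 2), δ, by positivity, hδ0, ?_⟩
  intro lam E hlam hE' u v h s
  have hl : |lam| ≤ |lam₀| + 1 := by
    have := abs_sub_abs_le_abs_sub lam lam₀; linarith
  have hEn : |E| ≤ |E₀| + 1 := by
    have := abs_sub_abs_le_abs_sub E E₀; linarith
  have hl2 : (lam - lam₀) ^ 2 ≤ δ := by
    rw [← sq_abs]; nlinarith [abs_nonneg (lam - lam₀)]
  have hE2 : (E₀ - E) ^ 2 ≤ δ := by
    rw [← sq_abs, abs_sub_comm]; nlinarith [abs_nonneg (E - E₀)]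
  have hclose : CloseL2 a (δ * b ^ 2) (pot a lam₀ y) (pot a lam y) := by
    refine closeL2_pot ha fun j => ?_
    rw [← sub_smul, norm_smul, mul_pow, Real.norm_eq_abs, sq_abs]
    have h1 : ‖y j‖ ^ 2 ≤ b ^ 2 := pow_le_pow_left₀ (norm_nonneg _) (hy j) 2
    have h2 : (lam₀ - lam) ^ 2 ≤ δ := by linarith [show (lam₀ - lam) ^ 2 = (lam - lam₀) ^ 2 by ring]
    exact mul_le_mul h2 h1 (by positivity) hδ0.le
  obtain ⟨h', s', hh'⟩ := s.perturb ha hloc hK (unifL2_pot_of_le ha hl hy) hclose hEn (E := E₀)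
  have hU := hlow _ _ _ s'
  have hI : 0 ≤ ∫ t, u t ^ 2 := integral_nonneg fun t => sq_nonneg _
  have hJ : 0 ≤ ∫ t, h t ^ 2 := integral_nonneg fun t => sq_nonneg _
  set I := ∫ t, u t ^ 2
  set J := ∫ t, h t ^ 2
  have h1 : I ≤ c₀ * (3 * J + 3 * (K * (δ * b ^ 2)) * (I + J) + 3 * δ * I) := by
    refine hU.trans (mul_le_mul_of_nonneg_left (hh'.trans ?_) hc₀.le)
    gcongr
  have h2 : c₀ * (3 * J + 3 * (K * (δ * b ^ 2)) * (I + J) + 3 * δ * I) =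
      M * δ * I + c₀ * (3 + 3 * K * b ^ 2 * δ) * J := by rw [hM]; ring
  have h3 : c₀ * (3 + 3 * K * b ^ 2 * δ) * J ≤ c₀ * (3 + 3 * K * b ^ 2 * 1) * J := by gcongr
  have h4 : M * δ * I ≤ 1 / 2 * I := by gcongr
  linarith

/-! ### Periodic sequences -/

theorem perExt_apply {α : Type*} [Zero α] {m : ℕ} (hm : 0 < m) (w : Fin m → α) (j : ℤ) :
    ∃ i : Fin m, (i : ℤ) = j % m ∧ perExt w j = w i := by
  have h1 : 0 ≤ j % (m : ℤ) := Int.emod_nonneg j (by exact_mod_cast hm.ne')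
  have h2 : j % (m : ℤ) < (m : ℤ) := Int.emod_lt_of_pos j (by exact_mod_cast hm)
  refine ⟨⟨(j % (m : ℤ)).toNat, by omega⟩, by simpa using h1, ?_⟩
  simp [perExt, hm]

theorem perExt_periodic {α : Type*} [Zero α] {m : ℕ} (w : Fin m → α) (j : ℤ) :
    perExt w (j + m) = perExt w j := by
  simp [perExt]

theorem periodic_int_mul {α : Type*} {y : ℤ → α} {q : ℕ} (h : ∀ j, y (j + q) = y j) (m j : ℤ) :
    y (j + m * q) = y j :=
  (show Function.Periodic y (q : ℤ) from h).int_mul m j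

theorem periodic_emod {α : Type*} {y : ℤ → α} {q : ℕ} (h : ∀ j, y (j + q) = y j) (j : ℤ) :
    y (j % q) = y j := by
  have := periodic_int_mul h (j / q) (j % q)
  rw [← this, mul_comm, Int.emod_add_mul_ediv]

theorem IsDiscreteSet.finite_inter {S : Set ℝ} (hS : IsDiscreteSet S) (n : ℝ) :
    {E | E ∈ S ∧ |E| ≤ n}.Finite := by
  by_contra hinf
  have hsub : {E | E ∈ S ∧ |E| ≤ n} ⊆ Icc (-n) n := fun E hE => abs_le.1 hE.2
  obtain ⟨x, -, hx⟩ := Set.Infinite.exists_accPt_of_subset_isCompact hinf isCompact_Icc hsub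
  exact hS x (hx.mono (principal_mono.2 fun E hE => hE.1))

/-- Gap-richness of `λ Y`, reformulated for periodic sequences over `Y` itself. -/
theorem exists_gap_approx {a : ℝ} (ha : 0 < a) {S : Set ℝ} {Y : Set (L2I a)} {lam : ℝ}
    (hlam : lam ≠ 0) (hGR : GapRichC a ((fun φ => lam • φ) '' Y) S) {x : ℤ → L2I a} {q : ℕ}
    (hq : 0 < q) (hx : ∀ j, x (j + q) = x j) (hxY : ∀ j, x j ∈ Y) {E : ℝ} (hE : E ∉ S) {ε : ℝ}
    (hε : 0 < ε) : ∃ (y : ℤ → L2I a) (l : ℕ), 0 < l ∧ (∀ j, y (j + l) = y j) ∧ (∀ j, y j ∈ Y) ∧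
      (∀ j, ‖x j - y j‖ ≤ ε) ∧ E ∉ ContSpectrum (pot a lam y) := by
  obtain ⟨l, hl, w, hwY, hwx, hw⟩ := hGR.2 E hE q hq (fun i => lam • x i)
    (fun i => ⟨_, hxY _, rfl⟩) (|lam| * ε) (by positivity)
  have hwmem : ∀ j, lam⁻¹ • perExt w j ∈ Y := by
    intro j
    obtain ⟨i, -, hi⟩ := perExt_apply hl w j
    obtain ⟨φ, hφ, hφi⟩ := hwY i
    rw [hi, ← hφi]
    simpa [smul_smul, hlam] using hφ
  refine ⟨fun j => lam⁻¹ • perExt w j, l, hl, fun j => by simp only [perExt_periodic],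
    hwmem, fun j => ?_, ?_⟩
  · obtain ⟨i, hij, hi⟩ := perExt_apply hq (fun i : Fin q => lam • x i) j
    have h1 := (hwx j).le
    rw [hi, hij, periodic_emod hx, dist_eq_norm] at h1
    have h2 : lam • x j - perExt w j = lam • (x j - lam⁻¹ • perExt w j) := by
      rw [smul_sub, smul_smul, mul_inv_cancel₀ hlam, one_smul]
    rw [h2, norm_smul, Real.norm_eq_abs] at h1
    exact le_of_mul_le_mul_left h1 (by positivity)
  · have h1 : pot a lam (fun j => lam⁻¹ • perExt w j) =ᵐ[volume] pot a 1 (perExt w) :=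
      pot_ae_congr ha fun j => by rw [smul_smul, mul_inv_cancel₀ hlam]
    have h2 : pot a 1 (perExt w) = aggC a (perExt w) := by funext t; simp [pot]
    rw [contSpectrum_congr h1, h2]
    exact hw

/-! ### Periodic potentials with thin approximate spectrum are dense -/

/-- Energies in `[-n,n]` admitting an approximate solution with squared relative error `κ`. -/
def ApproxSpec (V : ℝ → ℝ) (n κ : ℝ) : Set ℝ :=
  {E | |E| ≤ n ∧ ∃ u v h, Sol V E u v h ∧ ∫ t, h t ^ 2 < κ * ∫ t, u t ^ 2}

theorem exists_small_radius (D : ℕ) {s η : ℝ} (hs : 0 < s) (hη : 0 < η) :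
    ∃ δ, 0 < δ ∧ D * (2 * δ) ^ s + δ ≤ η := by
  have hc : ContinuousAt (fun δ : ℝ => D * (2 * δ) ^ s + δ) 0 := by
    refine ContinuousAt.add (ContinuousAt.mul continuousAt_const ?_) continuousAt_id
    exact ContinuousAt.rpow_const (continuousAt_const.mul continuousAt_id) (Or.inr hs.le)
  have h0 : Tendsto (fun δ : ℝ => D * (2 * δ) ^ s + δ) (𝓝[>] 0) (𝓝 0) := by
    have := hc.tendsto
    simp only [mul_zero, Real.zero_rpow hs.ne', add_zero] at this
    exact this.mono_left nhdsWithin_le_nhds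
  obtain ⟨δ, h1, h2⟩ := ((h0.eventually_le_const hη).and self_mem_nhdsWithin).exists
  exact ⟨δ, h2, h1⟩

/-- The sequence of period `K L` which runs through the sequences `y 0, …, y (K-1)`, switching to
the next one after `L` steps. -/
def interlace {α : Type*} (L K : ℕ) (y : ℕ → ℤ → α) : ℤ → α :=
  fun j => y ((j / L) % K).toNat j

theorem interlace_mem {α : Type*} (L : ℕ) {K : ℕ} (hK : 0 < K) (y : ℕ → ℤ → α) (j : ℤ) :
    ∃ i < K, interlace L K y j = y i j := by
  have h1 : 0 ≤ (j / L) % (K : ℤ) := Int.emod_nonneg _ (by exact_mod_cast hK.ne')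
  have h2 : (j / L) % (K : ℤ) < K := Int.emod_lt_of_pos _ (by exact_mod_cast hK)
  exact ⟨_, by lia, rfl⟩

theorem interlace_periodic {α : Type*} {L : ℕ} (hL : 0 < L) {K : ℕ} {y : ℕ → ℤ → α}
    (hy : ∀ i j, y i (j + L) = y i j) (j : ℤ) :
    interlace L K y (j + (K * L : ℕ)) = interlace L K y j := by
  have hL' : (L : ℤ) ≠ 0 := by exact_mod_cast hL.ne'
  unfold interlace
  push_cast
  rw [Int.add_mul_ediv_right _ _ hL', Int.add_emod_right]
  exact periodic_int_mul (hy _) K j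

theorem interlace_eq {α : Type*} {L K i : ℕ} (hL : 0 < L) (hi : i < K) (y : ℕ → ℤ → α) (m : ℤ)
    {j : ℤ} (h1 : i * L + m * (K * L) ≤ j) (h2 : j < i * L + m * (K * L) + L) :
    interlace L K y j = y i j := by
  have hL' : (0 : ℤ) < L := by exact_mod_cast hL
  have e : j / L = i + m * K := by
    rw [Int.ediv_eq_iff_of_pos hL']
    constructor <;> nlinarith
  have e2 : (j / L) % K = i := by
    rw [e, Int.add_mul_emod_self_right]
    exact Int.emod_eq_of_lt (by lia) (by exact_mod_cast hi)
  unfold interlace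
  rw [e2]; simp

/-- Near each periodic sequence over `Y` there is another one, obtained by interlacing finitely many
gapped approximants in long blocks, whose approximate spectrum in `[-n,n]` is thin for all couplings
in the compact set `Λ`. -/
theorem exists_thin_approx {a : ℝ} (ha : 0 < a) {S : Set ℝ} (hS : IsDiscreteSet S)
    {Y : Set (L2I a)} {Λ : Set ℝ} (hΛ : IsCompact Λ) (hΛ0 : ∀ lam ∈ Λ, lam ≠ 0)
    (hGR : ∀ lam ∈ Λ, GapRichC a ((fun φ => lam • φ) '' Y) S)
    {x : ℤ →ᵇ L2I a} (hx : x ∈ PerC a Y) {ε : ℝ} (hε : 0 < ε) (n : ℝ) {s η : ℝ} (hs : 0 < s)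
    (hη : 0 < η) : ∃ w ∈ PerC a Y, dist w x ≤ ε ∧ ∃ κ, 0 < κ ∧
      ∀ lam ∈ Λ, Thin s η (ApproxSpec (pot a lam w) n κ) := by
  classical
  obtain ⟨⟨qx, hqx, hxper⟩, hxY⟩ := hx
  -- neighbourhoods of the exceptional energies
  have hfin := hS.finite_inter n
  set F := hfin.toFinset with hF
  obtain ⟨δ, hδ, hδη⟩ := exists_small_radius F.card hs (half_pos hη)
  set Q : Set (ℝ × ℝ) := {E | |E| ≤ n ∧ ∀ f ∈ F, δ ≤ |E - f|} ×ˢ Λ with hQ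
  have hQc : IsCompact Q := by
    refine IsCompact.prod ?_ hΛ
    refine (isCompact_Icc (a := -n) (b := n)).of_isClosed_subset ?_ fun E hE => abs_le.1 hE.1
    have e : {E : ℝ | |E| ≤ n ∧ ∀ f ∈ F, δ ≤ |E - f|} =
        {E | |E| ≤ n} ∩ ⋂ f ∈ F, {E | δ ≤ |E - f|} := by ext E; simp
    rw [e]
    exact (isClosed_le continuous_abs continuous_const).inter <| isClosed_biInter fun f _ =>
      isClosed_le continuous_const (by fun_prop)
  -- approximants with a gap near a given energy and coupling constant
  have hex : ∀ z : ℝ × ℝ, ∃ (y : ℤ → L2I a) (l : ℕ) (c d : ℝ), 0 < l ∧ 0 < c ∧ 0 < d ∧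
      (z ∈ Q → (∀ j, y (j + l) = y j) ∧ (∀ j, y j ∈ Y) ∧ (∀ j, ‖x j - y j‖ ≤ ε) ∧
        ∀ z' ∈ Metric.ball z d, LowS (pot a z'.2 y) z'.1 c) := by
    intro z
    by_cases hz : z ∈ Q
    · have hzS : z.1 ∉ S := fun h => by
        have := hz.1.2 z.1 (hfin.mem_toFinset.2 ⟨h, hz.1.1⟩)
        simp at this; linarith
      obtain ⟨y, l, hl, hyper, hyY, hyx, hgap⟩ := exists_gap_approx ha (hΛ0 _ hz.2) (hGR _ hz.2) hqx
        hxper hxY hzS hε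
      have hyb : ∀ j, ‖y j‖ ≤ ‖x‖ + ε := fun j => by
        have h1 := norm_sub_norm_le (y j) (x j)
        rw [norm_sub_rev] at h1
        linarith [hyx j, x.norm_coe_le_norm j]
      obtain ⟨c, d, hc, hd, hlow⟩ := exists_stable_gap ha hyb hgap
      refine ⟨y, l, c, d, hl, hc, hd, fun _ => ⟨hyper, hyY, hyx, fun z' hz' => ?_⟩⟩
      rw [Metric.mem_ball, Prod.dist_eq, max_lt_iff] at hz'
      exact hlow _ _ hz'.2 hz'.1
    · exact ⟨x, 1, 1, 1, one_pos, one_pos, one_pos, fun h => absurd h hz⟩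
  choose y l c d hl hc hd hprop using hex
  obtain ⟨t, htQ, htcov⟩ := hQc.elim_nhds_subcover (fun z => Metric.ball z (d z))
    fun z _ => Metric.ball_mem_nhds z (hd z)
  -- enumerate the approximants, and pad with `x`
  let e := t.equivFin
  set K := t.card + 1 with hKdef
  let yy : ℕ → ℤ → L2I a := fun i => if h : i < t.card then y (e.symm ⟨i, h⟩) else x
  have hyy : ∀ i, (∃ z ∈ t, yy i = y z) ∨ yy i = x := fun i => by
    by_cases h : i < t.card
    · exact Or.inl ⟨e.symm ⟨i, h⟩, (e.symm ⟨i, h⟩).2, by simp [yy, h]⟩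
    · exact Or.inr (by simp [yy, h])
  set q := qx * ∏ z ∈ t, l z with hq
  have hqpos : 0 < q := Nat.mul_pos hqx (Finset.prod_pos fun z _ => hl z)
  have hyyper : ∀ i j, ∀ m : ℕ, yy i (j + (q * m : ℕ)) = yy i j := by
    intro i j m
    rcases hyy i with ⟨z, hz, h⟩ | h
    · obtain ⟨r, hr⟩ := Finset.dvd_prod_of_mem l hz
      rw [h, hq, hr]
      have := periodic_int_mul (hprop z (htQ z hz)).1 (qx * r * m : ℕ) j
      rw [← this]; congr 1; push_cast; ring
    · rw [h, hq]
      have := periodic_int_mul hxper ((∏ z ∈ t, l z) * m : ℕ) j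
      rw [← this]; congr 1; push_cast; ring
  have hyyY : ∀ i j, yy i j ∈ Y := by
    intro i j
    rcases hyy i with ⟨z, hz, h⟩ | h
    · rw [h]; exact (hprop z (htQ z hz)).2.1 j
    · rw [h]; exact hxY j
  have hyyx : ∀ i j, ‖x j - yy i j‖ ≤ ε := by
    intro i j
    rcases hyy i with ⟨z, hz, h⟩ | h
    · rw [h]; exact (hprop z (htQ z hz)).2.2.1 j
    · rw [h, sub_self, norm_zero]; exact hε.le
  set c₀ := 1 + ∑ z ∈ t, c z with hc₀
  have hc₀pos : 0 < c₀ := by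
    have := Finset.sum_nonneg fun z (_ : z ∈ t) => (hc z).le
    linarith
  obtain ⟨R, hR⟩ := hΛ.isBounded.exists_norm_le
  obtain ⟨k, κ, hκ, hthin⟩ := exists_thin_period ha ((R * (‖x‖ + ε)) ^ 2) n c₀ hc₀pos K q
    (Nat.succ_pos _) hqpos hs (half_pos hη)
  set L := q * (2 * k + 2) with hL
  have hLpos : 0 < L := by positivity
  have hw1 : ∀ j, interlace L K yy j ∈ Y := fun j => by
    obtain ⟨i, -, hi⟩ := interlace_mem L (Nat.succ_pos t.card) yy j
    rw [hKdef, hi]; exact hyyY i j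
  have hw2 : ∀ j, ‖x j - interlace L K yy j‖ ≤ ε := fun j => by
    obtain ⟨i, -, hi⟩ := interlace_mem L (Nat.succ_pos t.card) yy j
    rw [hKdef, hi]; exact hyyx i j
  have hw3 : ∀ j, ‖interlace L K yy j‖ ≤ ‖x‖ + ε := fun j => by
    have h1 := norm_sub_norm_le (interlace L K yy j) (x j)
    rw [norm_sub_rev] at h1
    linarith [hw2 j, x.norm_coe_le_norm j]
  have hwper : ∀ j, interlace L K yy (j + (K * L : ℕ)) = interlace L K yy j :=
    interlace_periodic hLpos fun i j => hyyper i j (2 * k + 2)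
  let w : ℤ →ᵇ L2I a := BoundedContinuousFunction.ofNormedAddCommGroupDiscrete
    (interlace L K yy) (‖x‖ + ε) hw3
  refine ⟨w, ⟨⟨K * L, by positivity, hwper⟩, hw1⟩, ?_, κ, hκ, fun lam hlam => ?_⟩
  · rw [dist_comm, BoundedContinuousFunction.dist_le hε.le]
    intro j
    rw [dist_eq_norm]; exact hw2 j
  have hV : UnifL2 a ((R * (‖x‖ + ε)) ^ 2) (pot a lam w) :=
    unifL2_pot_of_le ha (hR lam hlam) hw3
  have h1 := hthin (pot a lam w) (fun i => pot a lam (yy i)) hV ?_ ?_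
  · refine (h1.union (thin_of_cover hδ.le le_rfl (A := {E | ∃ f ∈ F, |E - f| ≤ δ})
      fun E hE => hE)).mono ?_ ?_
    · linarith
    · rintro E ⟨hE, hsol⟩
      by_cases hEF : ∃ f ∈ F, |E - f| ≤ δ
      · exact Or.inr hEF
      · push Not at hEF
        refine Or.inl ⟨hE, ?_, hsol⟩
        obtain ⟨z, hz, hmem⟩ := mem_iUnion₂.1
          (htcov (show (E, lam) ∈ Q from ⟨⟨hE, fun f hf => (hEF f hf).le⟩, hlam⟩))
        refine ⟨e ⟨z, hz⟩, (e ⟨z, hz⟩).2.trans (Nat.lt_succ_self _), ?_⟩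
        have e1 : yy (e ⟨z, hz⟩) = y z := by simp [yy]
        rw [e1]
        refine ((hprop z (htQ z hz)).2.2.2 _ hmem).mono ?_
        have := Finset.single_le_sum (fun z (_ : z ∈ t) => (hc z).le) hz
        linarith
  · intro m p
    have e1 : (m * (K * L : ℕ) * a : ℝ) = ((m * (K * L : ℕ) : ℤ) : ℝ) * a := by push_cast; ring
    rw [e1, pot, pot, aggC_shift ha]
    congr 2
    funext j
    exact periodic_int_mul hwper m j
  · intro i hi p hp m
    have hj : interlace L K yy ⌊(p + m * (K * L : ℕ) * a) / a⌋ =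
        yy i ⌊(p + m * (K * L : ℕ) * a) / a⌋ := by
      have e1 : (p + m * (K * L : ℕ) * a) / a = p / a + ((m * (K * L) : ℤ) : ℝ) := by
        push_cast; field_simp
      have h2 : ((i * L : ℕ) : ℝ) ≤ p / a := by rw [le_div_iff₀ ha]; exact hp.1.le
      have h3 : p / a < ((i * L + (2 * k + 2) : ℕ) : ℝ) := by rw [div_lt_iff₀ ha]; exact hp.2
      have h4 : ((i * L : ℕ) : ℤ) ≤ ⌊p / a⌋ := Int.le_floor.2 (by exact_mod_cast h2)
      have h5 : ⌊p / a⌋ < ((i * L + (2 * k + 2) : ℕ) : ℤ) := Int.floor_lt.2 (by exact_mod_cast h3)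
      have h6 : 2 * k + 2 ≤ L := Nat.le_mul_of_pos_left _ hqpos
      rw [e1, Int.floor_add_intCast]
      apply interlace_eq hLpos hi yy m
      · push_cast at h4; linarith
      · push_cast at h5
        have : (2 * (k : ℤ) + 2) ≤ L := by exact_mod_cast h6
        linarith
    show lam * aggC a (interlace L K yy) _ = lam * aggC a (yy i) _
    simp only [aggC, hj]

/-! ### Hausdorff dimension zero for generic sequences -/

/-- Spectra of sequences near `w` lie in the approximate spectrum of `w`, uniformly in bounded
couplings. -/
theorem spec_subset_approxSpec {a : ℝ} (ha : 0 < a) (w : ℤ →ᵇ L2I a) (R n : ℝ) {κ : ℝ}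
    (hκ : 0 < κ) : ∃ r, 0 < r ∧ ∀ y : ℤ →ᵇ L2I a, dist y w < r → ∀ lam, |lam| ≤ R →
      ContSpectrum (pot a lam y) ∩ {E | |E| ≤ n} ⊆ ApproxSpec (pot a lam w) n κ := by
  obtain ⟨K, hK, hloc⟩ := exists_local_bound ha ((R * (‖w‖ + 1)) ^ 2) n
  refine ⟨min 1 (κ / (24 * K * (R ^ 2 + 1))), lt_min one_pos (by positivity), ?_⟩
  intro y hy lam hlam E hE
  obtain ⟨hE, hEn⟩ := hE
  have hR : 0 ≤ R := (abs_nonneg _).trans hlam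
  set r := dist y w with hr
  have hr0 : 0 ≤ r := dist_nonneg
  have hr1 : r ≤ 1 := hy.le.trans (min_le_left _ _)
  have hr2 : 24 * K * (R ^ 2 + 1) * r ≤ κ := by
    have := hy.le.trans (min_le_right _ _)
    rw [le_div_iff₀ (by positivity)] at this
    linarith
  have hyw : ∀ j, ‖y j - w j‖ ≤ r := fun j => by
    rw [← dist_eq_norm]; exact dist_coe_le_dist j
  have hyn : ∀ j, ‖y j‖ ≤ ‖w‖ + 1 := fun j => by
    have h1 := norm_coe_le_norm w j
    have h2 := norm_sub_norm_le (y j) (w j)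
    linarith [hyw j]
  have hU := unifL2_pot_of_le ha hlam hyn
  obtain ⟨u, v, h, s, hlt⟩ := exists_sol_of_mem_spec (hU.locL2 ha) hE
    (κ := min 1 (κ / 12)) (lt_min one_pos (by positivity))
  have hclose : CloseL2 a (R ^ 2 * r) (pot a lam w) (pot a lam y) := by
    refine closeL2_pot ha fun j => ?_
    rw [← smul_sub, norm_smul, mul_pow, Real.norm_eq_abs, norm_sub_rev]
    have h1 : ‖y j - w j‖ ^ 2 ≤ r := by nlinarith [hyw j, norm_nonneg (y j - w j)]
    exact mul_le_mul (pow_le_pow_left₀ (abs_nonneg _) hlam 2) h1 (by positivity) (by positivity)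
  obtain ⟨h', s', hh'⟩ := s.perturb ha hloc hK hU hclose hEn (E := E)
  refine ⟨hEn, u, v, h', s', ?_⟩
  have hI : 0 ≤ ∫ t, u t ^ 2 := integral_nonneg fun t => sq_nonneg _
  have hJ : 0 ≤ ∫ t, h t ^ 2 := integral_nonneg fun t => sq_nonneg _
  set I := ∫ t, u t ^ 2
  set J := ∫ t, h t ^ 2
  have hJ1 : J ≤ I := by
    have : min 1 (κ / 12) * I ≤ 1 * I := by gcongr; exact min_le_left _ _
    linarith
  have hJ2 : J < κ / 12 * I := by
    have : min 1 (κ / 12) * I ≤ κ / 12 * I := by gcongr; exact min_le_right _ _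
    linarith
  have h3 : 3 * (K * (R ^ 2 * r)) * (I + J) ≤ 3 * (K * (R ^ 2 * r)) * (I + I) := by gcongr
  have h4 : K * (R ^ 2 * r) ≤ κ / 24 := by
    have : 0 ≤ K * r := by positivity
    nlinarith
  have h5 : K * (R ^ 2 * r) * I ≤ κ / 24 * I := by gcongr
  have hκI : 0 ≤ κ * I := by positivity
  have h6 : 3 * (E - E) ^ 2 * I = 0 := by ring
  nlinarith

/-- Covers of bounded parts of `A` at all scales `1/(m+1)` with exponents `1/(m+1)` bound every
`d`-dimensional Hausdorff measure, `d > 0`, because the exponents eventually drop below `d`. -/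
theorem dimH_eq_zero_of_thin {A : Set ℝ} (h : ∀ N : ℕ, ∃ m₀ : ℕ, ∀ m : ℕ, m₀ ≤ m →
    Thin (1 / (m + 1)) (1 / (m + 1)) (A ∩ {x | |x| ≤ N})) : dimH A = 0 := by
  have hA : A = ⋃ N : ℕ, A ∩ {x | |x| ≤ N} := by
    ext x
    simp only [mem_iUnion, mem_inter_iff, exists_and_left]
    refine ⟨fun hx => ⟨hx, ?_⟩, fun hx => hx.1⟩
    exact exists_nat_ge |x|
  rw [hA, dimH_iUnion]
  simp only [ENNReal.iSup_eq_zero]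
  intro N
  obtain ⟨m₀, hm₀⟩ := h N
  refine le_antisymm (ENNReal.le_of_forall_pos_le_add fun d hd _ => ?_) bot_le
  rw [zero_add]
  have hd' : (0 : ℝ) < d := by exact_mod_cast hd
  obtain ⟨m₁, hm₁⟩ := exists_nat_one_div_lt hd'
  set M := m₀ + m₁ + 1 with hM
  have ht : ∀ k : ℕ, Thin (1 / ((k + M : ℕ) + 1)) (1 / ((k + M : ℕ) + 1))
      (A ∩ {x | |x| ≤ N}) := fun k => hm₀ _ (by lia)
  choose t h1 h2 h3 using ht
  apply dimH_le_of_hausdorffMeasure_ne_top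
  have hη : ∀ k : ℕ, (1 : ℝ) / ((k + M : ℕ) + 1) ≤ 1 / 2 := fun k => by
    apply one_div_le_one_div_of_le two_pos
    have : (1 : ℝ) ≤ (k + M : ℕ) := by exact_mod_cast (by lia)
    linarith
  have hdiam : ∀ k, ∀ i : t k, Metric.ediam (Metric.closedBall i.1.1 i.1.2) ≤
      ENNReal.ofReal (2 * i.1.2) := fun k i => by
    rw [Real.closedBall_eq_Icc, Real.ediam_Icc]
    exact ENNReal.ofReal_le_ofReal (by linarith)
  have hle := Measure.hausdorffMeasure_le_liminf_sum (d : ℝ) (A ∩ {x : ℝ | |x| ≤ N}) (l := atTop)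
    (fun k : ℕ => ENNReal.ofReal (2 * (1 / ((k + M : ℕ) + 1)))) ?_
    (fun k => fun i : t k => Metric.closedBall i.1.1 i.1.2) ?_ ?_
  · refine ne_top_of_le_ne_top ENNReal.one_ne_top (hle.trans ?_)
    refine liminf_le_of_frequently_le' (Frequently.of_forall fun k => ?_)
    calc _ ≤ ∑ i : t k, ENNReal.ofReal ((2 * i.1.2) ^ (1 / ((k + M : ℕ) + 1) : ℝ)) := by
          refine Finset.sum_le_sum fun i _ => ?_
          have hi := h1 k i.1 i.2
          have hk := hη k
          refine (ENNReal.rpow_le_rpow (hdiam k i) d.2).trans ?_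
          rw [ENNReal.ofReal_rpow_of_nonneg (by linarith) d.2]
          refine ENNReal.ofReal_le_ofReal ?_
          refine Real.rpow_le_rpow_of_exponent_ge_of_imp (by linarith) (by linarith) ?_ ?_
          · refine le_trans ?_ hm₁.le
            apply one_div_le_one_div_of_le (by positivity)
            have : (m₁ : ℝ) ≤ (k + M : ℕ) := by exact_mod_cast (by lia)
            linarith
          · intro _ h0
            have : (0 : ℝ) < 1 / ((k + M : ℕ) + 1) := by positivity
            exact absurd h0 hd'.ne'
      _ = ENNReal.ofReal (∑ i : t k, (2 * i.1.2) ^ (1 / ((k + M : ℕ) + 1) : ℝ)) := by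
          rw [ENNReal.ofReal_sum_of_nonneg]
          intro i _
          exact Real.rpow_nonneg (by linarith [(h1 k i.1 i.2).1]) _
      _ ≤ 1 := by
          rw [ENNReal.ofReal_le_one, Finset.sum_coe_sort (t k)
            (fun p : ℝ × ℝ => (2 * p.2) ^ (1 / ((k + M : ℕ) + 1) : ℝ))]
          linarith [h3 k, hη k]
  · have h0 : Tendsto (fun k : ℕ => 2 * (1 / (((k + M : ℕ) : ℝ) + 1))) atTop (𝓝 (2 * 0)) :=
      ((tendsto_one_div_add_atTop_nhds_zero_nat (𝕜 := ℝ)).comp (tendsto_add_atTop_nat M)).const_mul 2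
    simpa using ENNReal.tendsto_ofReal h0
  · refine Eventually.of_forall fun k i => (hdiam k i).trans (ENNReal.ofReal_le_ofReal ?_)
    have := (h1 k i.1 i.2).2
    linarith
  · refine Eventually.of_forall fun k x hx => ?_
    obtain ⟨p, hp, hxp⟩ := h2 k x hx
    exact mem_iUnion.2 ⟨⟨p, hp⟩, by simpa [Metric.mem_closedBall, Real.dist_eq] using hxp⟩

/-- The sequences all of whose spectra, for couplings in `Z`, have Hausdorff dimension zero contain
a dense `Gδ` subset of the limit-periodic sequences. -/
theorem exists_residual_dimH_zero {a : ℝ} (ha : 0 < a) {S : Set ℝ} (hS : IsDiscreteSet S)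
    {Y : Set (L2I a)} {Z : Set ℝ} (hZ0 : ∀ lam ∈ Z, lam ≠ 0) (hZσ : IsSigmaCompact Z)
    (hGR : ∀ lam ∈ Z, GapRichC a ((fun φ => lam • φ) '' Y) S) :
    ∃ R : Set (LPC a Y), IsGδ R ∧ Dense R ∧
      ∀ y ∈ R, ∀ lam ∈ Z, dimH (ContSpectrum (pot a lam (⇑(y : ℤ →ᵇ L2I a)))) = 0 := by
  obtain ⟨Λ, hΛ, hΛZ⟩ := hZσ
  set Λ' : ℕ → Set ℝ := fun m => ⋃ i ≤ m, Λ i with hΛ'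
  have hΛ'c : ∀ m, IsCompact (Λ' m) := fun m => (Set.finite_Iic m).isCompact_biUnion fun i _ => hΛ i
  have hΛ'Z : ∀ m, ∀ lam ∈ Λ' m, lam ∈ Z := fun m lam h => by
    obtain ⟨i, -, hi⟩ := mem_iUnion₂.1 h
    exact hΛZ ▸ mem_iUnion.2 ⟨i, hi⟩
  -- `U m` is the open set of sequences whose spectra are thin up to precision `1 / (m + 1)`
  set P : ℕ → (ℤ →ᵇ L2I a) → Prop := fun m y => ∀ lam ∈ Λ' m,
    Thin (1 / (m + 1)) (1 / (m + 1)) (ContSpectrum (pot a lam y) ∩ {E | |E| ≤ m}) with hP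
  set U : ℕ → Set (LPC a Y) := fun m => interior {y | P m y} with hU
  have hopen : ∀ m, IsOpen (U m) := fun m => isOpen_interior
  have hdense : ∀ m, Dense (U m) := by
    intro m
    rw [Metric.dense_iff]
    intro y ε hε
    obtain ⟨x, hx, hxy⟩ := Metric.mem_closure_iff.1 y.2 (ε / 2) (half_pos hε)
    obtain ⟨w, hw, hwx, κ, hκ, hthin⟩ := exists_thin_approx ha hS (hΛ'c m)
      (fun lam h => hZ0 _ (hΛ'Z m _ h)) (fun lam h => hGR _ (hΛ'Z m _ h)) hx (ε := ε / 4)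
      (by positivity) m (s := 1 / (m + 1)) (η := 1 / (m + 1)) (by positivity) (by positivity)
    refine ⟨⟨w, subset_closure hw⟩, ?_, ?_⟩
    · rw [Metric.mem_ball, Subtype.dist_eq]
      have := dist_triangle w x (y : ℤ →ᵇ L2I a)
      rw [dist_comm] at hxy
      show dist w (y : ℤ →ᵇ L2I a) < ε
      linarith
    · obtain ⟨R, hR⟩ := (hΛ'c m).isBounded.exists_norm_le
      obtain ⟨r, hr, hsub⟩ := spec_subset_approxSpec ha w R m hκ
      refine mem_interior_iff_mem_nhds.2 (mem_of_superset (Metric.ball_mem_nhds _ hr) ?_)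
      intro z hz lam hlam
      exact (hthin lam hlam).mono le_rfl (hsub z hz lam (hR lam hlam))
  have hcomplete : CompleteSpace (LPC a Y) := (isClosed_closure (s := PerC a Y)).completeSpace_coe
  refine ⟨⋂ m, U m, IsGδ.iInter_of_isOpen hopen, dense_iInter_of_isOpen hopen hdense, ?_⟩
  intro y hy lam hlam
  rw [← hΛZ] at hlam
  obtain ⟨i, hi⟩ := mem_iUnion.1 hlam
  refine dimH_eq_zero_of_thin fun N => ⟨max i N, fun m hm => ?_⟩
  have h1 : P m y := interior_subset (mem_iInter.1 hy m)
  refine (h1 lam (mem_iUnion₂.2 ⟨i, (le_max_left _ _).trans hm, hi⟩)).mono le_rfl ?_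
  intro E hE
  have : (N : ℝ) ≤ m := by exact_mod_cast (le_max_right _ _).trans hm
  exact ⟨hE.1, le_trans hE.2 this⟩

theorem interior_eq_empty_of_dimH {s : Set ℝ} (h : dimH s = 0) : interior s = ∅ := by
  by_contra hne
  have := Real.dimH_of_nonempty_interior (nonempty_iff_ne_empty.2 hne)
  rw [h] at this
  simp at this

/-! ### Symmetric operators bounded below off a gap -/

section Abstract

variable {H : Type*} [NormedAddCommGroup H] [InnerProductSpace ℝ H]

/-- A symmetric operator `C` with `C - t` bounded below for every `t < 0` is nonnegative: if the
infimum `m` of its quadratic form were negative, `C - m` would not be bounded below. -/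
theorem inner_nonneg_of_bddBelow {C : H →L[ℝ] H} (hsym : ∀ u v, inner ℝ (C u) v = inner ℝ u (C v))
    (hC : ∀ t : ℝ, t < 0 → ∃ c, 0 < c ∧ ∀ u, c * ‖u‖ ≤ ‖C u - t • u‖) (u : H) : 0 ≤ inner ℝ (C u) u := by
  by_contra hneg
  push Not at hneg
  have hu : u ≠ 0 := by rintro rfl; simp at hneg
  have hun : 0 < ‖u‖ := norm_pos_iff.2 hu
  set Q : Set ℝ := {q | ∃ w, ‖w‖ = 1 ∧ q = inner ℝ (C w) w} with hQ
  have hscale : ∀ w : H, w ≠ 0 → inner ℝ (C w) w / ‖w‖ ^ 2 ∈ Q := fun w hw => by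
    have hwn : 0 < ‖w‖ := norm_pos_iff.2 hw
    refine ⟨‖w‖⁻¹ • w, by rw [norm_smul]; simp [hwn.ne'], ?_⟩
    rw [map_smul, real_inner_smul_left, real_inner_smul_right]
    field_simp
  have hbdd : BddBelow Q := by
    refine ⟨-‖C‖, ?_⟩
    rintro q ⟨w, hw, rfl⟩
    have h1 := abs_real_inner_le_norm (C w) w
    have h2 := C.le_opNorm w
    rw [hw, mul_one] at h1 h2
    linarith [neg_abs_le (inner ℝ (C w) w : ℝ)]
  set m := sInf Q with hm
  have hm0 : m < 0 := (csInf_le hbdd (hscale u hu)).trans_lt (div_neg_of_neg_of_pos hneg (by positivity))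
  obtain ⟨c, hc, hlow⟩ := hC m hm0
  have hform : ∀ w, inner ℝ (C w - m • w) w = inner ℝ (C w) w - m * ‖w‖ ^ 2 := fun w => by
    rw [inner_sub_left, real_inner_smul_left, real_inner_self_eq_norm_sq]
  have hpos : ∀ w, 0 ≤ inner ℝ (C w - m • w) w := fun w => by
    rw [hform]
    rcases eq_or_ne w 0 with rfl | hw
    · simp
    · have h1 := csInf_le hbdd (hscale w hw)
      have hwn : 0 < ‖w‖ ^ 2 := by have := norm_pos_iff.2 hw; positivity
      rw [le_div_iff₀ hwn] at h1
      linarith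
  -- `‖B w‖² ≤ M ⟪B w, w⟫` for the nonnegative operator `B = C - m`
  set B : H →L[ℝ] H := C - m • ContinuousLinearMap.id ℝ H with hB
  have hBe : ∀ w, B w = C w - m • w := fun w => by simp [hB]
  have hBsym : ∀ w z, inner ℝ (B w) z = inner ℝ w (B z) := fun w z => by
    simp only [hBe, inner_sub_left, inner_sub_right, real_inner_smul_left, real_inner_smul_right,
      hsym]
  set M := ‖B‖ + 1 with hM
  have hMpos : 0 < M := by positivity
  have hCS : ∀ w, ‖B w‖ ^ 2 ≤ M * inner ℝ (B w) w := fun w => by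
    have h1 := hpos (w - M⁻¹ • B w)
    rw [← hBe] at h1
    have h2 : inner ℝ (B (w - M⁻¹ • B w)) (w - M⁻¹ • B w) = inner ℝ (B w) w
        - 2 * M⁻¹ * ‖B w‖ ^ 2 + M⁻¹ ^ 2 * inner ℝ (B (B w)) (B w) := by
      rw [map_sub, map_smul, inner_sub_left, inner_sub_right, inner_sub_right,
        real_inner_smul_left, real_inner_smul_right, real_inner_smul_left, real_inner_smul_right,
        hBsym (B w) w, real_inner_self_eq_norm_sq]
      ring
    have h3 : inner ℝ (B (B w)) (B w) ≤ M * ‖B w‖ ^ 2 := by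
      have h4 := (le_abs_self _).trans (abs_real_inner_le_norm (B (B w)) (B w))
      have h5 := B.le_opNorm (B w)
      have h6 := norm_nonneg (B w)
      nlinarith
    have h7 : M⁻¹ ^ 2 * inner ℝ (B (B w)) (B w) ≤ M⁻¹ ^ 2 * (M * ‖B w‖ ^ 2) := by gcongr
    have h8 : M⁻¹ ^ 2 * (M * ‖B w‖ ^ 2) = M⁻¹ * ‖B w‖ ^ 2 := by field_simp
    have h9 : M⁻¹ * ‖B w‖ ^ 2 ≤ inner ℝ (B w) w := by linarith
    calc ‖B w‖ ^ 2 = M * (M⁻¹ * ‖B w‖ ^ 2) := by field_simp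
      _ ≤ _ := by gcongr
  obtain ⟨q, ⟨w, hw, rfl⟩, hq⟩ := exists_lt_of_csInf_lt ⟨_, hscale u hu⟩
    (show sInf Q < m + c ^ 2 / (2 * M) by rw [← hm]; linarith [show 0 < c ^ 2 / (2 * M) by positivity])
  have h1 := hlow w
  rw [← hBe, hw, mul_one] at h1
  have h2 := hCS w
  rw [hBe, hform, ← hBe, hw] at h2
  have h3 : M * (inner ℝ (C w) w - m * 1 ^ 2) ≤ M * (c ^ 2 / (2 * M)) := by gcongr; linarith
  have h4 : M * (c ^ 2 / (2 * M)) = c ^ 2 / 2 := by field_simp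
  nlinarith

/-- If `A` is symmetric and `A - s` is bounded below for `0 < |s| < s₀`, then `A` is bounded below
on its range. -/
theorem norm_apply_apply_ge {A : H →L[ℝ] H} (hsym : ∀ u v, inner ℝ (A u) v = inner ℝ u (A v))
    {s₀ : ℝ} (hA : ∀ s : ℝ, s ≠ 0 → |s| < s₀ → ∃ c, 0 < c ∧ ∀ u, c * ‖u‖ ≤ ‖A u - s • u‖)
    {s₁ : ℝ} (hs₁ : 0 < s₁) (hs : s₁ < s₀) (u : H) : s₁ * ‖A u‖ ≤ ‖A (A u)‖ := by
  -- `A² - β` is bounded below for `0 < β < s₁²`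
  have hB : ∀ β, 0 < β → β < s₁ ^ 2 → ∃ c, 0 < c ∧ ∀ u, c * ‖u‖ ≤ ‖A (A u) - β • u‖ := by
    intro β hβ hβ1
    have h1 : Real.sqrt β < s₁ := (Real.sqrt_lt' hs₁).2 hβ1
    have h0 : 0 < Real.sqrt β := Real.sqrt_pos.2 hβ
    obtain ⟨c₁, hc₁, h₁⟩ := hA (Real.sqrt β) h0.ne' (by rw [abs_of_pos h0]; linarith)
    obtain ⟨c₂, hc₂, h₂⟩ := hA (-Real.sqrt β) (by linarith) (by rw [abs_neg, abs_of_pos h0]; linarith)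
    refine ⟨c₁ * c₂, by positivity, fun u => ?_⟩
    have e : A (A u) - β • u = A (A u - (-Real.sqrt β) • u) - Real.sqrt β • (A u - (-Real.sqrt β) • u) := by
      have : β = Real.sqrt β * Real.sqrt β := (Real.mul_self_sqrt hβ.le).symm
      nth_rewrite 1 [this]
      rw [map_sub, map_smul, mul_smul]
      module
    rw [e]
    calc c₁ * c₂ * ‖u‖ = c₁ * (c₂ * ‖u‖) := by ring
      _ ≤ c₁ * ‖A u - (-Real.sqrt β) • u‖ := by gcongr; exact h₂ u
      _ ≤ _ := h₁ _
  set c := s₁ ^ 2 with hc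
  set D : H →L[ℝ] H := A.comp A with hD
  have hDe : ∀ u, D u = A (A u) := fun u => rfl
  have hDsym : ∀ u v, inner ℝ (D u) v = inner ℝ u (D v) := fun u v => by rw [hDe, hDe, hsym, hsym]
  set C : H →L[ℝ] H := D.comp D - c • D with hCdef
  have hCe : ∀ u, C u = D (D u) - c • D u := fun u => by simp [hCdef]
  have hCsym : ∀ u v, inner ℝ (C u) v = inner ℝ u (C v) := fun u v => by
    simp only [hCe, inner_sub_left, inner_sub_right, real_inner_smul_left, real_inner_smul_right,
      hDsym]
  have hpos := inner_nonneg_of_bddBelow hCsym (fun t ht => ?_) u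
  · rw [hCe, inner_sub_left, real_inner_smul_left, hDsym, real_inner_self_eq_norm_sq, hDe, hsym,
      real_inner_self_eq_norm_sq, hc, sub_nonneg, ← mul_pow] at hpos
    exact (pow_le_pow_iff_left₀ (by positivity) (norm_nonneg _) two_ne_zero).1 hpos
  · rcases lt_or_ge t (-(c ^ 2 / 4)) with h | h
    · -- no real root: `C - t = (D - c/2)² + (-t - c²/4)`
      refine ⟨-t - c ^ 2 / 4, by linarith, fun w => ?_⟩
      have h1 : inner ℝ (C w - t • w) w = ‖D w - (c / 2) • w‖ ^ 2 + (-t - c ^ 2 / 4) * ‖w‖ ^ 2 := by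
        rw [← real_inner_self_eq_norm_sq, ← real_inner_self_eq_norm_sq]
        simp only [hCe, inner_sub_left, inner_sub_right, real_inner_smul_left,
          real_inner_smul_right, hDsym (D w) w, hDsym w w]
        ring
      have h2 := (le_abs_self _).trans (abs_real_inner_le_norm (C w - t • w) w)
      rcases (norm_nonneg w).eq_or_lt with h0 | h0
      · rw [← h0, mul_zero]; exact norm_nonneg _
      · have h3 : 0 ≤ ‖D w - (c / 2) • w‖ ^ 2 := by positivity
        refine le_of_mul_le_mul_right ?_ h0
        nlinarith
    · -- two roots in `(0, c)`
      have hc0 : 0 < c := by positivity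
      set d := Real.sqrt (c ^ 2 / 4 + t) with hd
      have hd2 : d ^ 2 = c ^ 2 / 4 + t := Real.sq_sqrt (by linarith)
      have hd0 : 0 ≤ d := Real.sqrt_nonneg _
      have hdc : d < c / 2 := by nlinarith
      obtain ⟨c₁, hc₁, h₁⟩ := hB (c / 2 + d) (by linarith) (by linarith)
      obtain ⟨c₂, hc₂, h₂⟩ := hB (c / 2 - d) (by linarith) (by linarith)
      refine ⟨c₁ * c₂, by positivity, fun w => ?_⟩
      have e : C w - t • w = D (D w - (c / 2 - d) • w) - (c / 2 + d) • (D w - (c / 2 - d) • w) := by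
        have ht : t = d ^ 2 - c ^ 2 / 4 := by linarith
        rw [hCe, map_sub, map_smul, ht]
        module
      rw [e]
      calc c₁ * c₂ * ‖w‖ = c₁ * (c₂ * ‖w‖) := by ring
        _ ≤ c₁ * ‖D w - (c / 2 - d) • w‖ := by gcongr; exact h₂ w
        _ ≤ _ := h₁ _

/-- Under the same hypotheses, every vector is within `‖A ψ‖ / s₁` of the kernel of `A`. -/
theorem exists_ker_near [CompleteSpace H] {A : H →L[ℝ] H}
    (hsym : ∀ u v, inner ℝ (A u) v = inner ℝ u (A v))
    {s₀ : ℝ} (hA : ∀ s : ℝ, s ≠ 0 → |s| < s₀ → ∃ c, 0 < c ∧ ∀ u, c * ‖u‖ ≤ ‖A u - s • u‖)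
    {s₁ : ℝ} (hs₁ : 0 < s₁) (hs : s₁ < s₀) (ψ : H) : ∃ p, A p = 0 ∧ s₁ * ‖ψ - p‖ ≤ ‖A ψ‖ := by
  set K : Submodule ℝ H := A.range.topologicalClosure with hK
  have hKcl : IsClosed (K : Set H) := A.range.isClosed_topologicalClosure
  have : CompleteSpace K := hKcl.completeSpace_coe
  have hlow : ∀ q ∈ K, s₁ * ‖q‖ ≤ ‖A q‖ := by
    have hcl : IsClosed {q : H | s₁ * ‖q‖ ≤ ‖A q‖} :=
      isClosed_le (by fun_prop) (by fun_prop)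
    intro q hq
    refine closure_minimal ?_ hcl hq
    rintro _ ⟨w, rfl⟩
    exact norm_apply_apply_ge hsym hA hs₁ hs w
  obtain ⟨q, hq, p, hp, e⟩ := K.exists_add_mem_mem_orthogonal ψ
  have hAp : A p = 0 := by
    rw [Submodule.mem_orthogonal] at hp
    have := hp (A (A p)) (A.range.le_topologicalClosure ⟨A p, rfl⟩)
    rw [hsym, real_inner_self_eq_norm_sq] at this
    exact norm_eq_zero.1 (pow_eq_zero_iff two_ne_zero |>.1 this)
  refine ⟨p, hAp, ?_⟩
  have h1 : ψ - p = q := by rw [e]; abel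
  have h2 : A ψ = A q := by rw [e, map_add, hAp, add_zero]
  rw [h1, h2]
  exact hlow q hq

end Abstract

/-! ### The spectrum is nonempty, and isolated points are eigenvalues -/

theorem resolvent_bddBelow {V : ℝ → ℝ} (hV : LocL2 V) {E : ℝ} {T : L2R →L[ℝ] L2R}
    (h1 : ∀ f : L2R, WeakSchrodingerEq V E (T f) f) {t : ℝ} (ht : t ≠ 0)
    (hE : E + t⁻¹ ∉ ContSpectrum V) : ∃ c, 0 < c ∧ ∀ f, c * ‖f‖ ≤ ‖T f - t • f‖ := by
  obtain ⟨c, hc⟩ := (notMem_spec_iff hV _).1 hE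
  have ht' : 0 < |t| := abs_pos.2 ht
  refine ⟨|t| / (|c| / |t| + 1), by positivity, fun f => ?_⟩
  set k := T f - t • f with hk
  have h2 := weak_shift hV (E' := E + t⁻¹) (h1 f)
  have e : f + (E - (E + t⁻¹)) • T f = -(t⁻¹ • k) := by
    rw [hk, smul_sub, smul_smul, inv_mul_cancel₀ ht]
    module
  rw [e] at h2
  have h3 : ‖T f‖ ≤ |c| / |t| * ‖k‖ := by
    refine (hc _ _ h2).trans ?_
    rw [norm_neg, norm_smul, norm_inv, Real.norm_eq_abs]
    have := le_abs_self c
    calc c * (|t|⁻¹ * ‖k‖) ≤ |c| * (|t|⁻¹ * ‖k‖) := by gcongr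
      _ = _ := by ring
  have h4 : |t| * ‖f‖ ≤ ‖T f‖ + ‖k‖ := by
    rw [← Real.norm_eq_abs, ← norm_smul]
    have : t • f = T f - k := by rw [hk]; abel
    rw [this]
    exact norm_sub_le _ _
  rw [div_mul_eq_mul_div, div_le_iff₀ (by positivity)]
  nlinarith

theorem exists_test_ne_zero : ∃ φ : ℝ → ℝ, ∃ hφ : IsTest φ, (hφ.memLp.toLp φ : L2R) ≠ 0 := by
  let f : ContDiffBump (0 : ℝ) := default
  have hf : IsTest f := ⟨f.contDiff, f.hasCompactSupport⟩
  refine ⟨f, hf, fun h0 => ?_⟩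
  have h1 : ⇑f =ᵐ[volume] fun _ => 0 := by
    have h2 := hf.memLp.coeFn_toLp
    rw [h0] at h2
    exact h2.symm.trans (Lp.coeFn_zero _ _ _)
  have h3 := (f.continuous.ae_eq_iff_eq volume continuous_const).1 h1
  have h4 := f.one_of_mem_closedBall (Metric.mem_closedBall_self f.rIn_pos.le)
  rw [h3] at h4
  exact zero_ne_one h4

/-- With empty spectrum, the resolvent `T` at `0` would have `T - t` bounded below for all `t ≠ 0`, so
both `T` and `-T` would be nonnegative and `T` would vanish. -/
theorem contSpectrum_nonempty {V : ℝ → ℝ} (hV : LocL2 V) : (ContSpectrum V).Nonempty := by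
  by_contra hne
  rw [not_nonempty_iff_eq_empty] at hne
  have hno : ∀ E, E ∉ ContSpectrum V := fun E => by rw [hne]; simp
  have h0 := hno 0
  simp only [ContSpectrum, mem_ofPred_eq, not_not] at h0
  obtain ⟨T, h1, h2⟩ := h0
  have hsym := resolvent_symm hV h1 h2
  have hbd := fun (t : ℝ) (ht : t ≠ 0) => resolvent_bddBelow hV h1 ht (hno _)
  have hpos := inner_nonneg_of_bddBelow hsym fun t ht => hbd t ht.ne
  have hneg := inner_nonneg_of_bddBelow (C := -T)
    (fun u v => by simp [hsym]) fun t ht => by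
      obtain ⟨c, hc, h⟩ := hbd (-t) (by linarith [ht] : (-t) ≠ 0)
      refine ⟨c, hc, fun u => (h u).trans_eq ?_⟩
      rw [← norm_neg]
      congr 1
      simp only [_root_.neg_apply]
      module
  have hq : ∀ u, inner ℝ (T u) u = 0 := fun u =>
    le_antisymm (by have := hneg u; simp at this; exact this) (hpos u)
  have hT : ∀ u, T u = 0 := fun u => by
    have h3 := hq (u + T u)
    rw [map_add, inner_add_left, inner_add_right, inner_add_right, hq, hq, hsym (T u) u,
      real_inner_self_eq_norm_sq] at h3
    have : ‖T u‖ ^ 2 = 0 := by linarith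
    exact norm_eq_zero.1 (pow_eq_zero_iff two_ne_zero |>.1 this)
  obtain ⟨φ, hφ, hφ0⟩ := exists_test_ne_zero
  exact hφ0 ((h2 _ _ (weak_test hV 0 hφ)).symm.trans (hT _))

/-- Near an isolated point of the spectrum, an approximate solution is close to an eigenfunction. -/
theorem exists_eigen_near {V : ℝ → ℝ} (hV : LocL2 V) {E r : ℝ} (hr : 0 < r)
    (hiso : ∀ E' ∈ ContSpectrum V, |E' - E| < r → E' = E) : ∃ C, 0 < C ∧
      ∀ g h, WeakSchrodingerEq V E g h → ∃ p, WeakSchrodingerEq V E p 0 ∧ ‖g - p‖ ≤ C * ‖h‖ := by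
  have hE' : E + r / 2 ∉ ContSpectrum V := fun h => by
    have := hiso _ h (by rw [add_sub_cancel_left, abs_of_pos] <;> linarith)
    linarith
  have h0 := hE'
  simp only [ContSpectrum, mem_ofPred_eq, not_not] at h0
  obtain ⟨T, h1, h2⟩ := h0
  have hsym := resolvent_symm hV h1 h2
  set A : L2R →L[ℝ] L2R := T + (2 / r) • ContinuousLinearMap.id ℝ L2R with hAdef
  have hAe : ∀ u, A u = T u + (2 / r) • u := fun u => by simp [hAdef]
  have hAsym : ∀ u v, inner ℝ (A u) v = inner ℝ u (A v) := fun u v => by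
    simp only [hAe, inner_add_left, inner_add_right, real_inner_smul_left, real_inner_smul_right,
      hsym]
  have hA : ∀ s : ℝ, s ≠ 0 → |s| < 1 / r → ∃ c, 0 < c ∧ ∀ u, c * ‖u‖ ≤ ‖A u - s • u‖ := by
    intro s hs hsr
    obtain ⟨hs1, hs2⟩ := abs_lt.1 hsr
    have hr' : 0 < 1 / r := by positivity
    have hr2 : 2 / r = 2 * (1 / r) := by ring
    have htneg : s - 2 / r < 0 := by linarith
    have hgap : E + r / 2 + (s - 2 / r)⁻¹ ∉ ContSpectrum V := by
      intro hmem
      -- with `x = r s ∈ (-1, 1)` the energy is `E + r/2 + r/(x - 2)`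
      obtain ⟨x, hx⟩ : ∃ x, x = s * r := ⟨_, rfl⟩
      have hsx : s = x / r := by rw [hx]; field_simp
      have hx1 : -1 < x := by rw [hx]; rw [neg_lt, ← neg_mul, ← lt_div_iff₀ hr]; linarith
      have hx2 : x < 1 := by rw [hx, ← lt_div_iff₀ hr]; linarith
      have einv : (s - 2 / r)⁻¹ = -(r / (2 - x)) := by
        rw [hsx, ← sub_div, inv_div, ← neg_sub 2 x, div_neg]
      have h2x : 0 < 2 - x := by linarith
      have hb1 : r / (2 - x) < r := by
        rw [div_lt_iff₀ h2x]; nlinarith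
      have hb2 : 0 < r / (2 - x) := by positivity
      have := hiso _ hmem (by rw [einv, abs_lt]; constructor <;> linarith)
      rw [einv] at this
      have h5 : r / (2 - x) = r / 2 := by linarith
      rw [div_eq_div_iff h2x.ne' two_ne_zero] at h5
      have h6 : x = 0 := by
        have : r * x = 0 := by linarith
        exact (mul_eq_zero.1 this).resolve_left hr.ne'
      exact hs (by rw [hsx, h6, zero_div])
    obtain ⟨c, hc, h⟩ := resolvent_bddBelow hV h1 htneg.ne hgap
    refine ⟨c, hc, fun u => (h u).trans_eq ?_⟩
    rw [hAe]
    congr 1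
    module
  refine ⟨4 * (‖T‖ + 1), by positivity, fun g h hw => ?_⟩
  obtain ⟨p, hp, hgp⟩ := exists_ker_near hAsym hA (s₁ := 1 / (2 * r)) (by positivity)
    (one_div_lt_one_div_of_lt hr (by linarith)) g
  refine ⟨p, ?_, ?_⟩
  · have h3 : T p = -(2 / r) • p := by
      have : T p + (2 / r) • p = 0 := by rw [← hAe]; exact hp
      rw [neg_smul]; exact eq_neg_of_add_eq_zero_left this
    have hmem : (T p, p) ∈ weakGraph hV (E + r / 2) := h1 p
    have h4 := (weakGraph hV (E + r / 2)).smul_mem (-(r / 2)) hmem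
    have h5 : WeakSchrodingerEq V (E + r / 2) (-(r / 2) • T p) (-(r / 2) • p) := h4
    have e1 : -(r / 2) • T p = p := by
      rw [h3, smul_smul, show -(r / 2) * -(2 / r) = 1 by field_simp, one_smul]
    rw [e1] at h5
    have h6 := weak_shift hV (E' := E) h5
    have e2 : -(r / 2) • p + (E + r / 2 - E) • p = 0 := by module
    rwa [e2] at h6
  · have h3 := h2 _ _ (weak_shift hV (E' := E + r / 2) hw)
    have h4 : A g = (2 / r) • T h := by
      have e3 : h + (E - (E + r / 2)) • g = h - (r / 2) • g := by module
      rw [e3, map_sub, map_smul] at h3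
      rw [hAe]
      have e4 : (2 / r) • g = (2 / r) • T h - T g := by
        rw [← h3, smul_sub, smul_smul, h3, show 2 / r * (r / 2) = 1 by field_simp, one_smul]
      rw [e4]; abel
    rw [h4, norm_smul, Real.norm_eq_abs, abs_of_pos (by positivity)] at hgp
    have h5 := T.le_opNorm h
    have h6 : ‖g - p‖ ≤ 2 * r * (2 / r * ‖T h‖) := by
      calc ‖g - p‖ = 2 * r * (1 / (2 * r) * ‖g - p‖) := by field_simp
        _ ≤ _ := by gcongr
    have h7 : 2 * r * (2 / r * ‖T h‖) = 4 * ‖T h‖ := by field_simp; ring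
    nlinarith [norm_nonneg h]

/-! ### The solution space of the eigenvalue equation has dimension at most two -/

theorem exists_small_interval {F : ℝ → ℝ} (hF : LocallyIntegrable F volume) (x : ℝ) {ε : ℝ}
    (hε : 0 < ε) : ∃ ℓ, 0 < ℓ ∧ ∫ t in (x - ℓ)..(x + ℓ), F t < ε := by
  have hp := Prim.of_locallyIntegrable hF
  have hc := hp.continuous
  have h0 : Tendsto (fun ℓ : ℝ => ∫ t in (x - ℓ)..(x + ℓ), F t) (𝓝[>] 0) (𝓝 0) := by
    have e : ∀ ℓ : ℝ, ∫ t in (x - ℓ)..(x + ℓ), F t =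
        (∫ t in (0:ℝ)..(x + ℓ), F t) - ∫ t in (0:ℝ)..(x - ℓ), F t := fun ℓ => (hp.eq _ _).symm
    simp only [e]
    have h1 : Continuous fun ℓ : ℝ =>
        (∫ t in (0:ℝ)..(x + ℓ), F t) - ∫ t in (0:ℝ)..(x - ℓ), F t :=
      (hc.comp (continuous_const.add continuous_id)).sub
        (hc.comp (continuous_const.sub continuous_id))
    have h2 := h1.tendsto 0
    simp only [add_zero, sub_zero, sub_self] at h2
    exact h2.mono_left nhdsWithin_le_nhds
  obtain ⟨ℓ, h1, h2⟩ := ((h0.eventually_lt_const hε).and self_mem_nhdsWithin).exists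
  exact ⟨ℓ, h2, h1⟩

/-- Uniqueness for the initial value problem. The common zero set of `u` and `v` is open, because
`|u| + |v|` is at most half its maximum on a short interval around a common zero. -/
theorem Sol.eq_zero {V : ℝ → ℝ} (hV : LocL2 V) {E : ℝ} {u v : ℝ → ℝ} (s : Sol V E u v fun _ => 0)
    (hu : u 0 = 0) (hv : v 0 = 0) : ∀ x, u x = 0 := by
  set F : ℝ → ℝ := fun t => 1 + |V t - E| with hF
  have hVE : LocallyIntegrable (fun t => V t - E) volume :=
    hV.locallyIntegrable.sub (locallyIntegrable_const E)
  have hFl : LocallyIntegrable F volume := (locallyIntegrable_const 1).add fun x => (hVE x).norm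
  have cu := s.contu
  have cv := s.contv
  set Z : Set ℝ := {x | u x = 0 ∧ v x = 0} with hZ
  have hcl : IsClosed Z := (isClosed_eq cu continuous_const).inter (isClosed_eq cv continuous_const)
  have hop : IsOpen Z := by
    rw [Metric.isOpen_iff]
    rintro x ⟨hx1, hx2⟩
    obtain ⟨ℓ, hℓ, hsmall⟩ := exists_small_interval hFl x (ε := 1 / 2) (by norm_num)
    refine ⟨ℓ, hℓ, ?_⟩
    have hcomp : IsCompact (Icc (x - ℓ) (x + ℓ)) := isCompact_Icc
    have hne : (Icc (x - ℓ) (x + ℓ)).Nonempty := nonempty_Icc.2 (by linarith)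
    obtain ⟨y, hy, hmax⟩ := hcomp.exists_isMaxOn hne (f := fun t => |u t| + |v t|)
      (by fun_prop)
    set M := |u y| + |v y| with hM
    have hFi : ∀ p q, IntervalIntegrable F volume p q :=
      intervalIntegrable_of_locallyIntegrable hFl
    have hub : ∀ t ∈ Icc (x - ℓ) (x + ℓ), |v t| + |(V t - E) * u t - 0| ≤ M * F t := by
      intro t ht
      have h1 : |u t| + |v t| ≤ M := hmax ht
      rw [sub_zero, abs_mul, hF]
      have := abs_nonneg (u t)
      have := abs_nonneg (v t)
      have := abs_nonneg (V t - E)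
      have h2 : |V t - E| * |u t| ≤ |V t - E| * M := by gcongr; linarith
      nlinarith
    have hsub : uIcc x y ⊆ Icc (x - ℓ) (x + ℓ) :=
      uIcc_subset_Icc ⟨by linarith, by linarith⟩ hy
    have e1 : u y = ∫ t in x..y, v t := by rw [← s.primu.eq, hx1, sub_zero]
    have e2 : v y = ∫ t in x..y, ((V t - E) * u t - 0) := by rw [← s.prim.eq, hx2, sub_zero]
    have hM1 : M ≤ ∫ t in uIoc x y, (|v t| + |(V t - E) * u t - 0|) := by
      rw [integral_add (intervalIntegrable_iff.1 (s.primu.int x y).abs)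
        (intervalIntegrable_iff.1 (s.prim.int x y).abs), hM, e1, e2]
      exact add_le_add (intervalIntegral.norm_integral_le_integral_norm_uIoc (f := v))
        (intervalIntegral.norm_integral_le_integral_norm_uIoc
          (f := fun t => (V t - E) * u t - 0))
    have hM2 : ∫ t in uIoc x y, (|v t| + |(V t - E) * u t - 0|) ≤ ∫ t in uIoc x y, M * F t := by
      refine setIntegral_mono_on
        ((intervalIntegrable_iff.1 (s.primu.int x y).abs).add
          (intervalIntegrable_iff.1 (s.prim.int x y).abs))
        ((intervalIntegrable_iff.1 (hFi x y)).const_mul M) measurableSet_uIoc fun t ht => ?_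
      exact hub t (hsub (uIoc_subset_uIcc ht))
    have hM0 : 0 ≤ M := by positivity
    have hF0 : ∀ t, 0 ≤ F t := fun t => by rw [hF]; positivity
    have hM3 : ∫ t in uIoc x y, F t ≤ ∫ t in (x - ℓ)..(x + ℓ), F t := by
      rw [intervalIntegral.integral_of_le (by linarith)]
      refine setIntegral_mono_set ?_ (ae_of_all _ hF0) (LE.le.eventuallyLE ?_)
      · have := hFi (x - ℓ) (x + ℓ)
        rw [intervalIntegrable_iff, uIoc_of_le (by linarith)] at this
        exact this
      · exact Ioc_subset_Ioc (le_min (by linarith) hy.1) (max_le (by linarith) hy.2)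
    rw [integral_const_mul] at hM2
    have hMz : M = 0 := by nlinarith
    intro z hz
    rw [Real.ball_eq_Ioo] at hz
    have h3 : |u z| + |v z| ≤ M := hmax (Ioo_subset_Icc_self hz)
    have := abs_nonneg (u z)
    have := abs_nonneg (v z)
    exact ⟨abs_eq_zero.1 (by linarith), abs_eq_zero.1 (by linarith)⟩
  have hall : Z = univ := IsClopen.eq_univ ⟨hcl, hop⟩ ⟨0, hu, hv⟩
  intro x
  have : x ∈ Z := by rw [hall]; trivial
  exact this.1

/-- Any three eigenfunctions are dependent: some combination has zero value and zero derivative at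
`0`. -/
theorem eigen_dependent {V : ℝ → ℝ} (hV : LocL2 V) {E : ℝ} {p : Fin 3 → L2R}
    (hp : ∀ i, WeakSchrodingerEq V E (p i) 0) : ∃ c : Fin 3 → ℝ, c ≠ 0 ∧ ∑ i, c i • p i = 0 := by
  choose u v hs hpu using fun i => Sol.of_weak hV (hp i)
  let L : (Fin 3 → ℝ) →ₗ[ℝ] (Fin 2 → ℝ) :=
    Matrix.mulVecLin (Matrix.of ![fun i => u i 0, fun i => v i 0])
  obtain ⟨c, hc, hc0⟩ := (Submodule.ne_bot_iff _).1
    (LinearMap.ker_ne_bot_of_finrank_lt (f := L) (by simp))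
  refine ⟨c, hc0, ?_⟩
  rw [LinearMap.mem_ker] at hc
  have hu0 : ∑ i, c i * u i 0 = 0 := by
    have := congrFun hc 0
    simpa [L, Matrix.mulVec, dotProduct, mul_comm] using this
  have hv0 : ∑ i, c i * v i 0 = 0 := by
    have := congrFun hc 1
    simpa [L, Matrix.mulVec, dotProduct, mul_comm] using this
  have hw : WeakSchrodingerEq V E (∑ i, c i • p i) 0 := by
    have hmem : ∑ i, c i • (p i, (0 : L2R)) ∈ weakGraph hV E :=
      Submodule.sum_mem _ fun i _ => Submodule.smul_mem _ _ (hp i)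
    have e : ∑ i, c i • (p i, (0 : L2R)) = (∑ i, c i • p i, 0) := by
      ext1 <;> simp [Prod.fst_sum, Prod.snd_sum]
    rw [e] at hmem
    exact hmem
  obtain ⟨U, W, hS, hgU⟩ := Sol.of_weak hV hw
  have hUe : U = fun x => ∑ i, c i * u i x := by
    refine (hS.contu.ae_eq_iff_eq volume
      (continuous_finsetSum _ fun i _ => (hs i).contu.const_mul _)).1 ?_
    have h1 : ⇑(∑ i, c i • p i) =ᵐ[volume] fun x => ∑ i, c i * u i x := by
      have h2 := Lp.coeFn_add (c 0 • p 0 + c 1 • p 1) (c 2 • p 2)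
      have h3 := Lp.coeFn_add (c 0 • p 0) (c 1 • p 1)
      rw [Fin.sum_univ_three]
      filter_upwards [h2, h3, Lp.coeFn_smul (c 0) (p 0), Lp.coeFn_smul (c 1) (p 1),
        Lp.coeFn_smul (c 2) (p 2), hpu 0, hpu 1, hpu 2] with x h2 h3 h4 h5 h6 h7 h8 h9
      rw [h2, Pi.add_apply, h3, Pi.add_apply, h4, h5, h6, Fin.sum_univ_three]
      simp [h7, h8, h9]
    exact hgU.symm.trans h1
  have hWe : W 0 = ∑ i, c i * v i 0 := by
    refine (hS.der 0).unique ?_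
    rw [hUe]
    exact HasDerivAt.fun_sum fun i _ => ((hs i).der 0).const_mul _
  have hS0 : Sol V E U W fun _ => 0 := by
    refine ⟨hS.der, hS.prim.congr_ae ?_, hS.memu, MemLp.zero⟩
    filter_upwards [Lp.coeFn_zero ℝ 2 (volume : Measure ℝ)] with x hx
    rw [hx]; simp
  have hz := hS0.eq_zero hV (by rw [hUe]; exact hu0) (hWe.trans hv0)
  refine Lp.ext ?_
  filter_upwards [hgU, Lp.coeFn_zero ℝ 2 (volume : Measure ℝ)] with x h1 h2
  rw [h1, h2, hz]; rfl

/-- Three pairwise orthogonal unit vectors cannot all be within `1/4` of linearly dependent ones. -/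
theorem no_three_near {V : ℝ → ℝ} (hV : LocL2 V) {E : ℝ} {ψ p : Fin 3 → L2R}
    (hψ : Orthonormal ℝ ψ) (hp : ∀ i, WeakSchrodingerEq V E (p i) 0)
    (h : ∀ i, ‖ψ i - p i‖ ≤ 1 / 4) : False := by
  obtain ⟨c, hc0, hc⟩ := eigen_dependent hV hp
  have h1 : ∑ i, c i • ψ i = ∑ i, c i • (ψ i - p i) := by
    simp only [smul_sub, Finset.sum_sub_distrib, hc, sub_zero]
  have h2 : ‖∑ i, c i • ψ i‖ ^ 2 = ∑ i, c i ^ 2 := by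
    rw [← real_inner_self_eq_norm_sq, hψ.inner_sum]
    simp [pow_two]
  have h3 : ‖∑ i, c i • ψ i‖ ≤ ∑ i, |c i| * (1 / 4) := by
    rw [h1]
    refine (norm_sum_le _ _).trans (Finset.sum_le_sum fun i _ => ?_)
    rw [norm_smul, Real.norm_eq_abs]
    gcongr
    exact h i
  have h4 : ∑ i, c i ^ 2 ≤ (∑ i, |c i| * (1 / 4)) ^ 2 := by
    rw [← h2]; exact pow_le_pow_left₀ (norm_nonneg _) h3 2
  simp only [Fin.sum_univ_three] at h4
  have h5 : c 0 ^ 2 + c 1 ^ 2 + c 2 ^ 2 = 0 := by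
    rw [← sq_abs (c 0), ← sq_abs (c 1), ← sq_abs (c 2)] at h4 ⊢
    nlinarith [sq_nonneg (|c 0| - |c 1|), sq_nonneg (|c 0| - |c 2|), sq_nonneg (|c 1| - |c 2|),
      sq_nonneg (|c 0|), sq_nonneg (|c 1|), sq_nonneg (|c 2|)]
  refine hc0 (funext fun i => ?_)
  have hi : c i ^ 2 = 0 := by
    fin_cases i <;> simp <;> nlinarith [sq_nonneg (c 0), sq_nonneg (c 1), sq_nonneg (c 2)]
  simpa using hi

/-! ### The spectrum has no isolated points -/

theorem gi_tendsto {a : ℝ} (ha : 0 < a) {f : ℝ → ℝ} (hf : Integrable f) (c d : ℤ) :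
    Tendsto (fun N : ℕ => gi a f (-N + c) (N + d)) atTop (𝓝 (∫ t, f t)) := by
  have h0 : Tendsto (fun N : ℕ => (N : ℝ)) atTop atTop := tendsto_natCast_atTop_atTop
  refine intervalIntegral_tendsto_integral hf ?_ ?_
  · have h1 : Tendsto (fun N : ℕ => (-(N : ℝ) + c) * a) atTop atBot :=
      ((tendsto_neg_atTop_atBot.comp h0).atBot_add tendsto_const_nhds).atBot_mul_const ha
    refine h1.congr fun N => ?_
    push_cast; ring
  · have h1 : Tendsto (fun N : ℕ => ((N : ℝ) + d) * a) atTop atTop :=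
      (h0.atTop_add tendsto_const_nhds).atTop_mul_const ha
    refine h1.congr fun N => ?_
    push_cast; ring

/-- Spectral energies have approximate solutions of compact support: cut off a square integrable one
far out, where it carries little mass. -/
theorem exists_compact_sol {a B : ℝ} (ha : 0 < a) {V : ℝ → ℝ} (hV : UnifL2 a B V) {E : ℝ}
    (hE : E ∈ ContSpectrum V) {κ : ℝ} (hκ : 0 < κ) : ∃ N : ℕ, ∃ u v h, Sol V E u v h ∧
      (∀ x ∉ Ioo (-(N * a)) (N * a), u x = 0) ∧ ∫ t, h t ^ 2 < κ * ∫ t, u t ^ 2 := by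
  obtain ⟨u, v, h, s, hlt⟩ := exists_sol_of_mem_spec (hV.locL2 ha) hE (κ := κ / 8) (by positivity)
  obtain ⟨C, hC, hcut⟩ := exists_grid_cutoff ha B |E|
  have iu : Integrable fun t => u t ^ 2 := s.memu.integrable_sq
  have ih : Integrable fun t => h t ^ 2 := s.memh.integrable_sq
  have hJ : 0 ≤ ∫ t, h t ^ 2 := integral_nonneg fun t => sq_nonneg _
  have hI : 0 < ∫ t, u t ^ 2 := by
    have : 0 < κ / 8 * ∫ t, u t ^ 2 := by linarith
    exact (mul_pos_iff_of_pos_left (by positivity)).1 this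
  set f : ℝ → ℝ := fun t => u t ^ 2 + h t ^ 2 with hf
  have if' : Integrable f := iu.add ih
  -- the end cells carry a vanishing amount of mass
  have hend : Tendsto (fun N : ℕ => 3 * (∫ t, h t ^ 2) +
      C * (gi a f (-N) (-N + 1) + gi a f (N - 1) N)) atTop (𝓝 (3 * (∫ t, h t ^ 2) + C * (0 + 0))) := by
    refine tendsto_const_nhds.add (Tendsto.const_mul C (Tendsto.add ?_ ?_))
    · have h1 := (gi_tendsto ha if' 0 0).sub (gi_tendsto ha if' 1 0)
      rw [sub_self] at h1
      refine h1.congr fun N => ?_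
      have := gi_add (a := a) if' (-N) (-N + 1) N
      simp only [add_zero]
      linarith
    · have h1 := (gi_tendsto ha if' 0 0).sub (gi_tendsto ha if' 0 (-1))
      rw [sub_self] at h1
      refine h1.congr fun N => ?_
      have := gi_add (a := a) if' (-N) (N - 1) N
      simp only [add_zero, ← sub_eq_add_neg]
      linarith
  have hmid := gi_tendsto ha iu 1 (-1)
  have e1 := hend.eventually_lt_const (u := κ / 2 * ∫ t, u t ^ 2) (by linarith [mul_pos hκ hI])
  have e2 := hmid.eventually_const_lt (u := (∫ t, u t ^ 2) / 2) (by linarith)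
  obtain ⟨N, ⟨h1, h2⟩, hN⟩ := ((e1.and e2).and (eventually_ge_atTop 1)).exists
  obtain ⟨χ, v₂, h₂, hχ0, hχ1, hone, hoff, s₂, hh₂⟩ := hcut V hV E le_rfl u v h s (-N) N (by lia)
  refine ⟨N, _, _, _, s₂, fun x hx => ?_, ?_⟩
  · have := hoff x (by simpa using hx)
    rw [this.1, zero_mul]
  · have h3 : gi a (fun t => h t ^ 2) (-N) N ≤ ∫ t, h t ^ 2 :=
      gi_le_integral ha (fun t => sq_nonneg _) ih (by lia)
    have h4 : gi a (fun t => u t ^ 2) (-N + 1) (N + -1) ≤ ∫ t, (χ t * u t) ^ 2 := by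
      have h5 : gi a (fun t => u t ^ 2) (-N + 1) (N + -1) =
          gi a (fun t => (χ t * u t) ^ 2) (-N + 1) (N + -1) := by
        have hle : (((-N + 1 : ℤ) : ℝ)) * a ≤ ((N + -1 : ℤ) : ℝ) * a := by
          have : (-N + 1 : ℤ) ≤ (N + -1 : ℤ) := by lia
          have : ((-N + 1 : ℤ) : ℝ) ≤ ((N + -1 : ℤ) : ℝ) := by exact_mod_cast this
          nlinarith
        refine intervalIntegral.integral_congr fun t ht => ?_
        rw [uIcc_of_le hle] at ht
        rw [hone t ht, one_mul]
      rw [h5]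
      exact gi_le_integral ha (fun t => sq_nonneg _) s₂.memu.integrable_sq (by lia)
    have h6 : κ / 2 * ∫ t, u t ^ 2 ≤ κ * ∫ t, (χ t * u t) ^ 2 := by nlinarith
    linarith

/-- The spectrum of a limit-periodic potential has no isolated points: otherwise an approximate
eigenfunction of compact support and two of its translates by almost periods, which are pairwise
orthogonal, would all be close to eigenfunctions. -/
theorem preperfect_contSpectrum {a : ℝ} (ha : 0 < a) {Y : Set (L2I a)} {y : ℤ →ᵇ L2I a}
    (hy : y ∈ LPC a Y) (lam : ℝ) : Preperfect (ContSpectrum (pot a lam y)) := by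
  intro E hE
  by_contra hacc
  have hU : UnifL2 a ((|lam| * ‖y‖) ^ 2) (pot a lam y) :=
    unifL2_pot_of_le ha le_rfl fun j => norm_coe_le_norm y j
  have hV := hU.locL2 ha
  obtain ⟨r, hr, hiso⟩ : ∃ r, 0 < r ∧ ∀ E' ∈ ContSpectrum (pot a lam y), |E' - E| < r → E' = E := by
    rw [accPt_iff_nhds] at hacc
    push Not at hacc
    obtain ⟨W, hW, h⟩ := hacc
    obtain ⟨r, hr, hball⟩ := Metric.mem_nhds_iff.1 hW
    exact ⟨r, hr, fun E' h1 h2 => h E' ⟨hball (by rwa [Metric.mem_ball, Real.dist_eq]), h1⟩⟩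
  obtain ⟨C, hC, hnear⟩ := exists_eigen_near hV hr hiso
  obtain ⟨K, hK, hloc⟩ := exists_local_bound ha ((|lam| * ‖y‖) ^ 2) |E|
  -- the admissible squared error `μ` of a normalized approximate eigenfunction
  obtain ⟨μ, hμ⟩ : ∃ μ, μ = 1 / (16 * C ^ 2) := ⟨_, rfl⟩
  have hμ0 : 0 < μ := by rw [hμ]; positivity
  obtain ⟨N, u, v, h, s, hoff, hlt⟩ := exists_compact_sol ha hU hE (κ := min 1 (μ / 6))
    (lt_min one_pos (by positivity))
  obtain ⟨ε, hε⟩ : ∃ ε, ε = min 1 (μ / (12 * K) / (4 * lam ^ 2 + 1)) := ⟨_, rfl⟩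
  have hε0 : 0 < ε := by rw [hε]; exact lt_min one_pos (by positivity)
  have hε1 : ε ≤ 1 := by rw [hε]; exact min_le_left _ _
  have hε2 : 4 * lam ^ 2 * ε ^ 2 ≤ μ / (12 * K) := by
    have h1 : ε ≤ μ / (12 * K) / (4 * lam ^ 2 + 1) := by rw [hε]; exact min_le_right _ _
    rw [le_div_iff₀ (by positivity)] at h1
    have h2 : 4 * lam ^ 2 * ε ^ 2 ≤ 4 * lam ^ 2 * ε := by
      have : ε ^ 2 ≤ ε := by nlinarith
      gcongr
    nlinarith
  obtain ⟨x, ⟨⟨q, hq, hxper⟩, -⟩, hxy⟩ := Metric.mem_closure_iff.1 hy ε hε0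
  have hyx : ∀ j, ‖y j - x j‖ ≤ ε := fun j => by
    rw [← dist_eq_norm]; exact (dist_coe_le_dist j).trans hxy.le
  set I := ∫ t, u t ^ 2 with hI
  set J := ∫ t, h t ^ 2 with hJ
  have hJ0 : 0 ≤ J := integral_nonneg fun t => sq_nonneg _
  have hI0 : 0 < I := by
    have h1 : 0 < min 1 (μ / 6) * I := by linarith
    exact (mul_pos_iff_of_pos_left (lt_min one_pos (by positivity))).1 h1
  have hJI : J ≤ I := by
    have : min 1 (μ / 6) * I ≤ 1 * I := by gcongr; exact min_le_left _ _
    linarith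
  have hJμ : J ≤ μ / 6 * I := by
    have : min 1 (μ / 6) * I ≤ μ / 6 * I := by gcongr; exact min_le_right _ _
    linarith
  -- translation by multiples of the almost period `q`
  have htrans : ∀ k : ℤ, ∃ h', Sol (pot a lam y) E (fun t => u (t + (k * q : ℤ) * a))
      (fun t => v (t + (k * q : ℤ) * a)) h' ∧ ∫ t, h' t ^ 2 ≤ μ * I := by
    intro k
    have hpot : (fun t => pot a lam y (t + (k * q : ℤ) * a)) =
        pot a lam (fun j => y (j + k * q)) := by
      funext t
      simp only [pot]
      rw [aggC_shift ha]
    have s1 := s.translate ((k * q : ℤ) * a)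
    rw [hpot] at s1
    have hclose : CloseL2 a (μ / (12 * K)) (pot a lam y) (pot a lam (fun j => y (j + k * q))) := by
      refine closeL2_pot ha fun j => le_trans ?_ hε2
      rw [← smul_sub, norm_smul, mul_pow, Real.norm_eq_abs, sq_abs]
      have h1 : ‖y j - y (j + k * q)‖ ≤ 2 * ε := by
        have e : y j - y (j + k * q) = (y j - x j) - (y (j + k * q) - x (j + k * q)) := by
          rw [periodic_int_mul (y := ⇑x) hxper k j]; abel
        rw [e]
        refine (norm_sub_le _ _).trans ?_
        linarith [hyx j, hyx (j + k * q)]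
      have h2 : ‖y j - y (j + k * q)‖ ^ 2 ≤ (2 * ε) ^ 2 := pow_le_pow_left₀ (norm_nonneg _) h1 2
      calc _ ≤ lam ^ 2 * (2 * ε) ^ 2 := by gcongr
        _ = _ := by ring
    have hU' : UnifL2 a ((|lam| * ‖y‖) ^ 2) (pot a lam (fun j => y (j + k * q))) :=
      unifL2_pot_of_le ha le_rfl fun j => norm_coe_le_norm y _
    obtain ⟨h', s', hh'⟩ := s1.perturb ha hloc hK hU' hclose le_rfl (E := E)
    refine ⟨h', s', hh'.trans ?_⟩
    have eI : ∫ t, u (t + (k * q : ℤ) * a) ^ 2 = I :=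
      integral_add_right_eq_self (fun t => u t ^ 2) _
    have eJ : ∫ t, h (t + (k * q : ℤ) * a) ^ 2 = J :=
      integral_add_right_eq_self (fun t => h t ^ 2) _
    rw [eI, eJ, show K * (μ / (12 * K)) = μ / 12 by field_simp]
    nlinarith
  choose h' hs' hh' using fun i : Fin 3 => htrans ((i : ℕ) * (2 * N))
  set τ : Fin 3 → ℝ := fun i => (((i : ℕ) * (2 * N) * q : ℤ) : ℝ) * a with hτ
  have hsq : Real.sqrt I ^ 2 = I := Real.sq_sqrt hI0.le
  have hsq0 : 0 < Real.sqrt I := Real.sqrt_pos.2 hI0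
  set ψ : Fin 3 → L2R := fun i => ((hs' i).smul (Real.sqrt I)⁻¹).memu.toLp _ with hψ
  have horth : Orthonormal ℝ ψ := by
    rw [orthonormal_iff_ite]
    intro i j
    rw [hψ]
    simp only
    rw [inner_toLp_toLp]
    split_ifs with hij
    · subst hij
      have e : ∀ t, (Real.sqrt I)⁻¹ * u (t + τ i) * ((Real.sqrt I)⁻¹ * u (t + τ i)) =
          I⁻¹ * u (t + τ i) ^ 2 := fun t => by
        rw [← hsq, Real.sqrt_sq hsq0.le]; ring
      have eI : ∫ t, u (t + τ i) ^ 2 = I := integral_add_right_eq_self (fun t => u t ^ 2) _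
      calc _ = ∫ t, I⁻¹ * u (t + τ i) ^ 2 := integral_congr_ae (ae_of_all _ e)
        _ = 1 := by rw [integral_const_mul, eI, inv_mul_cancel₀ hI0.ne']
    · -- the supports are disjoint
      have hz : ∀ t, u (t + τ i) = 0 ∨ u (t + τ j) = 0 := by
        intro t
        by_contra hcon
        push Not at hcon
        have h1 : t + τ i ∈ Ioo (-(N * a)) (N * a) := by
          by_contra h; exact hcon.1 (hoff _ h)
        have h2 : t + τ j ∈ Ioo (-(N * a)) (N * a) := by
          by_contra h; exact hcon.2 (hoff _ h)
        have h3 : |τ i - τ j| < 2 * N * a := by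
          rw [abs_lt]; constructor <;> linarith [h1.1, h1.2, h2.1, h2.2]
        have h4 : τ i - τ j = ((((i : ℕ) : ℤ) - (j : ℕ) : ℤ) : ℝ) * q * (2 * N * a) := by
          rw [hτ]; push_cast; ring
        have h5 : (1 : ℝ) ≤ |((((i : ℕ) : ℤ) - (j : ℕ) : ℤ) : ℝ)| := by
          have h6 : ((i : ℕ) : ℤ) - (j : ℕ) ≠ 0 := by
            intro h0
            exact hij (Fin.ext (by lia))
          rw [← Int.cast_abs]
          exact_mod_cast Int.one_le_abs h6
        have h6 : (1 : ℝ) ≤ q := by exact_mod_cast hq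
        have h7 : 0 ≤ 2 * (N : ℝ) * a := by positivity
        rw [h4, abs_mul, abs_mul, abs_of_nonneg h7, Nat.abs_cast] at h3
        have h8 : 1 ≤ |((((i : ℕ) : ℤ) - (j : ℕ) : ℤ) : ℝ)| * q := by nlinarith
        nlinarith
      have e : ∀ t, (Real.sqrt I)⁻¹ * u (t + τ i) * ((Real.sqrt I)⁻¹ * u (t + τ j)) = 0 :=
        fun t => by
          rcases hz t with h | h <;> rw [h] <;> ring
      calc _ = ∫ t : ℝ, (0 : ℝ) := integral_congr_ae (ae_of_all _ e)
        _ = 0 := integral_zero _ _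
  have hp : ∀ i, ∃ p, WeakSchrodingerEq (pot a lam y) E p 0 ∧ ‖ψ i - p‖ ≤ 1 / 4 := by
    intro i
    have s2 := (hs' i).smul (Real.sqrt I)⁻¹
    obtain ⟨p, hp1, hp2⟩ := hnear _ _ (s2.weak hV)
    refine ⟨p, hp1, hp2.trans ?_⟩
    have h1 : ‖(s2.memh.toLp _ : L2R)‖ ^ 2 ≤ μ := by
      rw [norm_sq_toLp]
      simp only [mul_pow, integral_const_mul]
      rw [inv_pow, hsq, inv_mul_le_iff₀ hI0, mul_comm]
      exact hh' i
    have h2 : (C * ‖(s2.memh.toLp _ : L2R)‖) ^ 2 ≤ (1 / 4) ^ 2 := by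
      rw [mul_pow]
      calc _ ≤ C ^ 2 * μ := by gcongr
        _ = _ := by rw [hμ]; field_simp; norm_num
    exact (pow_le_pow_iff_left₀ (by positivity) (by norm_num) two_ne_zero).1 h2
  choose p hp1 hp2 using hp
  exact no_three_near hV horth hp1 hp2

end

/-- Coupling-constant version: if `S ⊆ ℝ` is discrete, `Y ⊆ L²([0,a))` is a
perfect set, `Z ⊆ ℝ∖{0}` is σ-compact, and `λY` is gap-rich with exceptional
set `S` for every `λ ∈ Z`, then for generic `y ∈ LP(ℤ,Y)` the spectrum of
`L_{λy} = -d²/dx² + λ·y^♮` is a Cantor set of zero Hausdorff dimension for all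
`λ ∈ Z`. -/
theorem continuum_gapRich_coupling_generic_zero_dim_cantor (a : ℝ) (ha : 0 < a)
    (S : Set ℝ) (hS : IsDiscreteSet S)
    (Y : Set (L2I a)) (hY : Perfect Y)
    (Z : Set ℝ) (hZ0 : ∀ lam ∈ Z, lam ≠ 0) (hZσ : IsSigmaCompact Z)
    (hGR : ∀ lam ∈ Z, GapRichC a ((fun φ => lam • φ) '' Y) S) :
    ∃ R : Set (LPC a Y), IsGδ R ∧ Dense R ∧
      ∀ y ∈ R, ∀ lam ∈ Z,
        IsZeroDimCantorC
          (ContSpectrum (fun t => lam * aggC a (⇑(y : ℤ →ᵇ L2I a)) t)) := by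
  obtain ⟨R, hG, hD, hR⟩ := exists_residual_dimH_zero ha hS hZ0 hZσ hGR
  refine ⟨R, hG, hD, fun y hy lam hlam => ?_⟩
  have hV : LocL2 (pot a lam (⇑(y : ℤ →ᵇ L2I a))) :=
    (unifL2_pot_of_le ha le_rfl fun j => norm_coe_le_norm (y : ℤ →ᵇ L2I a) j).locL2 ha
  have hdim := hR y hy lam hlam
  exact ⟨contSpectrum_nonempty hV, isClosed_contSpectrum hV, preperfect_contSpectrum ha y.2 lam,
    interior_eq_empty_of_dimH hdim, hdim⟩
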